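/- arXiv:2209.09523 — 7 statements merged into one kernel-verified Lean document; each statement's English description precedes it below -/
import Mathlib

section
/- Let n ≥ 2 and let T ∈ M_n(ℂ). The Banach algebra 𝒜_T is zero product determined if and only if T is diagonalizable. -/
open scoped Topology

attribute [local instance] Matrix.linftyOpNormedRing Matrix.linftyOpNormedAlgebra

/-- A (complex) Banach algebra (or more generally a topological algebra) `A` is
*zero product determined* if for every continuous bilinear functional
`φ : A × A → ℂ` satisfying `φ x y = 0` whenever `x * y = 0`, there exists a
continuous linear functional `τ` on `A` such that `φ x y = τ (x * y)` for all `x y`. -/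
def ZeroProductDetermined (A : Type*) [NonUnitalNonAssocRing A] [Module ℂ A]
    [TopologicalSpace A] : Prop :=
  ∀ φ : A →ₗ[ℂ] A →ₗ[ℂ] ℂ, Continuous (fun p : A × A => φ p.1 p.2) →
    (∀ x y : A, x * y = 0 → φ x y = 0) →
    ∃ τ : A →L[ℂ] ℂ, ∀ x y : A, φ x y = τ (x * y)

/-- `T ∈ Mₙ(ℂ)` is diagonalizable if `P⁻¹ T P` is diagonal for some invertible `P`. -/
def Diagonalizable {n : ℕ} (T : Matrix (Fin n) (Fin n) ℂ) : Prop :=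
  ∃ P : Matrix (Fin n) (Fin n) ℂ, IsUnit P ∧ (P⁻¹ * T * P).IsDiag

open Polynomial in
theorem zpd_aux_aeval_mul {n : ℕ} (T P : Matrix (Fin n) (Fin n) ℂ) (d : Fin n → ℂ)
    (h : T * P = P * Matrix.diagonal d) (q : ℂ[X]) :
    aeval T q * P = P * Matrix.diagonal (fun j => q.eval (d j)) := by
  induction q using Polynomial.induction_on' with
  | add p q hp hq =>
    rw [map_add, add_mul, hp, hq, ← mul_add, Matrix.diagonal_add]
    simp
  | monomial k a =>
    have hk : T ^ k * P = P * Matrix.diagonal (fun j => d j ^ k) := by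
      induction k with
      | zero => simp
      | succ k ih =>
        rw [pow_succ, mul_assoc, h, ← mul_assoc, ih, mul_assoc, Matrix.diagonal_mul_diagonal]
        simp [pow_succ]
    have h3 : (Matrix.diagonal (fun j => ((monomial k) a).eval (d j))) =
        a • Matrix.diagonal (fun j => d j ^ k) := by
      rw [← Matrix.diagonal_smul]
      congr 1
      ext j
      simp
    rw [aeval_monomial, mul_assoc, hk, h3, mul_smul_comm,
      Algebra.algebraMap_eq_smul_one, smul_mul_assoc, one_mul]

open Polynomial in
theorem zpd_aux_aeval_zero {n : ℕ} (T P : Matrix (Fin n) (Fin n) ℂ) (d : Fin n → ℂ)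
    (hP : IsUnit P) (h : T * P = P * Matrix.diagonal d) (q : ℂ[X])
    (hq : ∀ j, q.eval (d j) = 0) : aeval T q = 0 := by
  have := zpd_aux_aeval_mul T P d h q
  simp only [hq] at this
  rw [show (Matrix.diagonal (fun _ : Fin n => (0:ℂ))) = 0 from Matrix.diagonal_zero, mul_zero] at this
  exact hP.mul_left_eq_zero.mp this

open Polynomial in
theorem zpd_aux_back (n : ℕ) (T : Matrix (Fin n) (Fin n) ℂ) (hT : Diagonalizable T) :
    ZeroProductDetermined ↥(Algebra.adjoin ℂ ({T} : Set (Matrix (Fin n) (Fin n) ℂ))) := by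
  classical
  obtain ⟨P, hP, hD⟩ := hT
  obtain ⟨d, hd⟩ : ∃ d, Matrix.diagonal d = P⁻¹ * T * P := ⟨_, hD.diagonal_diag⟩
  have hTP : T * P = P * Matrix.diagonal d := by
    rw [hd, mul_assoc, Matrix.mul_nonsing_inv_cancel_left _ _ ((Matrix.isUnit_iff_isUnit_det _).1 hP)]
  intro φ _ h0
  set A := Algebra.adjoin ℂ ({T} : Set (Matrix (Fin n) (Fin n) ℂ)) with hA
  let t : A := ⟨T, Algebra.self_mem_adjoin_singleton ℂ T⟩
  have hz : ∀ q : ℂ[X], (∀ j, q.eval (d j) = 0) → aeval t q = 0 := by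
    intro q hq
    apply Subtype.ext
    have := zpd_aux_aeval_zero T P d hP hTP q hq
    exact (coe_aeval_mk_apply _ _).trans this
  have idem : ∀ e : A, e * e = e → ∀ x y, φ (x * e) y = φ x (e * y) := by
    intro e he x y
    have h1 : φ (x * e) (y - e * y) = 0 := h0 _ _ (by
      rw [mul_sub, mul_assoc x e (e * y), ← mul_assoc e e, he, mul_assoc, sub_self])
    have h2 : φ (x - x * e) (e * y) = 0 := h0 _ _ (by
      rw [sub_mul, mul_assoc x e (e * y), ← mul_assoc e e, he, sub_self])
    rw [map_sub, sub_eq_zero] at h1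
    rw [map_sub, LinearMap.sub_apply, sub_eq_zero] at h2
    rw [h1, h2]
  let s := Finset.univ.image d
  have hs : ∀ j, d j ∈ s := fun j => Finset.mem_image_of_mem _ (Finset.mem_univ j)
  let E : ℂ → A := fun l => aeval t (Lagrange.basis s id l)
  have hev : ∀ l ∈ s, ∀ m ∈ s, (Lagrange.basis s id l).eval m = if l = m then 1 else 0 := by
    intro l hl m hm
    split_ifs with h
    · subst h
      exact Lagrange.eval_basis_self (v := id) Function.injective_id.injOn hl
    · exact Lagrange.eval_basis_of_ne (v := id) h hm
  have hE : ∀ l ∈ s, E l * E l = E l := by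
    intro l hl
    have := hz (Lagrange.basis s id l * Lagrange.basis s id l - Lagrange.basis s id l) (by
      intro j
      simp only [eval_sub, eval_mul, hev l hl _ (hs j)]
      split_ifs <;> simp)
    rw [map_sub, map_mul, sub_eq_zero] at this
    exact this
  have ht : t = ∑ l ∈ s, l • E l := by
    have := hz (X - ∑ l ∈ s, l • Lagrange.basis s id l) (by
      intro j
      rw [eval_sub, eval_X, eval_finsetSum, Finset.sum_congr rfl
        (fun l hl => by rw [eval_smul, hev l hl _ (hs j)])]
      simp [hs j])
    rw [map_sub, aeval_X, map_sum, sub_eq_zero] at this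
    simpa only [map_smul] using this
  have key_t : ∀ x y, φ (x * t) y = φ x (t * y) := by
    intro x y
    rw [ht]
    simp only [Finset.mul_sum, Finset.sum_mul, map_sum, LinearMap.sum_apply, mul_smul_comm,
      smul_mul_assoc, map_smul, LinearMap.smul_apply]
    exact Finset.sum_congr rfl fun l hl => by rw [idem _ (hE l hl)]
  have key : ∀ a : A, ∀ x y, φ (x * a) y = φ x (a * y) := by
    rintro ⟨a, ha⟩
    induction ha using Algebra.adjoin_induction with
    | mem a h =>
      obtain rfl : a = T := h
      exact key_t
    | algebraMap r =>
      intro x y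
      have : (⟨algebraMap ℂ _ r, Subalgebra.algebraMap_mem _ r⟩ : A) = r • 1 := by
        apply Subtype.ext
        simp [Algebra.algebraMap_eq_smul_one]
      rw [this]
      simp
    | add a b ha hb iha ihb =>
      intro x y
      have : (⟨a + b, add_mem ha hb⟩ : A) = ⟨a, ha⟩ + ⟨b, hb⟩ := rfl
      rw [this, mul_add, add_mul, map_add, map_add, LinearMap.add_apply, iha, ihb]
    | mul a b ha hb iha ihb =>
      intro x y
      have : (⟨a * b, mul_mem ha hb⟩ : A) = ⟨a, ha⟩ * ⟨b, hb⟩ := rfl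
      rw [this, ← mul_assoc, ihb, iha, mul_assoc]
  have : FiniteDimensional ℂ A := inferInstance
  have : IsTopologicalRing A := Subring.instIsTopologicalRing A.toSubring
  have : IsTopologicalAddGroup A := inferInstance
  refine ⟨LinearMap.toContinuousLinearMap (φ 1), fun x y => ?_⟩
  have := key x 1 y
  rw [one_mul] at this
  simpa using this

open Polynomial in
theorem zpd_aux_sq {A : Type*} [CommRing A] [Algebra ℂ A] [TopologicalSpace A] [IsTopologicalRing A]
    [T2Space A] [ContinuousSMul ℂ A] [FiniteDimensional ℂ A] (hZ : ZeroProductDetermined A)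
    (t : A) (ht : Function.Surjective (aeval t : ℂ[X] →ₐ[ℂ] A)) (l : ℂ)
    (hl : (X - C l) * (X - C l) ∣ minpoly ℂ t) : False := by
  obtain ⟨s, hs⟩ := LinearMap.exists_rightInverse_of_surjective
    (aeval t : ℂ[X] →ₐ[ℂ] A).toLinearMap (LinearMap.range_eq_top.2 ht)
  have hs' : ∀ x, aeval t (s x) = x := fun x => LinearMap.congr_fun hs x
  have hker : ∀ q : ℂ[X], aeval t q = 0 → q.eval l = 0 ∧ q.derivative.eval l = 0 := by
    intro q hq
    obtain ⟨r, rfl⟩ := hl.trans (minpoly.dvd ℂ t hq)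
    simp
  let ev : ℂ[X] →ₗ[ℂ] ℂ := Polynomial.leval l
  let f : A →ₗ[ℂ] ℂ := ev ∘ₗ s
  let D : A →ₗ[ℂ] ℂ := ev ∘ₗ Polynomial.derivative ∘ₗ s
  have hf : ∀ x, f x = (s x).eval l := fun x => rfl
  have hD : ∀ x, D x = (s x).derivative.eval l := fun x => rfl
  let φ : A →ₗ[ℂ] A →ₗ[ℂ] ℂ := (LinearMap.mul ℂ ℂ).compl₁₂ f D
  have hφ : ∀ x y, φ x y = f x * D y := fun x y => rfl
  obtain ⟨τ, hτ⟩ := hZ φ (by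
    have h1 := f.continuous_of_finiteDimensional
    have h2 := D.continuous_of_finiteDimensional
    simp only [hφ]
    fun_prop) (by
    intro x y hxy
    obtain ⟨h1, h2⟩ := hker (s x * s y) (by rw [map_mul, hs', hs', hxy])
    rw [hφ, hf, hD]
    simp only [derivative_mul, eval_mul, eval_add] at h1 h2
    rcases mul_eq_zero.1 h1 with h | h
    · rw [h, zero_mul]
    · rw [h, mul_zero, zero_add] at h2
      exact h2)
  have h1 := hker (s 1 - 1) (by simp [hs'])
  have h2 := hker (s t - X) (by simp [hs'])
  simp [sub_eq_zero] at h1 h2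
  have e1 := hτ 1 t
  have e2 := hτ t 1
  rw [one_mul, hφ, hf, hD, h1.1, h2.2] at e1
  rw [mul_one, ← e1, hφ, hf, hD, h1.2] at e2
  simp at e2

theorem zpd_aux_diag (n : ℕ) (T : Matrix (Fin n) (Fin n) ℂ) (h : Squarefree (minpoly ℂ T)) :
    Diagonalizable T := by
  set f : Module.End ℂ (Fin n → ℂ) := Matrix.toLin' T with hf
  have hss : f.IsSemisimple := by
    apply Module.End.isSemisimple_of_squarefree_aeval_eq_zero h
    have : f = Matrix.toLinAlgEquiv' T := rfl
    rw [this, Polynomial.aeval_algHom_apply]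
    simp
  have htop := hss.iSup_eigenspace_eq_top
  let S : Set (Fin n → ℂ) := {v | ∃ μ : ℂ, f v = μ • v}
  have hS : ⊤ ≤ Submodule.span ℂ S := by
    rw [← htop, iSup_le_iff]
    intro μ v hv
    exact Submodule.subset_span ⟨μ, Module.End.mem_eigenspace_iff.1 hv⟩
  let b := Module.Basis.ofSpan hS
  have hb : ∀ i, b i ∈ S := fun i => Module.Basis.ofSpan_subset hS ⟨i, rfl⟩
  let e := b.indexEquiv (Pi.basisFun ℂ (Fin n))
  let c := b.reindex e
  have hc : ∀ i, ∃ μ : ℂ, f (c i) = μ • c i := fun i => by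
    rw [Module.Basis.reindex_apply]; exact hb _
  choose μ hμ using hc
  let P : Matrix (Fin n) (Fin n) ℂ := (Pi.basisFun ℂ (Fin n)).toMatrix c
  have hP : IsUnit P := by
    have := (Pi.basisFun ℂ (Fin n)).invertibleToMatrix c
    exact isUnit_of_invertible P
  refine ⟨P, hP, ?_⟩
  have hTP : T * P = P * Matrix.diagonal μ := by
    ext i j
    have := congrFun (hμ j) i
    rw [Matrix.mul_diagonal]
    simp [hf, Matrix.mulVec, dotProduct] at this
    simp [P, Matrix.mul_apply, Module.Basis.toMatrix_apply, this, mul_comm]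
  rw [mul_assoc, hTP, Matrix.nonsing_inv_mul_cancel_left _ _ ((Matrix.isUnit_iff_isUnit_det _).1 hP)]
  exact Matrix.isDiag_diagonal _

/-- For `n ≥ 2` and `T ∈ Mₙ(ℂ)`, the Banach algebra `𝒜_T` generated by `T` and the
identity is zero product determined if and only if `T` is diagonalizable. -/
theorem zpd_iff_diagonalizable (n : ℕ) (hn : 2 ≤ n) (T : Matrix (Fin n) (Fin n) ℂ) :
    ZeroProductDetermined ↥(Algebra.adjoin ℂ ({T} : Set (Matrix (Fin n) (Fin n) ℂ))) ↔
      Diagonalizable T := by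
  refine ⟨fun hZ => ?_, zpd_aux_back n T⟩
  apply zpd_aux_diag
  have hint : IsIntegral ℂ T := Algebra.IsIntegral.isIntegral T
  rw [squarefree_iff_irreducible_sq_not_dvd_of_ne_zero (minpoly.ne_zero hint)]
  intro p hp hdvd
  obtain ⟨l, hl⟩ := IsAlgClosed.exists_root p (Polynomial.degree_pos_of_irreducible hp).ne'
  have hXp := Polynomial.dvd_iff_isRoot.2 hl
  let t : Algebra.adjoin ℂ ({T} : Set (Matrix (Fin n) (Fin n) ℂ)) :=
    ⟨T, Algebra.self_mem_adjoin_singleton ℂ T⟩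
  have : IsTopologicalRing (Algebra.adjoin ℂ ({T} : Set (Matrix (Fin n) (Fin n) ℂ))) :=
    Subring.instIsTopologicalRing (Algebra.adjoin ℂ ({T} : Set (Matrix (Fin n) (Fin n) ℂ))).toSubring
  refine zpd_aux_sq hZ t ?_ l ?_
  · rintro ⟨a, ha⟩
    have ha' := ha
    rw [Algebra.adjoin_singleton_eq_range_aeval] at ha'
    obtain ⟨q, hq⟩ := ha'
    refine ⟨q, Subtype.ext ?_⟩
    exact (Polynomial.coe_aeval_mk_apply _ _).trans hq
  · have : minpoly ℂ t = minpoly ℂ T :=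
      (minpoly.algHom_eq (Subalgebra.val _) Subtype.val_injective t).symm
    rw [this]
    exact (mul_dvd_mul hXp hXp).trans hdvd
end

section
/- Let n ≥ 2 and let T ∈ M_n(ℂ). Every bounded local derivation from 𝒜_T into any Banach 𝒜_T-bimodule is a derivation if and only if T is diagonalizable. -/
attribute [local instance] Matrix.linftyOpNormedRing Matrix.linftyOpNormedAlgebra

/-- A Banach bimodule over a (possibly non-unital) complex Banach algebra `A`:
a Banach space `M` with bounded left and right module actions
(`l a m = a · m`, `r a m = m · a`) satisfying `(a·m)·b = a·(m·b)`. -/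
structure BanachBimodule (A : Type*) (M : Type*) [NonUnitalSeminormedRing A]
    [Module ℂ A] [SeminormedAddCommGroup M] [Module ℂ M] where
  l : A →ₗ[ℂ] M →ₗ[ℂ] M
  r : A →ₗ[ℂ] M →ₗ[ℂ] M
  l_mul : ∀ a b m, l (a * b) m = l a (l b m)
  r_mul : ∀ a b m, r (a * b) m = r b (r a m)
  l_r : ∀ a b m, l a (r b m) = r b (l a m)
  l_bdd : ∃ C : ℝ, ∀ a m, ‖l a m‖ ≤ C * ‖a‖ * ‖m‖
  r_bdd : ∃ C : ℝ, ∀ a m, ‖r a m‖ ≤ C * ‖a‖ * ‖m‖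

variable {A : Type*} {M : Type*} [NonUnitalSeminormedRing A] [Module ℂ A]
  [SeminormedAddCommGroup M] [Module ℂ M]

/-- `δ : A → M` is a derivation (w.r.t. the bimodule structure `B`) if
`δ(xy) = δ(x)·y + x·δ(y)`. -/
def IsDerivation (B : BanachBimodule A M) (δ : A →ₗ[ℂ] M) : Prop :=
  ∀ x y : A, δ (x * y) = B.r y (δ x) + B.l x (δ y)

/-- `δ : A → M` is a local derivation if for every `x` there is a derivation `δₓ`
with `δ x = δₓ x`. -/
def IsLocalDerivation (B : BanachBimodule A M) (δ : A →ₗ[ℂ] M) : Prop :=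
  ∀ x : A, ∃ δx : A →ₗ[ℂ] M, IsDerivation B δx ∧ δ x = δx x

open Matrix in
lemma diag_of_no_jordan {n : ℕ} (T : Matrix (Fin n) (Fin n) ℂ)
    (h : ∀ (μ : ℂ) (v : Fin n → ℂ), T *ᵥ (T *ᵥ v - μ • v) = μ • (T *ᵥ v - μ • v) →
      T *ᵥ v - μ • v = 0) : Diagonalizable T := by
  classical
  set f : Module.End ℂ (Fin n → ℂ) := Matrix.toLin' T with hf
  have hfv : ∀ v, f v = T *ᵥ v := fun v => by simp [hf]
  have key : ∀ (μ : ℂ) (k : ℕ) (v : Fin n → ℂ), ((f - μ • (1 : Module.End ℂ (Fin n → ℂ))) ^ k) v = 0 →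
      T *ᵥ v = μ • v := by
    intro μ k
    induction k with
    | zero => intro v hv; simp at hv; simp [hv]
    | succ k ih =>
      intro v hv
      rw [pow_succ, Module.End.mul_apply] at hv
      have h1 := ih _ hv
      have h2 : (f - μ • (1 : Module.End ℂ (Fin n → ℂ))) v = T *ᵥ v - μ • v := by
        simp [hfv]
      rw [h2] at h1
      exact sub_eq_zero.mp (h μ v h1)
  have htop := Module.End.iSup_maxGenEigenspace_eq_top f
  have hs : ⊤ ≤ Submodule.span ℂ {v : Fin n → ℂ | ∃ μ : ℂ, T *ᵥ v = μ • v} := by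
    rw [← htop]
    refine iSup_le fun μ v hv => ?_
    rw [Module.End.mem_maxGenEigenspace] at hv
    obtain ⟨k, hk⟩ := hv
    exact Submodule.subset_span ⟨μ, key μ k v hk⟩
  let b0 := Module.Basis.ofSpan hs
  let e := b0.indexEquiv (Pi.basisFun ℂ (Fin n))
  let b := b0.reindex e
  have hb : ∀ j, ∃ μ : ℂ, T *ᵥ (b j) = μ • (b j) := by
    intro j
    have : b0 (e.symm j) ∈ _ := Module.Basis.ofSpan_subset hs ⟨e.symm j, rfl⟩
    simpa [b] using this
  choose d hd using hb
  let P : Matrix (Fin n) (Fin n) ℂ := Matrix.of fun i j => b j i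
  have hP : IsUnit P := by
    rw [← Matrix.linearIndependent_cols_iff_isUnit]
    exact b.linearIndependent
  refine ⟨P, hP, ?_⟩
  have hTP : T * P = P * Matrix.diagonal d := by
    ext i j
    have := congrFun (hd j) i
    rw [Matrix.mul_diagonal]
    simp only [Matrix.mul_apply, P, Matrix.of_apply]
    simp only [Matrix.mulVec, dotProduct, Pi.smul_apply, smul_eq_mul] at this
    rw [this, mul_comm]
  rw [mul_assoc, hTP, ← mul_assoc, Matrix.nonsing_inv_mul _ ((Matrix.isUnit_iff_isUnit_det _).mp hP), one_mul]
  exact Matrix.isDiag_diagonal d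

lemma deriv_of_span {R : Type*} {M : Type*} [NormedCommRing R] [Module ℂ R]
    [IsScalarTower ℂ R R] [SMulCommClass ℂ R R]
    [SeminormedAddCommGroup M] [Module ℂ M] (B : BanachBimodule R M) (δ : R →ₗ[ℂ] M)
    (hspan : Submodule.span ℂ {p : R | p * p = p} = ⊤)
    (h : IsLocalDerivation B δ) : IsDerivation B δ := by
  have same : ∀ p : R, p * p = p → δ p = B.r p (δ p) + B.l p (δ p) := by
    intro p hp
    obtain ⟨D, hD, e⟩ := h p
    rw [e]
    conv_lhs => rw [← hp]
    exact hD p p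
  have orth : ∀ p q : R, p * p = p → q * q = q → p * q = 0 →
      B.r q (δ p) + B.l p (δ q) = 0 := by
    intro p q hp hq hpq
    have hD0 : ∀ D : R →ₗ[ℂ] M, (D p = B.r p (D p) + B.l p (D p)) →
        (D q = B.r q (D q) + B.l q (D q)) →
        B.r q (D p) + B.l p (D q) = B.l p (B.r q (D (p + q))) := by
      intro D h1 h2
      have e1 : B.r q (D p) = B.l p (B.r q (D p)) := by
        conv_lhs => rw [h1]
        rw [map_add, ← B.r_mul, hpq, B.l_r]; simp
      have e2 : B.l p (D q) = B.l p (B.r q (D q)) := by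
        conv_lhs => rw [h2]
        rw [map_add, ← B.l_mul, hpq]; simp
      rw [e1, e2, map_add, map_add, map_add]
    rw [hD0 δ (same p hp) (same q hq)]
    obtain ⟨D, hD, e⟩ := h (p + q)
    rw [e, ← hD0 D (by have := hD p p; rwa [hp] at this) (by have := hD q q; rwa [hq] at this),
      ← hD, hpq, map_zero]
  let d : R →ₗ[ℂ] R →ₗ[ℂ] M :=
    LinearMap.mk₂ ℂ (fun x y => δ (x * y) - (B.r y (δ x) + B.l x (δ y)))
      (by intros; simp [add_mul]; abel)
      (by intro c x y; rw [smul_mul_assoc]; simp [smul_sub])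
      (by intros; simp [mul_add]; abel)
      (by intro c x y; rw [mul_smul_comm]; simp [smul_sub])
  have dd : ∀ x y, d x y = δ (x * y) - (B.r y (δ x) + B.l x (δ y)) := fun _ _ => rfl
  have d1 : ∀ p, p * p = p → d p p = 0 := by
    intro p hp
    rw [dd, hp, ← same p hp, sub_self]
  have d2 : ∀ p q, p * p = p → q * q = q → p * q = 0 → d p q = 0 := by
    intro p q hp hq hpq
    rw [dd, hpq, orth p q hp hq hpq]; simp
  have d3 : ∀ p q, p * p = p → q * q = q → d p q = 0 := by
    intro p q hp hq
    have ep : p = p * q + (p - p * q) := by ring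
    have eq : q = p * q + (q - p * q) := by ring
    have i1 : (p * q) * (p * q) = p * q := by linear_combination (q * q) * hp + p * hq
    have i2 : (p - p * q) * (p - p * q) = p - p * q := by
      linear_combination (1 - 2 * q + q * q) * hp + p * hq
    have i3 : (q - p * q) * (q - p * q) = q - p * q := by
      linear_combination (1 - 2 * p + p * p) * hq + q * hp
    have o1 : (p * q) * (q - p * q) = 0 := by linear_combination (p - p * p) * hq - q * hp
    have o2 : (p - p * q) * (p * q) = 0 := by linear_combination (q - q * q) * hp - p * hq
    have o3 : (p - p * q) * (q - p * q) = 0 := by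
      linear_combination (p * p - p) * hq
    have : d p q = d (p * q + (p - p * q)) (p * q + (q - p * q)) := by rw [← ep, ← eq]
    rw [this]
    simp only [map_add, LinearMap.add_apply]
    rw [d1 _ i1, d2 _ _ i1 i3 o1, d2 _ _ i2 i1 o2, d2 _ _ i2 i3 o3]
    simp
  have d0 : d = 0 := by
    apply LinearMap.ext_on hspan
    intro p hp
    apply LinearMap.ext_on hspan
    intro q hq
    simpa using d3 p q hp hq
  intro x y
  have : d x y = 0 := by rw [d0]; rfl
  rw [dd] at this
  exact sub_eq_zero.mp this

lemma span_of_diag {n : ℕ} (T : Matrix (Fin n) (Fin n) ℂ) (h : Diagonalizable T) :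
    Submodule.span ℂ {p : ↥(Algebra.adjoin ℂ ({T} : Set (Matrix (Fin n) (Fin n) ℂ))) | p * p = p}
      = ⊤ := by
  classical
  obtain ⟨P, hP, hD⟩ := h
  have hdet := (Matrix.isUnit_iff_isUnit_det _).mp hP
  obtain ⟨d, hd⟩ : ∃ d, P⁻¹ * T * P = Matrix.diagonal d := ⟨_, hD.diagonal_diag.symm⟩
  have hT : T * P = P * Matrix.diagonal d := by
    rw [← hd, ← mul_assoc, ← mul_assoc, Matrix.mul_nonsing_inv _ hdet, one_mul]
  have hpoly : ∀ f : Polynomial ℂ, Polynomial.aeval T f * P =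
      P * Matrix.diagonal (fun i => f.eval (d i)) := by
    intro f
    induction f using Polynomial.induction_on' with
    | add f g hf hg =>
      rw [map_add, add_mul, hf, hg, ← mul_add, Matrix.diagonal_add]; simp
    | monomial k a =>
      have : ∀ k : ℕ, T ^ k * P = P * Matrix.diagonal (fun i => d i ^ k) := by
        intro k
        induction k with
        | zero => simp
        | succ k ih =>
          rw [pow_succ, mul_assoc, hT, ← mul_assoc, ih, mul_assoc, Matrix.diagonal_mul_diagonal]
          simp [pow_succ]
      rw [Polynomial.aeval_monomial, mul_assoc, this]
      ext i j
      simp [Matrix.algebraMap_eq_diagonal]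
      ring
  have hext : ∀ f g : Polynomial ℂ, (∀ i, f.eval (d i) = g.eval (d i)) →
      Polynomial.aeval T f = Polynomial.aeval T g := by
    intro f g hfg
    apply hP.mul_right_cancel
    rw [hpoly, hpoly]
    simp [hfg]
  have hmem : ∀ f : Polynomial ℂ, Polynomial.aeval T f ∈ Algebra.adjoin ℂ ({T} : Set (Matrix (Fin n) (Fin n) ℂ)) := by
    intro f
    exact Polynomial.aeval_mem_adjoin_singleton ℂ T
  let s : Finset ℂ := Finset.univ.image d
  have hds : ∀ i, d i ∈ s := fun i => Finset.mem_image_of_mem _ (Finset.mem_univ i)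
  have hinj : Set.InjOn (id : ℂ → ℂ) s := Function.injective_id.injOn
  rw [eq_top_iff]
  rintro ⟨a, ha⟩ -
  have ha' := ha
  rw [Algebra.adjoin_singleton_eq_range_aeval] at ha'
  obtain ⟨f, hf⟩ := ha'
  have hf' : Polynomial.aeval T f = a := hf
  have hsum : (⟨a, ha⟩ : ↥(Algebra.adjoin ℂ ({T} : Set (Matrix (Fin n) (Fin n) ℂ)))) =
      ∑ c ∈ s, f.eval c • ⟨Polynomial.aeval T (Lagrange.basis s id c), hmem _⟩ := by
    apply Subtype.ext
    rw [AddSubmonoidClass.coe_finsetSum]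
    simp only [SetLike.val_smul]
    rw [← hf', hext f (Lagrange.interpolate s id (fun c => f.eval c))]
    · simp [Lagrange.interpolate_apply, Algebra.smul_def]
    · intro i
      exact (Lagrange.eval_interpolate_at_node (fun c => f.eval c) hinj (hds i)).symm
  rw [hsum]
  refine Submodule.sum_mem _ fun c hc => Submodule.smul_mem _ _ (Submodule.subset_span ?_)
  apply Subtype.ext
  change Polynomial.aeval T _ * Polynomial.aeval T _ = _
  rw [← map_mul]
  apply hext
  intro i
  rw [Polynomial.eval_mul]
  by_cases hci : c = d i
  · have := Lagrange.eval_basis_self hinj hc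
    rw [id, hci] at this
    rw [hci, this, mul_one]
  · have := Lagrange.eval_basis_of_ne (v := (id : ℂ → ℂ)) hci (hds i)
    rw [id] at this
    rw [this, mul_zero]

open Matrix in
/-- left multiplication bimodule on column vectors with zero right action -/
noncomputable def colBimodule {n : ℕ} (S : Subalgebra ℂ (Matrix (Fin n) (Fin n) ℂ)) :
    BanachBimodule ↥S (Fin n → ℂ) where
  l := LinearMap.mk₂ ℂ (fun a m => (a : Matrix (Fin n) (Fin n) ℂ) *ᵥ m)
    (by intros; simp [Matrix.add_mulVec]) (by intros; simp [Matrix.smul_mulVec])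
    (by intros; simp [Matrix.mulVec_add]) (by intros; simp [Matrix.mulVec_smul])
  r := 0
  l_mul := by intros; simp
  r_mul := by intros; simp
  l_r := by intros; simp
  l_bdd := ⟨1, fun a m => by
    rw [one_mul]
    exact Matrix.linfty_opNorm_mulVec (a : Matrix (Fin n) (Fin n) ℂ) m⟩
  r_bdd := ⟨0, by intros; simp⟩

open Matrix in
lemma no_jordan_of {n : ℕ} (T : Matrix (Fin n) (Fin n) ℂ)
    (H : ∀ (M : Type) (_ : NormedAddCommGroup M) (_ : NormedSpace ℂ M) (_ : CompleteSpace M)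
        (B : BanachBimodule ↥(Algebra.adjoin ℂ ({T} : Set (Matrix (Fin n) (Fin n) ℂ))) M)
        (δ : ↥(Algebra.adjoin ℂ ({T} : Set (Matrix (Fin n) (Fin n) ℂ))) →ₗ[ℂ] M),
        Continuous δ → IsLocalDerivation B δ → IsDerivation B δ)
    (μ : ℂ) (v : Fin n → ℂ) (hv : T *ᵥ (T *ᵥ v - μ • v) = μ • (T *ᵥ v - μ • v)) :
      T *ᵥ v - μ • v = 0 := by
  by_contra hu
  obtain ⟨u, hu'⟩ : ∃ u, u = T *ᵥ v - μ • v := ⟨_, rfl⟩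
  rw [← hu'] at hv hu
  obtain ⟨i, hi⟩ : ∃ i, u i ≠ 0 := by
    by_contra hc
    push Not at hc
    exact hu (funext hc)
  have hTv : T *ᵥ v = μ • v + u := by rw [hu']; abel
  have key : ∀ a ∈ Algebra.adjoin ℂ ({T} : Set (Matrix (Fin n) (Fin n) ℂ)),
      ∃ α β : ℂ, a *ᵥ u = α • u ∧ a *ᵥ v = α • v + β • u := by
    intro a ha
    induction ha using Algebra.adjoin_induction with
    | mem x hx =>
      rw [Set.mem_singleton_iff] at hx
      subst hx
      exact ⟨μ, 1, hv, by rw [hTv, one_smul]⟩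
    | algebraMap r => exact ⟨r, 0, by simp [Algebra.algebraMap_eq_smul_one, Matrix.smul_mulVec],
        by simp [Algebra.algebraMap_eq_smul_one, Matrix.smul_mulVec]⟩
    | add x y _ _ hx hy =>
      obtain ⟨a, b, h1, h2⟩ := hx
      obtain ⟨c, d, h3, h4⟩ := hy
      exact ⟨a + c, b + d, by rw [Matrix.add_mulVec, h1, h3]; module,
        by rw [Matrix.add_mulVec, h2, h4]; module⟩
    | mul x y _ _ hx hy =>
      obtain ⟨a, b, h1, h2⟩ := hx
      obtain ⟨c, d, h3, h4⟩ := hy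
      exact ⟨a * c, b * c + a * d, by
        rw [← Matrix.mulVec_mulVec, h3, Matrix.mulVec_smul, h1]; module,
        by rw [← Matrix.mulVec_mulVec, h4, Matrix.mulVec_add, Matrix.mulVec_smul,
          Matrix.mulVec_smul, h1, h2]; module⟩
  let B := colBimodule (Algebra.adjoin ℂ ({T} : Set (Matrix (Fin n) (Fin n) ℂ)))
  have hBl : ∀ a m, B.l a m = (a : Matrix (Fin n) (Fin n) ℂ) *ᵥ m := fun _ _ => rfl
  have hBr : ∀ a m, B.r a m = 0 := fun _ _ => rfl
  let δ : ↥(Algebra.adjoin ℂ ({T} : Set (Matrix (Fin n) (Fin n) ℂ))) →ₗ[ℂ] (Fin n → ℂ) :=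
    { toFun := fun a => B.l a v - ((B.l a u) i / u i) • v
      map_add' := by intro a b; simp [add_div, add_smul]; abel
      map_smul' := by intro a b; simp [mul_div_assoc, smul_sub, smul_smul] }
  have hδ : ∀ a, δ a = B.l a v - ((B.l a u) i / u i) • v := fun _ => rfl
  have hder : IsDerivation B δ := by
    refine H _ _ _ inferInstance B δ ?_ ?_
    · have hc : ∀ w : Fin n → ℂ, Continuous
          (fun a : ↥(Algebra.adjoin ℂ ({T} : Set (Matrix (Fin n) (Fin n) ℂ))) =>
            (a : Matrix (Fin n) (Fin n) ℂ) *ᵥ w) :=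
        fun w => continuous_subtype_val.matrix_mulVec continuous_const
      exact (hc v).sub
        ((((continuous_apply i).comp (hc u)).div_const (u i)).smul continuous_const)
    intro a
    obtain ⟨α, β, h1, h2⟩ := key a a.2
    have hda : δ a = β • u := by
      rw [hδ, hBl, hBl, h1, h2]
      simp [hi]
    have hm : ∀ m, IsDerivation B (B.l.flip m) := by
      intro m x y
      simp [hBr, B.l_mul]
    by_cases hα : α = 0
    · refine ⟨B.l.flip v, hm v, ?_⟩
      rw [hda, LinearMap.flip_apply, hBl, h2, hα]; simp
    · refine ⟨B.l.flip ((β / α) • u), hm _, ?_⟩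
      rw [hda, LinearMap.flip_apply, hBl, Matrix.mulVec_smul, h1, smul_smul, div_mul_cancel₀ _ hα]
  have h1 : δ 1 = 0 := by
    rw [hδ, hBl, hBl]; simp [hi]
  have hT := hder ⟨T, Algebra.self_mem_adjoin_singleton ℂ T⟩ 1
  rw [h1, mul_one, map_zero, hBr, hδ, hBl, hBl] at hT
  simp only [hv, hTv] at hT
  simp [hi] at hT
  exact hu hT

/-- For `n ≥ 2` and `T ∈ Mₙ(ℂ)`: every bounded local derivation from `𝒜_T` into any
Banach `𝒜_T`-bimodule is a derivation, if and only if `T` is diagonalizable. -/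
theorem local_derivations_are_derivations_iff_diagonalizable (n : ℕ) (hn : 2 ≤ n)
    (T : Matrix (Fin n) (Fin n) ℂ) :
    (∀ (M : Type) (_ : NormedAddCommGroup M) (_ : NormedSpace ℂ M) (_ : CompleteSpace M)
        (B : BanachBimodule ↥(Algebra.adjoin ℂ ({T} : Set (Matrix (Fin n) (Fin n) ℂ))) M)
        (δ : ↥(Algebra.adjoin ℂ ({T} : Set (Matrix (Fin n) (Fin n) ℂ))) →ₗ[ℂ] M),
        Continuous δ → IsLocalDerivation B δ → IsDerivation B δ) ↔
      Diagonalizable T := by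
  constructor
  · intro H
    exact diag_of_no_jordan T (no_jordan_of T H)
  · intro hT M _ _ _ B δ _ hδ
    have hspan := span_of_diag T hT
    let _ : NormedCommRing ↥(Algebra.adjoin ℂ ({T} : Set (Matrix (Fin n) (Fin n) ℂ))) :=
      { (inferInstance : NormedRing ↥(Algebra.adjoin ℂ ({T} : Set (Matrix (Fin n) (Fin n) ℂ)))) with
        mul_comm := fun a b => mul_comm a b }
    exact deriv_of_span B δ hspan hδ
end

section
/- Let n ≥ 2 and let T ∈ M_n(ℂ). Every bounded local left multiplier from 𝒜_T into any Banach 𝒜_T-bimodule is a left multiplier if and only if T is diagonalizable. -/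
attribute [local instance] Matrix.linftyOpNormedRing Matrix.linftyOpNormedAlgebra

variable {A : Type*} {M : Type*} [NonUnitalSeminormedRing A] [Module ℂ A]
  [SeminormedAddCommGroup M] [Module ℂ M]

/-- `V : A → M` is a left multiplier (w.r.t. the bimodule structure `B`) if
`V(ab) = V(a)·b`. -/
def IsLeftMultiplier (B : BanachBimodule A M) (V : A →ₗ[ℂ] M) : Prop :=
  ∀ a b : A, V (a * b) = B.r b (V a)

/-- `V : A → M` is a local left multiplier if for every `a` there is a left
multiplier `Vₐ` with `V a = Vₐ a`. -/
def IsLocalLeftMultiplier (B : BanachBimodule A M) (V : A →ₗ[ℂ] M) : Prop :=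
  ∀ a : A, ∃ Va : A →ₗ[ℂ] M, IsLeftMultiplier B Va ∧ V a = Va a

open Polynomial in
theorem aux_aeval {n : ℕ} (T P : Matrix (Fin n) (Fin n) ℂ) (d : Fin n → ℂ)
    (h : T * P = P * Matrix.diagonal d) (p : ℂ[X]) :
    aeval T p * P = P * Matrix.diagonal (fun i => p.eval (d i)) := by
  induction p using Polynomial.induction_on' with
  | add p q hp hq =>
    simp only [map_add, add_mul, hp, hq, eval_add, ← mul_add, Matrix.diagonal_add]
  | monomial k c =>
    have hk : T ^ k * P = P * Matrix.diagonal (fun i => d i ^ k) := by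
      induction k with
      | zero => simp
      | succ k ih =>
        rw [pow_succ, mul_assoc, h, ← mul_assoc, ih, mul_assoc, Matrix.diagonal_mul_diagonal]
        simp [pow_succ]
    have hd : Matrix.diagonal (fun i => c * d i ^ k) = c • Matrix.diagonal (fun i => d i ^ k) := by
      rw [← Matrix.diagonal_smul]; rfl
    rw [aeval_monomial, mul_assoc, hk, ← Algebra.smul_def]
    simp only [eval_monomial]
    rw [hd, Matrix.mul_smul]

open Polynomial in
theorem aux_poly {n : ℕ} (T : Matrix (Fin n) (Fin n) ℂ) (h : Diagonalizable T) :
    ∃ q : ℂ[X], Squarefree q ∧ aeval T q = 0 := by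
  classical
  obtain ⟨P, hP, hD⟩ := h
  obtain ⟨d, hd⟩ : ∃ d, Matrix.diagonal d = P⁻¹ * T * P := ⟨_, hD.diagonal_diag⟩
  have hdet : IsUnit P.det := (Matrix.isUnit_iff_isUnit_det P).1 hP
  have hTP : T * P = P * Matrix.diagonal d := by
    rw [hd, mul_assoc, Matrix.mul_nonsing_inv_cancel_left _ _ hdet]
  refine ⟨∏ μ ∈ Finset.univ.image d, (X - C μ), ?_, ?_⟩
  · apply Separable.squarefree
    exact separable_prod_X_sub_C_iff'.2 (fun x _ y _ h => h)
  · have := aux_aeval T P d hTP (∏ μ ∈ Finset.univ.image d, (X - C μ))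
    have hz : (fun i => (∏ μ ∈ Finset.univ.image d, (X - C μ)).eval (d i)) = 0 := by
      funext i
      rw [eval_prod]
      exact Finset.prod_eq_zero (Finset.mem_image_of_mem d (Finset.mem_univ i)) (by simp)
    rw [hz] at this
    apply hP.mul_right_cancel
    rw [this]
    simp

theorem aux_span {n : ℕ} (T : Matrix (Fin n) (Fin n) ℂ) (h : Diagonalizable T) :
    ⨆ μ : ℂ, Module.End.eigenspace (LinearMap.mulLeft ℂ
      (⟨T, Algebra.self_mem_adjoin_singleton ℂ T⟩ : ↥(Algebra.adjoin ℂ ({T} : Set _)))) μ = ⊤ := by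
  obtain ⟨q, hq, hT⟩ := aux_poly T h
  have : FiniteDimensional ℂ ↥(Algebra.adjoin ℂ ({T} : Set (Matrix (Fin n) (Fin n) ℂ))) :=
    inferInstanceAs (FiniteDimensional ℂ
      ↥(Subalgebra.toSubmodule (Algebra.adjoin ℂ ({T} : Set (Matrix (Fin n) (Fin n) ℂ)))))
  apply Module.End.IsSemisimple.iSup_eigenspace_eq_top
  apply Module.End.isSemisimple_of_squarefree_aeval_eq_zero hq
  set t : ↥(Algebra.adjoin ℂ ({T} : Set (Matrix (Fin n) (Fin n) ℂ))) :=
    ⟨T, Algebra.self_mem_adjoin_singleton ℂ T⟩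
  have ht : Polynomial.aeval t q = 0 := by
    apply Subtype.ext
    rw [Polynomial.aeval_subalgebra_coe q _ t]
    exact hT
  have h2 : LinearMap.mulLeft ℂ t = Algebra.lmul ℂ _ t := rfl
  rw [h2, Polynomial.aeval_algHom_apply, ht, map_zero]

theorem aux_exists {n : ℕ} (T : Matrix (Fin n) (Fin n) ℂ) (h : ¬ Diagonalizable T) :
    ∃ (μ : ℂ) (v u : Fin n → ℂ), T.mulVec v = μ • v + u ∧ T.mulVec u = μ • u ∧ u ≠ 0 := by
  by_contra hc
  push Not at hc
  apply h
  set f : Module.End ℂ (Fin n → ℂ) := Matrix.toLin' T with hf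
  have key : ∀ μ : ℂ, ∀ k : ℕ, ∀ w, ((f - μ • 1) ^ k) w = 0 → (f - μ • 1) w = 0 := by
    intro μ k
    induction k with
    | zero => intro w hw; simp at hw; simp [hw]
    | succ k ih =>
      intro w hw
      rw [pow_succ, Module.End.mul_apply] at hw
      have h1 := ih _ hw
      refine hc μ w ((f - μ • 1) w) ?_ ?_
      · simp [hf]
      · rw [LinearMap.sub_apply, sub_eq_zero] at h1
        simpa [hf] using h1
  have htop : (⊤ : Submodule ℂ (Fin n → ℂ)) ≤
      Submodule.span ℂ {v | ∃ μ : ℂ, T.mulVec v = μ • v} := by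
    rw [← Module.End.iSup_maxGenEigenspace_eq_top f]
    refine iSup_le fun μ w hw => Submodule.subset_span ⟨μ, ?_⟩
    obtain ⟨k, hk⟩ := (Module.End.mem_maxGenEigenspace f μ w).1 hw
    have := key μ k w hk
    rw [LinearMap.sub_apply, sub_eq_zero] at this
    simpa [hf] using this
  let b0 := Module.Basis.ofSpan htop
  have : Fintype ((linearIndepOn_empty ℂ id).extend
    (Set.empty_subset {v : Fin n → ℂ | ∃ μ : ℂ, T.mulVec v = μ • v})) :=
    FiniteDimensional.fintypeBasisIndex b0
  have hcard := Module.finrank_eq_card_basis b0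
  rw [Module.finrank_fin_fun] at hcard
  let b := b0.reindex (Fintype.equivFinOfCardEq hcard.symm)
  have hb : ∀ i, ∃ μ : ℂ, T.mulVec (b i) = μ • b i := by
    intro i
    have := Module.Basis.ofSpan_subset htop
      (Set.mem_range_self ((Fintype.equivFinOfCardEq hcard.symm).symm i))
    simpa [b, b0] using this
  choose d hd using hb
  let P := (Pi.basisFun ℂ (Fin n)).toMatrix b
  have hP : IsUnit P := by
    have := (Pi.basisFun ℂ (Fin n)).invertibleToMatrix b
    exact isUnit_of_invertible _
  refine ⟨P, hP, ?_⟩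
  have hTP : T * P = P * Matrix.diagonal d := by
    ext i j
    have := congrFun (hd j) i
    rw [Matrix.mul_diagonal, Matrix.mul_apply]
    simp only [Matrix.mulVec, dotProduct, Pi.smul_apply, smul_eq_mul] at this
    simp only [P, Module.Basis.toMatrix_apply, Pi.basisFun_repr]
    rw [this, mul_comm]
  rw [mul_assoc, hTP, Matrix.nonsing_inv_mul_cancel_left _ _ ((Matrix.isUnit_iff_isUnit_det P).1 hP)]
  exact Matrix.isDiag_diagonal d

theorem aux_mul_comm {n : ℕ} (T : Matrix (Fin n) (Fin n) ℂ)
    (a b : ↥(Algebra.adjoin ℂ ({T} : Set (Matrix (Fin n) (Fin n) ℂ)))) : a * b = b * a := by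
  have := Algebra.isMulCommutative_adjoin ℂ (s := ({T} : Set (Matrix (Fin n) (Fin n) ℂ)))
    (by rintro a rfl b rfl; rfl)
  exact mul_comm' a b

/-- The natural bimodule. -/
noncomputable def auxBimod {n : ℕ} (T : Matrix (Fin n) (Fin n) ℂ) :
    BanachBimodule ↥(Algebra.adjoin ℂ ({T} : Set (Matrix (Fin n) (Fin n) ℂ))) (Fin n → ℂ) where
  l := (Matrix.toLin'.toLinearMap).comp (Algebra.adjoin ℂ {T}).val.toLinearMap
  r := (Matrix.toLin'.toLinearMap).comp (Algebra.adjoin ℂ {T}).val.toLinearMap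
  l_mul a b m := by simp
  r_mul a b m := by rw [aux_mul_comm]; simp
  l_r a b m := by
    have := congrArg Subtype.val (aux_mul_comm T a b)
    simp only [MulMemClass.coe_mul] at this
    simp [this]
  l_bdd := ⟨1, fun a m => by
    rw [one_mul]
    exact Matrix.linfty_opNorm_mulVec (a : Matrix (Fin n) (Fin n) ℂ) m⟩
  r_bdd := ⟨1, fun a m => by
    rw [one_mul]
    exact Matrix.linfty_opNorm_mulVec (a : Matrix (Fin n) (Fin n) ℂ) m⟩

theorem auxBimod_r {n : ℕ} (T : Matrix (Fin n) (Fin n) ℂ)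
    (a : ↥(Algebra.adjoin ℂ ({T} : Set (Matrix (Fin n) (Fin n) ℂ)))) (m : Fin n → ℂ) :
    (auxBimod T).r a m = (a : Matrix (Fin n) (Fin n) ℂ).mulVec m := by
  simp [auxBimod]

theorem aux_action {n : ℕ} (T : Matrix (Fin n) (Fin n) ℂ) (μ : ℂ) (v u : Fin n → ℂ)
    (hv : T.mulVec v = μ • v + u) (hu : T.mulVec u = μ • u)
    (a : Matrix (Fin n) (Fin n) ℂ) (ha : a ∈ Algebra.adjoin ℂ ({T} : Set _)) :
    ∃ α β : ℂ, a.mulVec v = α • v + β • u ∧ a.mulVec u = α • u := by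
  induction ha using Algebra.adjoin_induction with
  | mem x hx => obtain rfl := hx; exact ⟨μ, 1, by simpa using hv, hu⟩
  | algebraMap r =>
    exact ⟨r, 0, by simp [Algebra.algebraMap_eq_smul_one, Matrix.smul_mulVec],
      by simp [Algebra.algebraMap_eq_smul_one, Matrix.smul_mulVec]⟩
  | add x y _ _ hx hy =>
    obtain ⟨α, β, h1, h2⟩ := hx
    obtain ⟨α', β', h1', h2'⟩ := hy
    refine ⟨α + α', β + β', ?_, ?_⟩
    · rw [Matrix.add_mulVec, h1, h1']; module
    · rw [Matrix.add_mulVec, h2, h2']; module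
  | mul x y _ _ hx hy =>
    obtain ⟨α, β, h1, h2⟩ := hx
    obtain ⟨α', β', h1', h2'⟩ := hy
    refine ⟨α * α', β * α' + α * β', ?_, ?_⟩
    · rw [← Matrix.mulVec_mulVec, h1', Matrix.mulVec_add, Matrix.mulVec_smul, Matrix.mulVec_smul,
        h1, h2]; module
    · rw [← Matrix.mulVec_mulVec, h2', Matrix.mulVec_smul, h2]; module

theorem aux_forward {n : ℕ} (T : Matrix (Fin n) (Fin n) ℂ)
    (H : ∀ (V : ↥(Algebra.adjoin ℂ ({T} : Set (Matrix (Fin n) (Fin n) ℂ))) →ₗ[ℂ] (Fin n → ℂ)),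
        Continuous V → IsLocalLeftMultiplier (auxBimod T) V → IsLeftMultiplier (auxBimod T) V) :
    Diagonalizable T := by
  by_contra hT
  obtain ⟨μ, v, u, hv, hu, hu0⟩ := aux_exists T hT
  have hnot : u ∉ Submodule.span ℂ {v} := by
    intro hmem
    obtain ⟨c, hc⟩ := Submodule.mem_span_singleton.1 hmem
    rw [← hc, Matrix.mulVec_smul, hv] at hu
    have : c • u = 0 := by
      have h3 : c • (μ • v + u) - μ • c • v = c • u := by module
      rw [← h3, hu, sub_self]
    rcases smul_eq_zero.1 this with h0 | h0
    · apply hu0; rw [← hc, h0, zero_smul]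
    · exact hu0 h0
  obtain ⟨f, hfu, hfv⟩ := Submodule.exists_le_ker_of_notMem hnot
  have hfv : f v = 0 := hfv (Submodule.mem_span_singleton_self v)
  let V : ↥(Algebra.adjoin ℂ ({T} : Set (Matrix (Fin n) (Fin n) ℂ))) →ₗ[ℂ] (Fin n → ℂ) :=
    (f.comp ((auxBimod T).r.flip v)).smulRight u
  have hV : ∀ a, V a = f ((a : Matrix (Fin n) (Fin n) ℂ).mulVec v) • u := by
    intro a; simp [V, auxBimod_r]
  have hVc : Continuous V := by
    have h0 : ⇑V = fun a => f (a.1.mulVec v) • u := funext hV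
    rw [h0]
    have h1 : Continuous f := LinearMap.continuous_of_finiteDimensional f
    exact (h1.comp (Continuous.matrix_mulVec continuous_subtype_val continuous_const)).smul
      continuous_const
  have hmul := H V hVc ?_
  · have := hmul 1 ⟨T, Algebra.self_mem_adjoin_singleton ℂ T⟩
    rw [one_mul, auxBimod_r, hV, hV] at this
    simp [hv, hfv, hfu, hu0] at this
  · intro a
    suffices ∃ m : Fin n → ℂ, V a = (a : Matrix (Fin n) (Fin n) ℂ).mulVec m by
      obtain ⟨m, hm⟩ := this
      refine ⟨(auxBimod T).r.flip m, ?_, ?_⟩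
      · intro x y
        simp only [LinearMap.flip_apply]
        exact (auxBimod T).r_mul x y m
      · rw [LinearMap.flip_apply, auxBimod_r, hm]
    obtain ⟨α, β, h1, h2⟩ := aux_action T μ v u hv hu a.1 a.2
    rw [hV, h1]
    simp only [map_add, map_smul, hfv, smul_eq_mul, mul_zero, zero_add]
    by_cases hα : α = 0
    · refine ⟨f u • v, ?_⟩
      rw [Matrix.mulVec_smul, h1, hα]; module
    · refine ⟨(β * f u / α) • u, ?_⟩
      rw [Matrix.mulVec_smul, h2, smul_smul, div_mul_cancel₀ _ hα]

/-- For `n ≥ 2` and `T ∈ Mₙ(ℂ)`: every bounded local left multiplier from `𝒜_T` into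
any Banach `𝒜_T`-bimodule is a left multiplier, if and only if `T` is diagonalizable. -/
theorem local_left_multipliers_are_multipliers_iff_diagonalizable (n : ℕ) (hn : 2 ≤ n)
    (T : Matrix (Fin n) (Fin n) ℂ) :
    (∀ (M : Type) (_ : NormedAddCommGroup M) (_ : NormedSpace ℂ M) (_ : CompleteSpace M)
        (B : BanachBimodule ↥(Algebra.adjoin ℂ ({T} : Set (Matrix (Fin n) (Fin n) ℂ))) M)
        (V : ↥(Algebra.adjoin ℂ ({T} : Set (Matrix (Fin n) (Fin n) ℂ))) →ₗ[ℂ] M),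
        Continuous V → IsLocalLeftMultiplier B V → IsLeftMultiplier B V) ↔
      Diagonalizable T := by
  constructor
  · intro H
    exact aux_forward T (fun V hV hl => H (Fin n → ℂ) _ _ inferInstance (auxBimod T) V hV hl)
  · intro hT M _ _ _ B V _ hloc x y
    have hx : x ∈ (⊤ : Submodule ℂ _) := Submodule.mem_top
    rw [← aux_span T hT] at hx
    induction hx using Submodule.iSup_induction' with
    | zero => simp
    | add a b _ _ ha hb => rw [add_mul, map_add, map_add, map_add, ha, hb]
    | mem μ a ha =>
      obtain ⟨Va, hVa, hE⟩ := hloc a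
      have hey : ∃ c : ℂ, a * y = c • a := by
        rw [aux_mul_comm]
        obtain ⟨y, hy⟩ := y
        have ha' : T * (a : Matrix (Fin n) (Fin n) ℂ) = μ • (a : Matrix (Fin n) (Fin n) ℂ) :=
          congrArg Subtype.val (Module.End.mem_eigenspace_iff.1 ha)
        suffices ∃ c : ℂ, y * (a : Matrix (Fin n) (Fin n) ℂ) =
            c • (a : Matrix (Fin n) (Fin n) ℂ) by
          obtain ⟨c, hc⟩ := this
          exact ⟨c, Subtype.ext hc⟩
        induction hy using Algebra.adjoin_induction with
        | mem x hx => obtain rfl := hx; exact ⟨μ, ha'⟩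
        | algebraMap r => exact ⟨r, by rw [Algebra.smul_def]⟩
        | add x y _ _ hx hy =>
          obtain ⟨c, hc⟩ := hx
          obtain ⟨c', hc'⟩ := hy
          exact ⟨c + c', by rw [add_mul, hc, hc', add_smul]⟩
        | mul x y _ _ hx hy =>
          obtain ⟨c, hc⟩ := hx
          obtain ⟨c', hc'⟩ := hy
          exact ⟨c' * c, by rw [mul_assoc, hc', Matrix.mul_smul, hc, smul_smul]⟩
      obtain ⟨c, hc⟩ := hey
      rw [hE, ← hVa a y, hc, map_smul, map_smul, hE]
end

section
/- Let 𝒜 be a complex Banach algebra having a bounded approximate identity. Then the following are equivalent: (i) every continuous linear map f : 𝒜 → 𝒜* such that ab = 0 implies f(a)·b = 0 (where the module action is (f(a)·b)(c) = f(a)(bc) for c ∈ 𝒜) satisfies f(ab) = f(a)·b for all a, b ∈ 𝒜; (ii) 𝒜 is zero product determined. -/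
open scoped Topology

/-- `A` has a bounded (two-sided) approximate identity: a norm-bounded net `(eᵢ)`
with `eᵢ a → a` and `a eᵢ → a` for every `a`. -/
def HasBoundedApproxIdentity (A : Type*) [NonUnitalSeminormedRing A] : Prop :=
  ∃ C : ℝ, 0 < C ∧ ∃ (ι : Type) (l : Filter ι) (e : ι → A), l.NeBot ∧
    (∀ i, ‖e i‖ ≤ C) ∧
    ∀ a : A, Filter.Tendsto (fun i => e i * a) l (𝓝 a) ∧
      Filter.Tendsto (fun i => a * e i) l (𝓝 a)

/-- Let `A` be a complex Banach algebra with a bounded approximate identity. Then the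
following are equivalent: (i) every continuous linear map `f : A → A*` such that
`a * b = 0` implies `f(a)·b = 0` (where `(f(a)·b)(c) = f(a)(bc)`) is a left
multiplier, i.e. satisfies `f(ab) = f(a)·b`; (ii) `A` is zero product determined. -/
theorem leftMultiplier_criterion_iff_zpd (A : Type*) [NonUnitalNormedRing A]
    [NormedSpace ℂ A] [IsScalarTower ℂ A A] [SMulCommClass ℂ A A] [CompleteSpace A]
    (hbai : HasBoundedApproxIdentity A) :
    (∀ f : A →L[ℂ] (A →L[ℂ] ℂ),
        (∀ a b : A, a * b = 0 → ∀ c : A, f a (b * c) = 0) →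
        ∀ a b c : A, f (a * b) c = f a (b * c)) ↔
      ZeroProductDetermined A := by
  obtain ⟨C, hC, ι, l, e, hl, heC, he⟩ := hbai
  constructor
  · intro h φ hφ hz
    let f₀ : A →ₗ[ℂ] (A →L[ℂ] ℂ) :=
      { toFun := fun a => ⟨φ a, hφ.comp (Continuous.prodMk continuous_const continuous_id)⟩
        map_add' := by intro x y; ext z; simp
        map_smul' := by intro x y; ext z; simp }
    have hf₀ : ∀ a b, f₀ a b = φ a b := fun _ _ => rfl
    have hc : Continuous f₀ := by
      refine f₀.continuous_of_seq_closed_graph ?_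
      intro u x g hu hg
      ext y
      have h1 : Filter.Tendsto (fun n => f₀ (u n) y) Filter.atTop (𝓝 (g y)) :=
        ((ContinuousLinearMap.apply ℂ ℂ y).continuous.tendsto g).comp hg
      have h2 : Filter.Tendsto (fun n => f₀ (u n) y) Filter.atTop (𝓝 (f₀ x y)) := by
        have h3 : Continuous (fun a => φ a y) :=
          hφ.comp (Continuous.prodMk continuous_id continuous_const)
        exact (h3.tendsto x).comp hu
      exact tendsto_nhds_unique h1 h2
    let f : A →L[ℂ] (A →L[ℂ] ℂ) := ⟨f₀, hc⟩
    have hf : ∀ a b, f a b = φ a b := fun _ _ => rfl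
    have hm := h f (fun a b hab c => by
      rw [hf]; exact hz _ _ (by rw [← mul_assoc, hab, zero_mul]))
    let U : Ultrafilter ι := Ultrafilter.of l
    have hU : (U : Filter ι) ≤ l := Ultrafilter.of_le l
    have hb : ∀ a i, ‖f a (e i)‖ ≤ (‖f‖ * C) * ‖a‖ := by
      intro a i
      calc ‖f a (e i)‖ ≤ ‖f‖ * ‖a‖ * ‖e i‖ := f.le_opNorm₂ a (e i)
        _ ≤ ‖f‖ * ‖a‖ * C := by gcongr; exact heC i
        _ = _ := by ring
    have hex : ∀ a, ∃ t : ℂ, ‖t‖ ≤ (‖f‖ * C) * ‖a‖ ∧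
        Filter.Tendsto (fun i => f a (e i)) U (𝓝 t) := by
      intro a
      have hk := isCompact_closedBall (0 : ℂ) ((‖f‖ * C) * ‖a‖)
      obtain ⟨t, ht, hle⟩ := hk.ultrafilter_le_nhds (U.map (fun i => f a (e i))) (by
        rw [Filter.le_principal_iff]
        refine Filter.mem_map.2 (Filter.univ_mem' fun i => ?_)
        simpa using hb a i)
      exact ⟨t, by simpa using ht, hle⟩
    choose t htb ht using hex
    let τ₀ : A →ₗ[ℂ] ℂ :=
      { toFun := t
        map_add' := by
          intro x y
          refine tendsto_nhds_unique (ht (x + y)) ?_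
          simpa using (ht x).add (ht y)
        map_smul' := by
          intro r x
          refine tendsto_nhds_unique (ht (r • x)) ?_
          simpa using (ht x).const_mul r }
    refine ⟨τ₀.mkContinuous (‖f‖ * C) htb, fun x y => ?_⟩
    refine tendsto_nhds_unique (f := fun i => f x (y * e i)) (l := (U : Filter ι)) ?_ ?_
    · exact ((f x).continuous.tendsto y).comp ((he y).2.mono_left hU)
    · have := ht (x * y)
      simp only [hm] at this
      exact this
  · intro h f hz a b c
    let φ : A →ₗ[ℂ] A →ₗ[ℂ] ℂ := LinearMap.mk₂ ℂ (fun a b => f a (b * c))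
      (by intros; simp) (by intros; simp) (by intros; simp [add_mul])
      (by intros; simp [smul_mul_assoc])
    have hφ : ∀ a b, φ a b = f a (b * c) := fun _ _ => rfl
    obtain ⟨τ, hτ⟩ := h φ (by simp only [hφ]; fun_prop)
      (fun x y hxy => hz x y hxy c)
    simp only [hφ] at hτ
    rw [hτ a b]
    refine tendsto_nhds_unique (f := fun i => f (a * b) (e i * c)) (l := l) ?_ ?_
    · exact ((f (a * b)).continuous.tendsto c).comp (he c).1
    · simp only [hτ]
      exact (τ.continuous.tendsto (a * b)).comp (he (a * b)).2
end

section
/- Let 𝒜 be a complex Banach algebra with a bounded approximate identity which is zero product determined, and let M be a separating Banach 𝒜-bimodule. If f : 𝒜 → M is a continuous linear map such that ab = 0 implies f(a)·b = 0 for all a, b ∈ 𝒜, then f is a left multiplier, i.e. f(ab) = f(a)·b for all a, b ∈ 𝒜. -/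
open scoped Topology

/-- The bimodule `M` is *separating* if `A·m = {0}` implies `m = 0` and
`m·A = {0}` implies `m = 0`. -/
def BanachBimodule.Separating {A M : Type*} [NonUnitalSeminormedRing A] [Module ℂ A]
    [SeminormedAddCommGroup M] [Module ℂ M] (B : BanachBimodule A M) : Prop :=
  (∀ m : M, (∀ a : A, B.l a m = 0) → m = 0) ∧
  (∀ m : M, (∀ a : A, B.r a m = 0) → m = 0)

/-- Let `A` be a zero product determined complex Banach algebra with a bounded
approximate identity and `M` a separating Banach `A`-bimodule. If `f : A → M` is a
continuous linear map such that `a * b = 0` implies `f(a)·b = 0`, then `f` is a left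
multiplier: `f(ab) = f(a)·b` for all `a, b`. -/
theorem zpd_left_multiplier (A : Type*) [NonUnitalNormedRing A] [NormedSpace ℂ A]
    [IsScalarTower ℂ A A] [SMulCommClass ℂ A A] [CompleteSpace A]
    (hzpd : ZeroProductDetermined A) (hbai : HasBoundedApproxIdentity A)
    (M : Type*) [NormedAddCommGroup M] [NormedSpace ℂ M] [CompleteSpace M]
    (B : BanachBimodule A M) (hsep : B.Separating)
    (f : A →ₗ[ℂ] M) (hf : Continuous f)
    (h : ∀ a b : A, a * b = 0 → B.r b (f a) = 0) :
    ∀ a b : A, f (a * b) = B.r b (f a) := by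
  intro a b
  have key : ∀ x y z : A, B.r z (f (x * y)) = B.r (y * z) (f x) := by
    intro x y z
    by_contra hne
    obtain ⟨ψ, hψ⟩ := SeparatingDual.exists_ne_zero (R := ℂ) (sub_ne_zero.mpr hne)
    obtain ⟨C, hC⟩ := B.r_bdd
    let R : A →L[ℂ] M →L[ℂ] M := LinearMap.mkContinuous₂ B.r C hC
    have hR : ∀ u m, R u m = B.r u m := fun u m => rfl
    let φ : A →ₗ[ℂ] A →ₗ[ℂ] ℂ :=
      LinearMap.mk₂ ℂ (fun u v => ψ (B.r v (f u)))
        (by intros; simp) (by intros; simp) (by intros; simp) (by intros; simp)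
    have hφ : ∀ u v, φ u v = ψ (B.r v (f u)) := fun u v => rfl
    obtain ⟨τ, hτ⟩ := hzpd φ
      (by
        have : Continuous (fun p : A × A => ψ (R p.2 (f p.1))) := by fun_prop
        exact this)
      (by
        intro u v huv
        rw [hφ, h u v huv, map_zero])
    apply hψ
    rw [map_sub, ← hφ, ← hφ, hτ, hτ, mul_assoc, sub_self]
  apply sub_eq_zero.mp
  apply hsep.2
  intro c
  rw [map_sub, key, B.r_mul, sub_self]
end

section
/- Let 𝒜 and ℬ be complex Banach algebras, let φ : 𝒜 → ℬ be a bounded algebra homomorphism, and suppose 𝒜 is zero product determined and has a bounded approximate identity. Then the graph 𝒢 = {(a, φ(a)) : a ∈ 𝒜}, which is a closed subalgebra of 𝒜 × ℬ with coordinatewise operations and the norm ‖(a, φ(a))‖ = ‖a‖ + ‖φ(a)‖, is a zero product determined Banach algebra. -/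
open scoped Topology

/-- Let `A`, `B` be complex Banach algebras, `φ : A → B` a bounded algebra
homomorphism, and suppose `A` is zero product determined with a bounded approximate
identity.  Then the graph `𝒢 = {(a, φ a) : a ∈ A}`, a closed subalgebra of `A × B`,
is a zero product determined Banach algebra. -/
theorem graph_of_homomorphism_zpd (A B : Type*)
    [NonUnitalNormedRing A] [NormedSpace ℂ A] [IsScalarTower ℂ A A] [SMulCommClass ℂ A A]
    [CompleteSpace A]
    [NonUnitalNormedRing B] [NormedSpace ℂ B] [IsScalarTower ℂ B B] [SMulCommClass ℂ B B]
    [CompleteSpace B]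
    (φ : A →ₙₐ[ℂ] B) (hφ : Continuous φ)
    (hzpd : ZeroProductDetermined A) (hbai : HasBoundedApproxIdentity A)
    (G : NonUnitalSubalgebra ℂ (A × B)) (hG : ∀ p : A × B, p ∈ G ↔ p.2 = φ p.1) :
    ZeroProductDetermined ↥G := by
  let j : A →ₗ[ℂ] G :=
    { toFun := fun a => ⟨(a, φ a), (hG _).2 rfl⟩
      map_add' := fun x y => Subtype.ext (Prod.ext rfl (map_add φ x y))
      map_smul' := fun c x => Subtype.ext (Prod.ext rfl (map_smul φ c x)) }
  have hj : Continuous j :=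
    Continuous.subtype_mk (continuous_id.prodMk hφ) _
  have hjm : ∀ x y : A, j x * j y = j (x * y) := fun x y =>
    Subtype.ext (Prod.ext rfl (map_mul φ x y).symm)
  have hjs : ∀ g : G, j g.1.1 = g := fun g =>
    Subtype.ext (Prod.ext rfl ((hG _).1 g.2).symm)
  intro ψ hψ h0
  obtain ⟨τ, hτ⟩ := hzpd (ψ.compl₁₂ j j)
    (hψ.comp ((hj.comp continuous_fst).prodMk (hj.comp continuous_snd)))
    (fun x y hxy => h0 _ _ (by rw [hjm, hxy, map_zero]))
  let p : G →L[ℂ] A :=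
    { toFun := fun g => g.1.1
      map_add' := fun _ _ => rfl
      map_smul' := fun _ _ => rfl
      cont := continuous_fst.comp continuous_subtype_val }
  refine ⟨τ.comp p, fun x y => ?_⟩
  have h := hτ x.1.1 y.1.1
  rw [LinearMap.compl₁₂_apply, hjs, hjs] at h
  exact h
end

section
/- Let H be a complex separable Hilbert space and let ℒ = {0, M, N, H} be a subspace lattice with two atoms on H. Then Alg ℒ is a zero product determined Banach algebra. -/
open scoped Topology

section
open scoped Topology

namespace ZPD

/-- Sets closed under the algebra operations, limits inside `B`, containing the idempotents of `B`. -/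
structure Good {R : Type*} [Ring R] [Algebra ℂ R] [TopologicalSpace R]
    (B : Subalgebra ℂ R) (C : Set R) : Prop where
  add : ∀ {x y}, x ∈ C → y ∈ C → x + y ∈ C
  smul : ∀ (c : ℂ) {x}, x ∈ C → c • x ∈ C
  mul : ∀ {x y}, x ∈ C → y ∈ C → x * y ∈ C
  idem : ∀ {x}, x ∈ B → x * x = x → x ∈ C
  cl : ∀ {x}, x ∈ closure C → x ∈ B → x ∈ C

/-- The algebra is generated by idempotents. -/
def IG {R : Type*} [Ring R] [Algebra ℂ R] [TopologicalSpace R]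
    (B : Subalgebra ℂ R) : Prop := ∀ C : Set R, Good B C → ∀ x ∈ B, x ∈ C

section generic
variable {R : Type*} [Ring R] [Algebra ℂ R] [TopologicalSpace R] {B : Subalgebra ℂ R} {C : Set R}

lemma Good.sub (h : Good B C) {x y : R} (hx : x ∈ C) (hy : y ∈ C) : x - y ∈ C := by
  have := h.add hx (h.smul (-1) hy)
  simpa [sub_eq_add_neg] using this

lemma Good.zero (h : Good B C) : (0 : R) ∈ C := h.idem B.zero_mem (by simp)

lemma Good.sum (h : Good B C) {α : Type*} (s : Finset α) (f : α → R) (hf : ∀ i ∈ s, f i ∈ C) :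
    ∑ i ∈ s, f i ∈ C := by
  classical
  induction s using Finset.induction_on with
  | empty => simpa using h.zero
  | insert a s ha ih =>
    rw [Finset.sum_insert ha]
    exact h.add (hf _ (by simp)) (ih fun i hi => hf i (by simp [hi]))

lemma Good.off (h : Good B C) {e x : R} (he : e ∈ B) (hee : e * e = e) (hx : x ∈ B)
    (h1 : e * x = x) (h2 : x * e = 0) : x ∈ C := by
  have hxx : x * x = 0 := by
    calc x * x = x * (e * x) := by rw [h1]
      _ = (x * e) * x := by rw [mul_assoc]
      _ = 0 := by rw [h2, zero_mul]
  have : (e + x) - e ∈ C := by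
    apply h.sub _ (h.idem he hee)
    apply h.idem (B.add_mem he hx)
    rw [mul_add, add_mul, add_mul, hee, h1, h2, hxx]; simp
  simpa using this

lemma Good.off' (h : Good B C) {e x : R} (he : e ∈ B) (hee : e * e = e) (hx : x ∈ B)
    (h1 : x * e = x) (h2 : e * x = 0) : x ∈ C := by
  have hxx : x * x = 0 := by
    calc x * x = (x * e) * x := by rw [h1]
      _ = x * (e * x) := by rw [mul_assoc]
      _ = 0 := by rw [h2, mul_zero]
  have : (e + x) - e ∈ C := by
    apply h.sub _ (h.idem he hee)
    apply h.idem (B.add_mem he hx)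
    rw [mul_add, add_mul, add_mul, hee, h1, h2, hxx]; simp
  simpa using this

/-- Peirce decomposition. -/
lemma Good.peirce (h : Good B C) {e x : R} (he : e ∈ B) (hee : e * e = e) (hx : x ∈ B)
    (h1 : e * x * e ∈ C) (h2 : (1 - e) * x * (1 - e) ∈ C) : x ∈ C := by
  have h3 : e * x * (1 - e) ∈ C := by
    apply h.off he hee (B.mul_mem (B.mul_mem he hx) (B.sub_mem B.one_mem he))
    · rw [← mul_assoc, ← mul_assoc, hee]
    · rw [mul_assoc, sub_mul, hee]; simp
  have h4 : (1 - e) * x * e ∈ C := by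
    apply h.off' he hee (B.mul_mem (B.mul_mem (B.sub_mem B.one_mem he) hx) he)
    · rw [mul_assoc, hee]
    · rw [← mul_assoc, ← mul_assoc, mul_sub, hee]; simp
  have := h.add (h.add h1 h2) (h.add h3 h4)
  convert this using 1
  noncomm_ring

/-- Pull back along a homomorphism. -/
lemma Good.pull {R' : Type*} [Ring R'] [Algebra ℂ R'] [TopologicalSpace R'] {B' : Subalgebra ℂ R'}
    (hIG : IG B') (h : Good B C) (f : R' → R) (fadd : ∀ x y, f (x + y) = f x + f y)
    (fsmul : ∀ (c : ℂ) x, f (c • x) = c • f x) (fmul : ∀ x y, f (x * y) = f x * f y)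
    (fcont : Continuous f) (fB : ∀ x ∈ B', f x ∈ B) : ∀ x ∈ B', f x ∈ C := by
  refine hIG (f ⁻¹' C) ⟨?_, ?_, ?_, ?_, ?_⟩
  · intro x y hx hy; simpa [fadd] using h.add hx hy
  · intro c x hx; simpa [fsmul] using h.smul c hx
  · intro x y hx hy; simpa [fmul] using h.mul hx hy
  · intro x hx hxx; exact h.idem (fB x hx) (by rw [← fmul, hxx])
  · intro x hx hxB
    exact h.cl (map_mem_closure fcont hx (fun y hy => hy)) (fB x hxB)

end generic

/-- The Hilbert space of square summable families. -/
noncomputable abbrev L2 (ι : Type*) := lp (fun _ : ι => ℂ) 2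

section ops
variable {ι κ : Type*}

lemma ptwo : (0:ℝ) < (2 : ENNReal).toReal := by norm_num

lemma wop_bound (τ : κ → ι) (c : κ → ℂ) (A : ℝ) (hA : ∀ j, ‖c j‖ ≤ A) (A0 : 0 ≤ A)
    (hτ : ∀ i j, c i ≠ 0 → c j ≠ 0 → τ i = τ j → i = j) (x : L2 ι) (s : Finset κ) :
    ∑ j ∈ s, ‖c j * x (τ j)‖ ^ (2 : ENNReal).toReal ≤ (A * ‖x‖) ^ (2 : ENNReal).toReal := by
  classical
  have h1 : ∑ j ∈ s, ‖c j * x (τ j)‖ ^ (2 : ENNReal).toReal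
      = ∑ j ∈ s.filter (fun j => c j ≠ 0), ‖c j * x (τ j)‖ ^ (2 : ENNReal).toReal := by
    rw [Finset.sum_filter]
    apply Finset.sum_congr rfl
    intro j _
    by_cases h : c j = 0 <;> simp [h]
  rw [h1]
  calc _ ≤ ∑ j ∈ s.filter (fun j => c j ≠ 0),
        A ^ (2 : ENNReal).toReal * ‖x (τ j)‖ ^ (2 : ENNReal).toReal := by
        apply Finset.sum_le_sum
        intro j _
        rw [norm_mul, Real.mul_rpow (norm_nonneg _) (norm_nonneg _)]
        gcongr
        exact hA j
    _ = A ^ (2 : ENNReal).toReal * ∑ i ∈ (s.filter (fun j => c j ≠ 0)).image τ,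
        ‖x i‖ ^ (2 : ENNReal).toReal := by
        rw [Finset.sum_image, Finset.mul_sum]
        intro i hi j hj hij
        simp only [Finset.coe_filter, Set.mem_ofPred_eq] at hi hj
        exact hτ i j hi.2 hj.2 hij
    _ ≤ A ^ (2 : ENNReal).toReal * ‖x‖ ^ (2 : ENNReal).toReal := by
        gcongr
        exact lp.sum_rpow_le_norm_rpow ptwo x _
    _ = _ := by rw [Real.mul_rpow A0 (norm_nonneg _)]

lemma exists_wop (τ : κ → ι) (c : κ → ℂ) (A : ℝ) (hA : ∀ j, ‖c j‖ ≤ A) (A0 : 0 ≤ A)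
    (hτ : ∀ i j, c i ≠ 0 → c j ≠ 0 → τ i = τ j → i = j) :
    ∃ W : L2 ι →L[ℂ] L2 κ, (∀ x j, (W x) j = c j * x (τ j)) ∧ ‖W‖ ≤ A := by
  have hb := wop_bound τ c A hA A0 hτ
  let L : L2 ι →ₗ[ℂ] L2 κ :=
    { toFun := fun x => ⟨fun j => c j * x (τ j), memℓp_gen' (hb x)⟩
      map_add' := by
        intro x y; ext j; simp only [lp.coeFn_add, Pi.add_apply, mul_add]
      map_smul' := by
        intro a x; ext j; simp; ring }
  refine ⟨L.mkContinuous A ?_, ?_, L.mkContinuous_norm_le A0 _⟩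
  · intro x
    exact lp.norm_le_of_forall_sum_le ptwo (by positivity) (hb x)
  · intro x j; rfl

/-- Bounded operators on `L2`. -/
abbrev E (ι : Type*) := L2 ι →L[ℂ] L2 ι

open Classical in
/-- Basis vector. -/
noncomputable def ev (i : ι) : L2 ι := lp.single 2 i 1

lemma ev_self (i : ι) : ev i i = 1 := by simp [ev]
lemma ev_ne {i j : ι} (h : j ≠ i) : ev i j = 0 := by
  simp [ev, h]
open Classical in
lemma ev_apply (i j : ι) : ev i j = if j = i then 1 else 0 := by
  by_cases h : j = i
  · subst h; simp [ev_self]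
  · simp [h, ev_ne]

lemma norm_ev (i : ι) : ‖ev i‖ = 1 := by
  classical
  simp only [ev]; rw [lp.norm_single (by norm_num)]; simp

lemma ext_ev {F : Type*} [NormedAddCommGroup F] [NormedSpace ℂ F] {A B : L2 ι →L[ℂ] F}
    (h : ∀ i, A (ev i) = B (ev i)) : A = B := by
  classical
  apply lp.ext_continuousLinearMap (by norm_num)
  intro i
  ext
  simpa [ev] using h i

lemma ext_mat {A B : L2 ι →L[ℂ] L2 κ}
    (h : ∀ i j, (A (ev i)) j = (B (ev i)) j) : A = B := by
  apply ext_ev; intro i; ext j; exact h i j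

lemma entry_le (A : L2 ι →L[ℂ] L2 κ) (i j) : ‖(A (ev i)) j‖ ≤ ‖A‖ := by
  calc _ ≤ ‖A (ev i)‖ := lp.norm_apply_le_norm (by norm_num) _ _
    _ ≤ ‖A‖ * ‖ev i‖ := A.le_opNorm _
    _ = ‖A‖ := by rw [norm_ev, mul_one]

lemma exists_dg (c : ι → ℂ) (A : ℝ) (hA : ∀ j, ‖c j‖ ≤ A) (A0 : 0 ≤ A) :
    ∃ W : E ι, (∀ x j, (W x) j = c j * x j) ∧ ‖W‖ ≤ A :=
  exists_wop id c A hA A0 (fun _ _ _ _ h => h)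

/-- weights -/
noncomputable def wt (ℓ : ι → ℕ) (i : ι) : ℂ := (1/4 : ℂ) ^ ℓ i

lemma wt_ne (ℓ : ι → ℕ) (i : ι) : wt ℓ i ≠ 0 := by simp [wt]
lemma norm_wt (ℓ : ι → ℕ) (i : ι) : ‖wt ℓ i‖ = (1/4 : ℝ) ^ ℓ i := by simp [wt]
lemma norm_wt_le (ℓ : ι → ℕ) (i : ι) : ‖wt ℓ i‖ ≤ 1 := by
  rw [norm_wt]; exact pow_le_one₀ (by norm_num) (by norm_num)

/-- the diagonal operator -/
noncomputable def Sop (ℓ : ι → ℕ) : E ι := (exists_dg (wt ℓ) 1 (norm_wt_le ℓ) zero_le_one).choose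
lemma Sop_apply (ℓ : ι → ℕ) (x : L2 ι) (i : ι) : (Sop ℓ x) i = wt ℓ i * x i :=
  (exists_dg (wt ℓ) 1 (norm_wt_le ℓ) zero_le_one).choose_spec.1 x i

lemma Sop_ev (ℓ : ι → ℕ) (i : ι) : Sop ℓ (ev i) = wt ℓ i • ev i := by
  ext j
  rw [Sop_apply]
  by_cases h : j = i
  · subst h; simp
  · simp [ev_ne h]

/-- coordinate projection -/
noncomputable def Pr (s : Set ι) : E ι := by
  classical
  exact (exists_dg (fun i : ι => if i ∈ s then (1:ℂ) else 0) 1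
    (by intro j; split_ifs <;> simp) zero_le_one).choose
open Classical in
lemma Pr_apply (s : Set ι) (x : L2 ι) (i : ι) : (Pr s x) i = if i ∈ s then x i else 0 := by
  have := (exists_dg (fun i : ι => if i ∈ s then (1:ℂ) else 0) 1
    (by intro j; split_ifs <;> simp) zero_le_one).choose_spec.1 x i
  rw [Pr, this]; split_ifs <;> simp
open Classical in
lemma Pr_ev (s : Set ι) (i : ι) : Pr s (ev i) = if i ∈ s then ev i else 0 := by
  ext j
  rw [Pr_apply]
  by_cases h : j = i
  · subst h; split_ifs <;> simp
  · simp only [ev_ne h]; split_ifs <;> simp [ev_ne h]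

lemma Pr_Sop (ℓ : ι → ℕ) (s : Set ι) : Pr s * Sop ℓ = Sop ℓ * Pr s := by
  classical
  ext x i
  simp [Pr_apply, Sop_apply]

lemma Pr_mul (s t : Set ι) : Pr s * Pr t = Pr (s ∩ t) := by
  classical
  ext x i
  by_cases h1 : i ∈ s <;> by_cases h2 : i ∈ t <;> simp [Pr_apply, h1, h2]

lemma Pr_empty : Pr (∅ : Set ι) = 0 := by
  classical
  ext x i; simp [Pr_apply]
lemma Pr_univ : Pr (Set.univ : Set ι) = 1 := by
  classical
  ext x i; simp [Pr_apply]
lemma Pr_compl (s : Set ι) : Pr sᶜ = 1 - Pr s := by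
  classical
  ext x i; simp only [Pr_apply, sub_apply, one_apply_eq_self, lp.coeFn_sub, Pi.sub_apply]
  by_cases h : i ∈ s <;> simp [h]

/-- the algebra of intertwining pairs -/
def BS (ℓ : ι → ℕ) : Subalgebra ℂ (E ι × E ι) where
  carrier := {p | p.2 * Sop ℓ = Sop ℓ * p.1}
  mul_mem' := by
    intro p q hp hq
    simp only [Set.mem_ofPred_eq, Prod.fst_mul, Prod.snd_mul] at *
    rw [mul_assoc, hq, ← mul_assoc, hp, mul_assoc]
  add_mem' := by
    intro p q hp hq
    simp only [Set.mem_ofPred_eq, Prod.fst_add, Prod.snd_add] at *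
    rw [add_mul, mul_add, hp, hq]
  algebraMap_mem' := by
    intro r
    simp [Algebra.commutes]

lemma mem_BS {ℓ : ι → ℕ} {p : E ι × E ι} : p ∈ BS ℓ ↔ p.2 * Sop ℓ = Sop ℓ * p.1 := Iff.rfl

lemma mem_BS_iff {ℓ : ι → ℕ} {p : E ι × E ι} :
    p ∈ BS ℓ ↔ ∀ i j, wt ℓ i * (p.2 (ev i)) j = wt ℓ j * (p.1 (ev i)) j := by
  rw [mem_BS]
  constructor
  · intro h i j
    have := congrArg (fun T : E ι => (T (ev i)) j) h
    simpa [Sop_ev, Sop_apply] using this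
  · intro h
    apply ext_mat
    intro i j
    simpa [Sop_ev, Sop_apply] using h i j

lemma Pr_mem (ℓ : ι → ℕ) (s : Set ι) : (Pr s, Pr s) ∈ BS ℓ := Pr_Sop ℓ s

lemma Pr_idem (s : Set ι) : (Pr s, Pr s) * (Pr s, Pr s) = (Pr s, Pr s) := by
  simp [Pr_mul]

end ops
end ZPD

end

section
open scoped Topology

namespace ZPD
section halving
variable {ι κ : Type*}

lemma exists_invol_fib (X : Type*) : ∃ τ : X → X, (∀ i, τ (τ i) = i) ∧
    ∀ i j, τ i = i → τ j = j → i = j := by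
  rcases finite_or_infinite X with hX | hX
  · obtain ⟨n, ⟨e⟩⟩ := Finite.exists_equiv_fin X
    refine ⟨fun i => e.symm (Fin.rev (e i)), by simp, ?_⟩
    intro i j hi hj
    have hi' : Fin.rev (e i) = e i := by rw [← e.symm_apply_eq]; exact hi
    have hj' : Fin.rev (e j) = e j := by rw [← e.symm_apply_eq]; exact hj
    apply e.injective
    ext
    have h1 := congrArg Fin.val hi'
    have h2 := congrArg Fin.val hj'
    simp only [Fin.val_rev] at h1 h2
    omega
  · have : Nonempty (X ≃ X ⊕ X) := by
      rw [← Cardinal.eq]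
      simp [Cardinal.add_eq_self (Cardinal.aleph0_le_mk X)]
    obtain ⟨e⟩ := this
    refine ⟨fun i => e.symm (Sum.swap (e i)), by simp, ?_⟩
    intro i j hi
    exfalso
    have hi' : Sum.swap (e i) = e i := by rw [← e.symm_apply_eq]; exact hi
    rcases h : e i with a | a <;> simp [h] at hi'

lemma exists_invol (ℓ : ι → ℕ) : ∃ τ : ι → ι, (∀ i, τ (τ i) = i) ∧ (∀ i, ℓ (τ i) = ℓ i) ∧
    ∀ i j, τ i = i → τ j = j → ℓ i = ℓ j → i = j := by
  choose t ht1 ht2 using fun n : ℕ => exists_invol_fib {i : ι // ℓ i = n}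
  have key : ∀ n (i : ι) (h : ℓ i = n), (t (ℓ i) ⟨i, rfl⟩ : ι) = t n ⟨i, h⟩ := by
    rintro n i rfl; rfl
  refine ⟨fun i => t (ℓ i) ⟨i, rfl⟩, ?_, ?_, ?_⟩
  · intro i
    dsimp only
    rw [key (ℓ i) _ (t (ℓ i) ⟨i, rfl⟩).2]
    simp [ht1]
  · intro i
    exact (t (ℓ i) ⟨i, rfl⟩).2
  · intro i j hi hj hij
    have h := ht2 (ℓ i) ⟨i, rfl⟩ ⟨j, hij.symm⟩ (Subtype.ext hi)
      (Subtype.ext (by rw [← key]; exact hj))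
    exact congrArg Subtype.val h

lemma exists_corner [Nonempty κ] (f : κ → ι) (hf : Function.Injective f) :
    ∃ (I : L2 κ →L[ℂ] L2 ι) (P : L2 ι →L[ℂ] L2 κ), (∀ x k, (P x) k = x (f k)) ∧
      (∀ x k, (I x) (f k) = x k) ∧ (∀ x j, j ∉ Set.range f → (I x) j = 0) := by
  classical
  obtain ⟨P, hP, -⟩ := exists_wop f (fun _ => (1:ℂ)) 1 (by simp) zero_le_one
    (fun i j _ _ h => hf h)
  obtain ⟨I, hI, -⟩ := exists_wop (Function.invFun f) (fun j => if j ∈ Set.range f then (1:ℂ) else 0)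
    1 (by intro j; split_ifs <;> simp) zero_le_one (by
      intro i j hi hj h
      have hi : i ∈ Set.range f := by by_contra h'; simp [h'] at hi
      have hj : j ∈ Set.range f := by by_contra h'; simp [h'] at hj
      rw [← Function.invFun_eq hi, ← Function.invFun_eq hj, h])
  refine ⟨I, P, by simp [hP], ?_, ?_⟩
  · intro x k
    rw [hI, Function.leftInverse_invFun hf]; simp
  · intro x j hj
    rw [hI]; simp only [hj]; simp

lemma IG_corner [Nonempty κ] (ℓ : ι → ℕ) (f : κ → ι) (hf : Function.Injective f)
    (h : IG (BS (ℓ ∘ f))) {C : Set (E ι × E ι)} (hC : Good (BS ℓ) C) (p : E ι × E ι)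
    (hp : p ∈ BS ℓ) :
    (Pr (Set.range f), Pr (Set.range f)) * p * (Pr (Set.range f), Pr (Set.range f)) ∈ C := by
  classical
  obtain ⟨I, P, hP, hI, hI0⟩ := exists_corner f hf
  have hPI : ∀ x, P (I x) = x := by
    intro x; ext k; rw [hP, hI]
  have hIP : I ∘L P = Pr (Set.range f) := by
    ext x j
    rw [Pr_apply]
    split_ifs with h
    · obtain ⟨k, rfl⟩ := h; simp [hI, hP]
    · simp [hI0 _ _ h]
  have hSI : Sop ℓ ∘L I = I ∘L Sop (ℓ ∘ f) := by
    ext x j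
    by_cases h : j ∈ Set.range f
    · obtain ⟨k, rfl⟩ := h; simp [hI, Sop_apply, wt]
    · simp [hI0 _ _ h, Sop_apply]
  have hPS : P ∘L Sop ℓ = Sop (ℓ ∘ f) ∘L P := by
    ext x k
    simp [hP, Sop_apply, wt]
  have hSI' : ∀ x, Sop ℓ (I x) = I (Sop (ℓ ∘ f) x) := fun x => congrArg (fun T => T x) hSI
  have hPS' : ∀ x, P (Sop ℓ x) = Sop (ℓ ∘ f) (P x) := fun x => congrArg (fun T => T x) hPS
  have key := Good.pull h hC (fun q => ((I ∘L q.1 ∘L P, I ∘L q.2 ∘L P) : E ι × E ι)) (by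
      intro x y; ext <;> simp) (by intro x y; ext <;> simp)
      (by intro x y; ext <;> simp [hPI])
      (by fun_prop) (by
      intro q hq
      rw [mem_BS] at hq ⊢
      have hq' : ∀ x, q.2 (Sop (ℓ ∘ f) x) = Sop (ℓ ∘ f) (q.1 x) :=
        fun x => congrArg (fun T => T x) hq
      apply ContinuousLinearMap.ext
      intro x
      simp [hSI', hPS', hq'])
  have hmem : ((P ∘L p.1 ∘L I, P ∘L p.2 ∘L I) : E κ × E κ) ∈ BS (ℓ ∘ f) := by
    rw [mem_BS] at hp ⊢
    have hq' : ∀ x, p.2 (Sop ℓ x) = Sop ℓ (p.1 x) :=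
        fun x => congrArg (fun T => T x) hp
    apply ContinuousLinearMap.ext
    intro x
    simp [← hSI', ← hPS', hq']
  convert key _ hmem using 1
  rw [← hIP]
  ext <;> simp

lemma IG_of_fixed (ℓ : ι → ℕ) (h : ∀ s : Set ι, Set.InjOn ℓ s → ∀ C, Good (BS ℓ) C → 
    ∀ p ∈ BS ℓ, (Pr s, Pr s) * p * (Pr s, Pr s) ∈ C) : IG (BS ℓ) := by
  classical
  intro C hC p hp
  obtain ⟨τ, h1, h2, h3⟩ := exists_invol ℓ
  let _ : LinearOrder ι := linearOrderOfSTO WellOrderingRel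
  obtain ⟨w, hw, -⟩ := exists_wop τ (fun _ => (1:ℂ)) 1 (by simp) zero_le_one
    (fun i j _ _ h => by rw [← h1 i, ← h1 j, h])
  simp only [one_mul] at hw
  have hw2 : w * w = 1 := by ext x i; simp [hw, h1]
  have hwB : ((w, w) : E ι × E ι) ∈ BS ℓ := by
    rw [mem_BS]; ext x i; simp [hw, Sop_apply, wt, h2]
  set s0 : Set ι := {i | i < τ i} with hs0
  set s1 : Set ι := {i | τ i < i} with hs1
  have hd : s0 ∩ s1 = ∅ := by
    ext i; simp [hs0, hs1]; intro h; exact h.le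
  have hwP : w * Pr s0 = Pr s1 * w := by
    ext x i; simp [hw, Pr_apply, hs0, hs1, h1]
  have hwP' : w * Pr s1 = Pr s0 * w := by
    ext x i; simp [hw, Pr_apply, hs0, hs1, h1]
  -- general corner
  have gen : ∀ a b : Set ι, a ∩ b = ∅ → w * Pr a = Pr b * w →
      (Pr a, Pr a) * p * (Pr a, Pr a) ∈ C := by
    intro a b hab hwab
    have hba : b ∩ a = ∅ := by rw [Set.inter_comm]; exact hab
    have e : (Pr a, Pr a) * p * (Pr a, Pr a) =
        ((Pr a, Pr a) * p * (w, w) * (Pr b, Pr b)) * ((w, w) * (Pr a, Pr a)) := by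
      have : w * Pr a = Pr b * (w * Pr a) := by rw [hwab, ← mul_assoc, Pr_mul]; simp
      have h' : Pr a = w * (Pr b * (w * Pr a)) := by
        rw [← this, ← mul_assoc, hw2, one_mul]
      ext1
      · simp only [Prod.fst_mul, mul_assoc]
        rw [← h']
      · simp only [Prod.snd_mul, mul_assoc]
        rw [← h']
    rw [e]
    have hPa := Pr_mem ℓ a
    have hPb := Pr_mem ℓ b
    apply hC.mul
    · apply hC.off hPa (Pr_idem a)
        ((BS ℓ).mul_mem ((BS ℓ).mul_mem ((BS ℓ).mul_mem hPa hp) hwB) hPb)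
      · simp only [← mul_assoc, Pr_idem]
      · simp only [mul_assoc, Prod.mk_mul_mk, Pr_mul, hba, Pr_empty, mul_zero]
        ext <;> simp
    · apply hC.off' hPa (Pr_idem a) ((BS ℓ).mul_mem hwB hPa)
      · rw [mul_assoc, Pr_idem]
      · simp only [Prod.mk_mul_mk, hwab]
        simp only [← mul_assoc, Pr_mul, hab, Pr_empty, zero_mul]; rfl
  apply hC.peirce (Pr_mem ℓ s0) (Pr_idem s0) hp (gen s0 s1 hd hwP)
  have e0 : (1 : E ι × E ι) - (Pr s0, Pr s0) = (Pr s0ᶜ, Pr s0ᶜ) := by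
    rw [Pr_compl]; rfl
  have e1 : (1 : E ι × E ι) - (Pr s1, Pr s1) = (Pr s1ᶜ, Pr s1ᶜ) := by
    rw [Pr_compl]; rfl
  have i1 : s1 ∩ s0ᶜ = s1 := by
    rw [Set.inter_eq_left]; intro i hi hi'
    have : i ∈ s0 ∩ s1 := ⟨hi', hi⟩
    rw [hd] at this; exact this
  rw [e0]
  apply hC.peirce (Pr_mem ℓ s1) (Pr_idem s1)
    ((BS ℓ).mul_mem ((BS ℓ).mul_mem (Pr_mem ℓ _) hp) (Pr_mem ℓ _))
  · have := gen s1 s0 (by rw [Set.inter_comm]; exact hd) hwP'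
    convert this using 1
    have a1 : ((Pr s1, Pr s1) : E ι × E ι) * (Pr s0ᶜ, Pr s0ᶜ) = (Pr s1, Pr s1) := by
      simp [Pr_mul, i1]
    have a2 : ((Pr s0ᶜ, Pr s0ᶜ) : E ι × E ι) * (Pr s1, Pr s1) = (Pr s1, Pr s1) := by
      simp [Pr_mul, Set.inter_comm _ s1, i1]
    calc _ = ((Pr s1, Pr s1) * (Pr s0ᶜ, Pr s0ᶜ)) * p * ((Pr s0ᶜ, Pr s0ᶜ) * (Pr s1, Pr s1)) := by
          simp only [mul_assoc]
      _ = _ := by rw [a1, a2]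
  · rw [e1]
    have hs : s1ᶜ ∩ s0ᶜ = {i | τ i = i} := by
      ext i; simp only [hs0, hs1, Set.mem_inter_iff, Set.mem_compl_iff, Set.mem_ofPred_eq, not_lt]
      constructor
      · rintro ⟨a, b⟩; exact le_antisymm b a
      · intro h; rw [h]; simp
    have := h {i | τ i = i} (fun i hi j hj hij => h3 i j hi hj hij) C hC p hp
    convert this using 1
    have a1 : ((Pr s1ᶜ, Pr s1ᶜ) : E ι × E ι) * (Pr s0ᶜ, Pr s0ᶜ) = (Pr {i | τ i = i}, Pr {i | τ i = i}) := by
      simp [Pr_mul, hs]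
    have a2 : ((Pr s0ᶜ, Pr s0ᶜ) : E ι × E ι) * (Pr s1ᶜ, Pr s1ᶜ) = (Pr {i | τ i = i}, Pr {i | τ i = i}) := by
      simp [Pr_mul, Set.inter_comm _ s1ᶜ, hs]
    calc _ = ((Pr s1ᶜ, Pr s1ᶜ) * (Pr s0ᶜ, Pr s0ᶜ)) * p * ((Pr s0ᶜ, Pr s0ᶜ) * (Pr s1ᶜ, Pr s1ᶜ)) := by
          simp only [mul_assoc]
      _ = _ := by rw [a1, a2]

end halving
end ZPD

end

section
open scoped Topology

namespace ZPD

lemma dg_mem {ι : Type*} (ℓ : ι → ℕ) {C : Set (E ι × E ι)} (hC : Good (BS ℓ) C) (c : ι → ℂ)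
    (A : ℝ) (hA : ∀ j, ‖c j‖ ≤ A) (D : E ι) (hD : ∀ x j, (D x) j = c j * x j) : (D, D) ∈ C := by
  classical
  apply hC.cl
  swap
  · rw [mem_BS]; ext x i; simp [hD, Sop_apply]; ring
  rw [Metric.mem_closure_iff]
  intro ε hε
  obtain ⟨t, -, htf, htc⟩ := finite_cover_balls_of_compact (isCompact_closedBall (0:ℂ) A)
    (half_pos hε)
  have hg : ∀ i, ∃ a ∈ t, ‖c i - a‖ < ε / 2 := by
    intro i
    have : c i ∈ Metric.closedBall (0:ℂ) A := by simpa using hA i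
    have := htc this
    simp only [Set.mem_iUnion, Metric.mem_ball, dist_eq_norm, exists_prop] at this
    exact this
  choose g hg1 hg2 using hg
  set D' : E ι := ∑ a ∈ htf.toFinset, a • Pr {i | g i = a} with hD'
  have happly : ∀ x j, (D' x) j = g j * x j := by
    intro x j
    have : (D' x) j = ∑ a ∈ htf.toFinset, a * (Pr {i | g i = a} x) j := by
      have h := map_sum (lp.evalCLM ℂ (fun _ : ι => ℂ) 2 j) (fun a => (a • Pr {i | g i = a} : E ι) x)
        htf.toFinset
      simp only [hD', sum_apply]
      exact h
    rw [this, Finset.sum_eq_single (g j)]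
    · rw [Pr_apply]; simp
    · intro b _ hb; rw [Pr_apply]; simp [hb.symm]
    · intro h; exact absurd (htf.mem_toFinset.2 (hg1 j)) h
  refine ⟨(D', D'), ?_, ?_⟩
  · have : ((D', D') : E ι × E ι) = ∑ a ∈ htf.toFinset, a • (Pr {i | g i = a}, Pr {i | g i = a}) := by
      rw [hD']; ext1 <;> simp [Prod.fst_sum, Prod.snd_sum]
    rw [this]
    exact hC.sum _ _ fun a _ => hC.smul _ (hC.idem (Pr_mem ℓ _) (Pr_idem _))
  · obtain ⟨W, hW, hWn⟩ := exists_dg (fun i => c i - g i) (ε/2) (fun i => (hg2 i).le) (by positivity)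
    have : D - D' = W := by
      ext x i; simp [hD, happly, hW, sub_mul]
    have h2 : dist D D' < ε := by
      rw [dist_eq_norm, this]; linarith
    rw [Prod.dist_eq]; exact max_lt h2 h2

lemma exists_schur (y : ℕ → ℕ → ℂ) (c : ℝ) (hc : 0 ≤ c)
    (hy : ∀ n m : ℕ, ‖y n m‖ ≤ c * (1/4) ^ ((m:ℤ) - n).natAbs) :
    ∃ Y : E ℕ, ∀ m n, (Y (ev m)) n = y n m := by
  classical
  have hW : ∀ k : ℤ, ∃ W : E ℕ, (∀ x j, (W x) j = (if 0 ≤ (j:ℤ) + k then y j (((j:ℤ) + k).toNat) else 0)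
      * x (((j:ℤ) + k).toNat)) ∧ ‖W‖ ≤ c * (1/4) ^ k.natAbs := by
    intro k
    apply exists_wop (fun j : ℕ => ((j:ℤ) + k).toNat)
      (fun j : ℕ => if 0 ≤ (j:ℤ) + k then y j (((j:ℤ) + k).toNat) else 0)
    · intro j
      split_ifs with h
      · refine (hy _ _).trans_eq ?_
        congr 2
        rw [Int.toNat_of_nonneg h]; congr 1; ring
      · simp; positivity
    · positivity
    · intro i j hi hj hij
      have hi : 0 ≤ (i:ℤ) + k := by by_contra h; simp [h] at hi
      have hj : 0 ≤ (j:ℤ) + k := by by_contra h; simp [h] at hj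
      omega
  choose W hW hWn using hW
  have hsum : Summable (fun k : ℤ => c * (1/4 : ℝ) ^ k.natAbs) := by
    apply Summable.mul_left
    have h0 : Summable (fun k : ℕ => (1/4 : ℝ) ^ k) :=
      summable_geometric_of_lt_one (by norm_num) (by norm_num)
    apply Summable.of_nat_of_neg <;> simpa using h0
  have hsW : Summable W := Summable.of_norm_bounded hsum hWn
  refine ⟨∑' k, W k, ?_⟩
  intro m n
  let T : E ℕ →L[ℂ] ℂ := (lp.evalCLM ℂ (fun _ : ℕ => ℂ) 2 n) ∘L
    (ContinuousLinearMap.apply ℂ (L2 ℕ) (ev m : L2 ℕ))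
  have hT : ∀ A : E ℕ, T A = (A (ev m)) n := fun A => rfl
  rw [← hT, T.map_tsum hsW, tsum_eq_single ((m:ℤ) - n)]
  · rw [hT, hW]
    simp [ev_self]
  · intro k hk
    rw [hT, hW]
    by_cases h : 0 ≤ (n:ℤ) + k
    · have : ((n:ℤ) + k).toNat ≠ m := by omega
      rw [ev_ne this, mul_zero]
    · simp [h]

/-- shift down -/
lemma exists_down (c : ℕ → ℂ) (hc : ∀ k, ‖c k‖ ≤ 1) : ∃ U : E ℕ, (∀ x k, (U x) k = c k * x (k+1)) ∧
    U (ev 0) = 0 ∧ ∀ m, U (ev (m+1)) = c m • ev m := by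
  obtain ⟨U, hU, -⟩ := exists_wop (fun k : ℕ => k+1) c 1 hc zero_le_one (by
    intro i j _ _ h; simpa using h)
  refine ⟨U, hU, ?_, ?_⟩
  · ext k; rw [hU, ev_ne (by omega)]; simp
  · intro m; ext k; rw [hU]
    by_cases h : k = m
    · subst h; simp [ev_self]
    · simp [ev_ne h, ev_ne (show k + 1 ≠ m + 1 by omega)]

/-- shift up -/
lemma exists_up (c : ℕ → ℂ) (hc : ∀ k, ‖c k‖ ≤ 1) : ∃ V : E ℕ, (∀ x, (V x) 0 = 0) ∧
    (∀ x k, (V x) (k+1) = c k * x k) ∧ ∀ m, V (ev m) = c m • ev (m+1) := by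
  obtain ⟨V, hV, -⟩ := exists_wop (fun k : ℕ => k-1) (fun k => if k = 0 then 0 else c (k-1)) 1
    (by intro k; split_ifs <;> simp [hc]) zero_le_one (by
    intro i j hi hj h
    have : i ≠ 0 := by rintro rfl; simp at hi
    have : j ≠ 0 := by rintro rfl; simp at hj
    omega)
  have h0 : ∀ x, (V x) 0 = 0 := by intro x; rw [hV]; simp
  have h1 : ∀ x k, (V x) (k+1) = c k * x k := by intro x k; rw [hV]; simp
  refine ⟨V, h0, h1, ?_⟩
  intro m; ext k
  rcases k with _ | k
  · rw [h0]; simp [ev_ne (show 0 ≠ m + 1 by omega)]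
  · rw [h1]
    by_cases h : k = m
    · subst h; simp [ev_self]
    · simp [ev_ne h, ev_ne (show k + 1 ≠ m + 1 by omega)]

lemma wt_ratio {ℓ : ℕ → ℕ} (hℓ : StrictMono ℓ) (n k : ℕ) (h : n ≤ k) :
    ‖wt ℓ k‖ ≤ (1/4) ^ ((k:ℤ) - n).natAbs * ‖wt ℓ n‖ := by
  rw [norm_wt, norm_wt, ← pow_add]
  apply pow_le_pow_of_le_one (by norm_num) (by norm_num)
  have : ∀ d, ℓ n + d ≤ ℓ (n + d) := by
    intro d
    induction d with
    | zero => simp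
    | succ d ih =>
      have := hℓ (show n + d < n + (d + 1) by omega)
      omega
  have := this (k - n)
  rw [Nat.add_sub_cancel' h] at this
  omega

end ZPD

end

section
open scoped Topology

namespace ZPD

section lac
variable {ℓ : ℕ → ℕ} (hℓ : StrictMono ℓ) {C : Set (E ℕ × E ℕ)} (hC : Good (BS ℓ) C)
  {J : Set ℕ} (hJ : ∀ k, k ∈ J → k + 1 ∉ J)

lemma norm_wt_pos {ι : Type*} (ℓ : ι → ℕ) (i : ι) : 0 < ‖wt ℓ i‖ := norm_pos_iff.2 (wt_ne ℓ i)

include hℓ in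
lemma wt_div_le (n k : ℕ) (h : n ≤ k) : ‖wt ℓ k / wt ℓ n‖ ≤ (1/4) ^ ((k:ℤ) - n).natAbs := by
  rw [norm_div, div_le_iff₀ (norm_wt_pos ℓ n)]
  exact wt_ratio hℓ n k h

include hℓ in
lemma wt_div_le_one (n k : ℕ) (h : n ≤ k) : ‖wt ℓ k / wt ℓ n‖ ≤ 1 :=
  (wt_div_le hℓ n k h).trans (pow_le_one₀ (by norm_num) (by norm_num))

include hℓ hC hJ in
lemma upper_mem (p : E ℕ × E ℕ) (hp : p ∈ BS ℓ)
    (h1 : ∀ n m, ¬ (n < m ∧ n ∈ J ∧ m ∈ J) → (p.1 (ev m)) n = 0) : p ∈ C := by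
  classical
  have hpe := mem_BS_iff.1 hp
  have h2 : ∀ n m, ¬ (n < m ∧ n ∈ J ∧ m ∈ J) → (p.2 (ev m)) n = 0 := by
    intro n m h
    have := hpe m n
    rw [h1 n m h, mul_zero] at this
    exact (mul_eq_zero.1 this).resolve_left (wt_ne _ _)
  let χ : ℕ → ℂ := fun k => if k + 1 ∈ J then 1 else 0
  have hχ : ∀ k, ‖χ k‖ ≤ 1 := by intro k; simp only [χ]; split_ifs <;> simp
  have hχ0 : ∀ k, k ∈ J → χ k = 0 := by intro k hk; simp [χ, hJ k hk]
  have hχ1 : ∀ k n, χ k * (p.1 (ev (k+1))) n = (p.1 (ev (k+1))) n := by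
    intro k n
    by_cases h : k + 1 ∈ J
    · simp [χ, h]
    · rw [h1]; simp; tauto
  have hχ2 : ∀ k n, χ k * (p.2 (ev (k+1))) n = (p.2 (ev (k+1))) n := by
    intro k n
    by_cases h : k + 1 ∈ J
    · simp [χ, h]
    · rw [h2]; simp; tauto
  obtain ⟨uz, huz, huz0, huz1⟩ := exists_down (fun k => χ k * (wt ℓ (k+1) / wt ℓ k)) (by
    intro k; rw [norm_mul]
    exact mul_le_one₀ (hχ k) (norm_nonneg _) (wt_div_le_one hℓ _ _ (by omega)))
  obtain ⟨ud, hud, hud0, hud1⟩ := exists_down χ hχ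
  obtain ⟨V, -, -, hV⟩ := exists_up χ hχ
  obtain ⟨qz, hqz⟩ := exists_schur (fun n k => χ k * (p.1 (ev (k+1))) n * (wt ℓ k / wt ℓ (k+1)))
    ‖p.2‖ (norm_nonneg _) (by
      intro n k
      rw [hχ1]
      by_cases h : n < k + 1
      · have e : (p.1 (ev (k+1))) n * (wt ℓ k / wt ℓ (k+1)) =
          (p.2 (ev (k+1))) n * (wt ℓ k / wt ℓ n) := by
          have := hpe (k+1) n
          field_simp [wt_ne]
          linear_combination (-1:ℂ) * this
        rw [e, norm_mul]
        gcongr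
        · exact entry_le _ _ _
        · exact wt_div_le hℓ n k (by omega)
      · rw [h1 _ _ (by tauto)]; simp)
  have hqd : ∀ k n, ((p.2 * V) (ev k)) n = χ k * (p.2 (ev (k+1))) n := by
    intro k n; simp [hV]
  have hu : (uz, ud) ∈ C := by
    refine hC.off' (Pr_mem ℓ J) (Pr_idem J) ?_ ?_ ?_
    · rw [mem_BS_iff]
      intro i j
      rcases i with _ | m
      · simp [huz0, hud0]
      · simp only [huz1, hud1]
        by_cases h : j = m
        · subst h; simp [ev_self]; field_simp [wt_ne]
        · simp [ev_ne h]
    · ext1 <;> apply ext_ev <;> intro m <;> rcases m with _ | m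
      · simp only [Prod.fst_mul, mul_apply_eq_comp, Pr_ev]; split_ifs <;> simp [huz0]
      · simp only [Prod.fst_mul, mul_apply_eq_comp, Pr_ev]; split_ifs with h <;> simp [huz1, χ, h]
      · simp only [Prod.snd_mul, mul_apply_eq_comp, Pr_ev]; split_ifs <;> simp [hud0]
      · simp only [Prod.snd_mul, mul_apply_eq_comp, Pr_ev]; split_ifs with h <;> simp [hud1, χ, h]
    · ext1 <;> ext x k
      · simp only [Prod.fst_mul, mul_apply_eq_comp, Pr_apply]; split_ifs with h <;> simp [huz, hχ0, h]
      · simp only [Prod.snd_mul, mul_apply_eq_comp, Pr_apply]; split_ifs with h <;> simp [hud, hχ0, h]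
  have hq : (qz, p.2 * V) ∈ C := by
    refine hC.off (Pr_mem ℓ J) (Pr_idem J) ?_ ?_ ?_
    · rw [mem_BS_iff]
      intro k n
      dsimp only
      rw [hqd, hqz]
      have := hpe (k+1) n
      field_simp [wt_ne]
      linear_combination (χ k) * this
    · ext1 <;> apply ext_mat <;> intro m n
      · simp only [Prod.fst_mul, mul_apply_eq_comp, Pr_apply]
        split_ifs with h
        · rfl
        · rw [hqz, h1 _ _ (by tauto)]; simp
      · simp only [Prod.snd_mul]
        rw [mul_apply_eq_comp, Pr_apply]
        split_ifs with h
        · rfl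
        · rw [hqd, h2 _ _ (by tauto)]; simp
    · ext1 <;> apply ext_mat <;> intro m n
      · simp only [Prod.fst_mul, mul_apply_eq_comp, Pr_ev]
        split_ifs with h
        · rw [hqz, hχ0 _ h]; simp
        · simp
      · simp only [Prod.snd_mul]
        rw [mul_apply_eq_comp, Pr_ev]
        split_ifs with h
        · rw [hqd, hχ0 _ h]; simp
        · simp
  convert hC.mul hq hu using 1
  ext1 <;> apply ext_mat <;> intro m n <;> rcases m with _ | m
  · rw [h1 _ _ (by omega)]; simp [huz0]
  · simp [huz1, hqz, hχ1]
    field_simp [wt_ne]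
    rw [mul_comm, hχ1]
  · rw [h2 _ _ (by omega)]; simp [hud0]
  · simp only [Prod.snd_mul]
    rw [mul_apply_eq_comp, hud1]
    simp only [map_smul, lp.coeFn_smul, Pi.smul_apply, smul_eq_mul]
    rw [hqd, hχ2, hχ2]

include hℓ hC hJ in
lemma lower_mem (p : E ℕ × E ℕ) (hp : p ∈ BS ℓ)
    (h1 : ∀ n m, ¬ (m < n ∧ n ∈ J ∧ m ∈ J) → (p.1 (ev m)) n = 0) : p ∈ C := by
  classical
  have hpe := mem_BS_iff.1 hp
  have h2 : ∀ n m, ¬ (m < n ∧ n ∈ J ∧ m ∈ J) → (p.2 (ev m)) n = 0 := by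
    intro n m h
    have := hpe m n
    rw [h1 n m h, mul_zero] at this
    exact (mul_eq_zero.1 this).resolve_left (wt_ne _ _)
  let χ : ℕ → ℂ := fun k => if k + 1 ∈ J then 1 else 0
  have hχ : ∀ k, ‖χ k‖ ≤ 1 := by intro k; simp only [χ]; split_ifs <;> simp
  have hχ0 : ∀ k, k ∈ J → χ k = 0 := by intro k hk; simp [χ, hJ k hk]
  have hχ1 : ∀ k n, χ k * (p.1 (ev n)) (k+1) = (p.1 (ev n)) (k+1) := by
    intro k n
    by_cases h : k + 1 ∈ J
    · simp [χ, h]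
    · rw [h1]; simp; tauto
  obtain ⟨ud, hud0, hud, hud1⟩ := exists_up (fun k => χ k * (wt ℓ (k+1) / wt ℓ k)) (by
    intro k; rw [norm_mul]
    exact mul_le_one₀ (hχ k) (norm_nonneg _) (wt_div_le_one hℓ _ _ (by omega)))
  obtain ⟨uz, huz0, huz, huz1⟩ := exists_up χ hχ
  obtain ⟨V, hV, -⟩ := exists_down χ hχ
  obtain ⟨qd, hqd⟩ := exists_schur (fun k m => (wt ℓ k / wt ℓ m) * (χ k * (p.1 (ev m)) (k+1)))
    ‖p.1‖ (norm_nonneg _) (by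
      intro k m
      rw [hχ1]
      by_cases h : m < k + 1
      · rw [norm_mul, mul_comm]
        gcongr
        · exact entry_le _ _ _
        · refine (wt_div_le hℓ m k (by omega)).trans_eq ?_
          rw [← Int.natAbs_neg]; congr 2; ring
      · rw [h1 _ _ (by tauto)]; simp)
  have hqz : ∀ m k, ((V * p.1) (ev m)) k = χ k * (p.1 (ev m)) (k+1) := by
    intro m k; simp [hV]
  have hu : (uz, ud) ∈ C := by
    refine hC.off (Pr_mem ℓ J) (Pr_idem J) ?_ ?_ ?_
    · rw [mem_BS_iff]
      intro i j
      simp only [huz1, hud1]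
      by_cases h : j = i + 1
      · subst h; simp [ev_self]; field_simp [wt_ne]
      · simp [ev_ne h]
    · ext1 <;> ext x k <;> rcases k with _ | k
      · simp only [Prod.fst_mul, mul_apply_eq_comp, Pr_apply]; split_ifs with h <;> simp [huz0]
      · simp only [Prod.fst_mul, mul_apply_eq_comp, Pr_apply]; split_ifs with h <;> simp [huz, χ, h]
      · simp only [Prod.snd_mul, mul_apply_eq_comp, Pr_apply]; split_ifs with h <;> simp [hud0]
      · simp only [Prod.snd_mul, mul_apply_eq_comp, Pr_apply]; split_ifs with h <;> simp [hud, χ, h]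
    · ext1 <;> apply ext_ev <;> intro m
      · simp only [Prod.fst_mul, mul_apply_eq_comp, Pr_ev]; split_ifs with h <;> simp [huz1, hχ0, h]
      · simp only [Prod.snd_mul, mul_apply_eq_comp, Pr_ev]; split_ifs with h <;> simp [hud1, hχ0, h]
  have hq : (V * p.1, qd) ∈ C := by
    refine hC.off' (Pr_mem ℓ J) (Pr_idem J) ?_ ?_ ?_
    · rw [mem_BS_iff]
      intro k n
      dsimp only
      rw [hqd, hqz]
      field_simp [wt_ne]
    · ext1 <;> apply ext_mat <;> intro m n
      · simp only [Prod.fst_mul]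
        rw [mul_apply_eq_comp, Pr_ev]
        split_ifs with h
        · rfl
        · rw [hqz, h1 _ _ (by tauto)]; simp
      · simp only [Prod.snd_mul]
        rw [mul_apply_eq_comp, Pr_ev]
        split_ifs with h
        · rfl
        · rw [hqd, h1 _ _ (by tauto)]; simp
    · ext1 <;> apply ext_mat <;> intro m n
      · simp only [Prod.fst_mul]
        rw [mul_apply_eq_comp, Pr_apply]
        split_ifs with h
        · rw [hqz, hχ0 _ h]; simp
        · simp
      · simp only [Prod.snd_mul]
        rw [mul_apply_eq_comp, Pr_apply]
        split_ifs with h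
        · rw [hqd, hχ0 _ h]; simp
        · simp
  convert hC.mul hu hq using 1
  ext1 <;> apply ext_mat <;> intro m n <;> rcases n with _ | n
  · rw [h1 _ _ (by omega)]; simp [huz0]
  · simp only [Prod.fst_mul]
    rw [mul_apply_eq_comp, huz, hqz, hχ1, hχ1]
  · rw [h2 _ _ (by omega)]; simp [hud0]
  · simp only [Prod.snd_mul]
    rw [mul_apply_eq_comp, hud, hqd, hχ1]
    have := hpe m (n+1)
    rw [← hχ1] at this
    field_simp [wt_ne]
    linear_combination this

include hℓ hC hJ in
lemma sparse_mem (p : E ℕ × E ℕ) (hp : p ∈ BS ℓ)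
    (h1 : ∀ n m, ¬ (n ∈ J ∧ m ∈ J) → (p.1 (ev m)) n = 0) : p ∈ C := by
  classical
  have hpe := mem_BS_iff.1 hp
  obtain ⟨Δ, hΔ, -⟩ := exists_dg (fun n => (p.1 (ev n)) n) ‖p.1‖ (fun n => entry_le _ _ _)
    (norm_nonneg _)
  have hΔC : (Δ, Δ) ∈ C := dg_mem ℓ hC _ ‖p.1‖ (fun n => entry_le p.1 n n) Δ hΔ
  have hdiag : ∀ n, (p.2 (ev n)) n = (p.1 (ev n)) n := by
    intro n; exact mul_left_cancel₀ (wt_ne _ _) (hpe n n)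
  have hΔe : ∀ m n, (Δ (ev m)) n = if n = m then (p.1 (ev m)) m else 0 := by
    intro m n; rw [hΔ, ev_apply]; split_ifs with h
    · subst h; simp
    · simp
  obtain ⟨zU, hzU⟩ := exists_schur (fun n m => if n < m then (p.1 (ev m)) n else 0) ‖p.2‖
    (norm_nonneg _) (by
      intro n m
      split_ifs with h
      · have e : (p.1 (ev m)) n = (p.2 (ev m)) n * (wt ℓ m / wt ℓ n) := by
          have := hpe m n
          field_simp [wt_ne]
          linear_combination -this
        rw [e, norm_mul]
        gcongr
        · exact entry_le _ _ _
        · exact wt_div_le hℓ n m h.le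
      · simp)
  obtain ⟨dL, hdL⟩ := exists_schur (fun n m => if m < n then (p.2 (ev m)) n else 0) ‖p.1‖
    (norm_nonneg _) (by
      intro n m
      split_ifs with h
      · have e : (p.2 (ev m)) n = (p.1 (ev m)) n * (wt ℓ n / wt ℓ m) := by
          have := hpe m n
          field_simp [wt_ne]
          linear_combination this
        rw [e, norm_mul]
        gcongr
        · exact entry_le _ _ _
        · refine (wt_div_le hℓ m n h.le).trans_eq ?_
          rw [← Int.natAbs_neg]; congr 2; ring
      · simp)
  have hUd : ∀ m n, ((p.2 - Δ - dL) (ev m)) n = if n < m then (p.2 (ev m)) n else 0 := by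
    intro m n
    simp only [sub_apply, lp.coeFn_sub, Pi.sub_apply, hΔe, hdL]
    rcases lt_trichotomy n m with h | h | h
    · simp [h, h.ne, h.not_gt]
    · subst h; simp [hdiag]
    · simp [h, h.ne', h.not_gt]
  have hLz : ∀ m n, ((p.1 - Δ - zU) (ev m)) n = if m < n then (p.1 (ev m)) n else 0 := by
    intro m n
    simp only [sub_apply, lp.coeFn_sub, Pi.sub_apply, hΔe, hzU]
    rcases lt_trichotomy n m with h | h | h
    · simp [h, h.ne, h.not_gt]
    · subst h; simp
    · simp [h, h.ne', h.not_gt]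
  have hU : (zU, p.2 - Δ - dL) ∈ C := by
    apply upper_mem hℓ hC hJ
    · rw [mem_BS_iff]; intro m n; dsimp only; rw [hUd, hzU]
      split_ifs <;> simp [hpe]
    · intro n m h; dsimp only; rw [hzU]
      split_ifs with h'
      · exact h1 _ _ (by tauto)
      · rfl
  have hL : (p.1 - Δ - zU, dL) ∈ C := by
    apply lower_mem hℓ hC hJ
    · rw [mem_BS_iff]; intro m n; dsimp only; rw [hLz, hdL]
      split_ifs <;> simp [hpe]
    · intro n m h; dsimp only; rw [hLz]
      split_ifs with h'
      · exact h1 _ _ (by tauto)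
      · rfl
  convert hC.add hΔC (hC.add hU hL) using 1
  ext1
  · simp
  · simp

end lac

lemma IG_lac {ℓ : ℕ → ℕ} (hℓ : StrictMono ℓ) : IG (BS ℓ) := by
  classical
  intro C hC p hp
  have key : ∀ s : Set ℕ, (∀ k, k ∈ s → k + 1 ∉ s) → (Pr s, Pr s) * p * (Pr s, Pr s) ∈ C := by
    intro s hs
    apply sparse_mem hℓ hC hs
    · exact (BS ℓ).mul_mem ((BS ℓ).mul_mem (Pr_mem ℓ s) hp) (Pr_mem ℓ s)
    · intro n m h
      simp only [Prod.fst_mul, mul_apply_eq_comp, Pr_apply, Pr_ev]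
      by_cases h1 : m ∈ s
      · have : n ∉ s := by tauto
        simp [this]
      · simp [h1]
  apply hC.peirce (Pr_mem ℓ {k | Even k}) (Pr_idem _) hp
  · apply key
    intro k hk
    simp only [Set.mem_ofPred_eq] at *
    intro h; rw [Nat.even_add_one] at h; exact h hk
  · have : (1 : E ℕ × E ℕ) - (Pr {k | Even k}, Pr {k | Even k}) = (Pr {k | Even k}ᶜ, Pr {k | Even k}ᶜ) := by
      rw [Pr_compl]; rfl
    rw [this]
    apply key
    intro k hk
    simp only [Set.mem_ofPred_eq, Set.mem_compl_iff] at *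
    rw [Nat.even_add_one]; tauto

end ZPD

end

section
open scoped Topology

namespace ZPD
variable {ι : Type*}

lemma exists_enum (ℓ : ι → ℕ) (s : Set ι) (hs : Set.InjOn ℓ s) (hinf : s.Infinite) :
    ∃ f : ℕ → ι, Function.Injective f ∧ Set.range f = s ∧ StrictMono (ℓ ∘ f) := by
  classical
  have hT : (Set.ofPred (fun n => n ∈ ℓ '' s)).Infinite := hinf.image hs
  have h1 : ∀ n, Nat.nth (fun n => n ∈ ℓ '' s) n ∈ ℓ '' s := fun n => Nat.nth_mem_of_infinite hT n
  choose f hf1 hf2 using h1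
  have hmono : StrictMono (ℓ ∘ f) := by
    have : ℓ ∘ f = Nat.nth (fun n => n ∈ ℓ '' s) := by ext n; exact hf2 n
    rw [this]; exact Nat.nth_strictMono hT
  refine ⟨f, Function.Injective.of_comp hmono.injective, ?_, hmono⟩
  ext i
  constructor
  · rintro ⟨n, rfl⟩; exact hf1 n
  · intro hi
    have : ℓ i ∈ Set.range (Nat.nth (fun n => n ∈ ℓ '' s)) := by
      rw [Nat.range_nth_of_infinite hT]; exact ⟨i, hi, rfl⟩
    obtain ⟨n, hn⟩ := this
    exact ⟨n, hs (hf1 n) hi (by rw [hf2, hn])⟩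

lemma Pr_finset (s : Finset ι) : Pr (s : Set ι) = ∑ i ∈ s, Pr {i} := by
  classical
  induction s using Finset.induction_on with
  | empty => simp [Pr_empty]
  | insert a s ha ih =>
    rw [Finset.sum_insert ha, ← ih]
    ext x j
    simp only [add_apply, lp.coeFn_add, Pi.add_apply, Pr_apply, Finset.coe_insert, Set.mem_insert_iff,
      Set.mem_singleton_iff, Finset.mem_coe]
    by_cases h : j = a
    · subst h; simp [ha]
    · simp [h]

lemma Pr_single_mul (A : E ι) (i : ι) : Pr {i} * A * Pr {i} = (A (ev i)) i • Pr {i} := by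
  classical
  apply ext_mat
  intro m n
  by_cases h1 : m = i <;> by_cases h2 : n = i <;> simp [Pr_ev, Pr_apply, h1, h2, ev_apply]

lemma fin_corner (ℓ : ι → ℕ) (s : Finset ι) {C : Set (E ι × E ι)} (hC : Good (BS ℓ) C)
    (p : E ι × E ι) (hp : p ∈ BS ℓ) :
    (Pr (s : Set ι), Pr (s : Set ι)) * p * (Pr (s : Set ι), Pr (s : Set ι)) ∈ C := by
  classical
  have e : (Pr (s : Set ι), Pr (s : Set ι)) = ∑ i ∈ s, ((Pr {i}, Pr {i}) : E ι × E ι) := by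
    ext1 <;> simp [Prod.fst_sum, Prod.snd_sum, Pr_finset]
  rw [e, Finset.sum_mul, Finset.sum_mul]
  refine hC.sum _ _ fun i _ => ?_
  rw [Finset.mul_sum]
  refine hC.sum _ _ fun j _ => ?_
  by_cases h : i = j
  · subst h
    have : ((Pr {i}, Pr {i}) : E ι × E ι) * p * (Pr {i}, Pr {i}) = (p.1 (ev i)) i • (Pr {i}, Pr {i}) := by
      have hd : (p.2 (ev i)) i = (p.1 (ev i)) i :=
        mul_left_cancel₀ (wt_ne ℓ i) (mem_BS_iff.1 hp i i)
      ext1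
      · simp [Pr_single_mul]
      · simp [Pr_single_mul, hd]
    rw [this]
    exact hC.smul _ (hC.idem (Pr_mem ℓ _) (Pr_idem _))
  · apply hC.off (Pr_mem ℓ {i}) (Pr_idem _)
      ((BS ℓ).mul_mem ((BS ℓ).mul_mem (Pr_mem ℓ {i}) hp) (Pr_mem ℓ {j}))
    · rw [← mul_assoc, ← mul_assoc, Pr_idem]
    · rw [mul_assoc]
      have : ((Pr {j}, Pr {j}) : E ι × E ι) * (Pr {i}, Pr {i}) = 0 := by
        have : ({j} : Set ι) ∩ {i} = ∅ := by ext x; simp; rintro rfl; exact fun h' => h h'.symm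
        ext1 <;> simp [Pr_mul, this, Pr_empty]
      rw [this, mul_zero]

theorem IG_BS (ℓ : ι → ℕ) : IG (BS ℓ) := by
  apply IG_of_fixed
  intro s hs C hC p hp
  by_cases hfin : s.Finite
  · have := fin_corner ℓ hfin.toFinset hC p hp
    simpa using this
  · obtain ⟨f, hf, rfl, hmono⟩ := exists_enum ℓ s hs hfin
    exact IG_corner ℓ f hf (IG_lac hmono) hC p hp

end ZPD

end

section
open scoped Topology

namespace ZPD
variable {ι : Type*}

lemma Pr_union (s t : Set ι) (h : Disjoint s t) : Pr (s ∪ t) = Pr s + Pr t := by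
  classical
  ext x j
  simp only [add_apply, lp.coeFn_add, Pi.add_apply, Pr_apply, Set.mem_union]
  by_cases h1 : j ∈ s
  · have : j ∉ t := Set.disjoint_left.1 h h1
    simp [h1, this]
  · simp [h1]

/-- Properties of the set of off-diagonal entries. -/
structure BGood (ℓ : ι → ℕ) (D : Set (E ι)) : Prop where
  add : ∀ {x y}, x ∈ D → y ∈ D → x + y ∈ D
  smul : ∀ (c : ℂ) {x}, x ∈ D → c • x ∈ D
  off : ∀ s b, Pr s * b * Pr sᶜ ∈ D
  sing : ∀ i, Pr {i} ∈ D
  mul : ∀ {b} {p : E ι × E ι}, b ∈ D → p ∈ BS ℓ → b * p.2 ∈ D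

variable {ℓ : ι → ℕ} {D : Set (E ι)} (hD : BGood ℓ D)

include hD in
lemma BGood.off2 (s t : Set ι) (h : Disjoint s t) (b : E ι) : Pr s * b * Pr t ∈ D := by
  have := hD.off s (b * Pr t)
  have e : t ∩ sᶜ = t := by
    rw [Set.inter_eq_left]; exact fun x hx hs => Set.disjoint_left.1 h hs hx
  rw [mul_assoc, mul_assoc, Pr_mul, e, ← mul_assoc] at this
  exact this

include hD in
lemma BGood.union (s t : Set ι) (h : Disjoint s t) (hs : ∀ b, Pr s * b * Pr s ∈ D)
    (ht : ∀ b, Pr t * b * Pr t ∈ D) (b : E ι) : Pr (s ∪ t) * b * Pr (s ∪ t) ∈ D := by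
  rw [Pr_union s t h]
  have := hD.add (hD.add (hs b) (ht b)) (hD.add (hD.off2 s t h b) (hD.off2 t s h.symm b))
  convert this using 1
  noncomm_ring

include hD in
lemma BGood.shift (a : Set ι) (g : ι → ι) (hg : Set.InjOn g a) (hga : ∀ i ∈ a, g i ∉ a)
    (hl : ∀ i ∈ a, ℓ (g i) ≤ ℓ i) (b : E ι) : Pr a * b * Pr a ∈ D := by
  classical
  rcases a.eq_empty_or_nonempty with rfl | ⟨i0, hi0⟩
  · have := hD.smul 0 (hD.off ∅ b)
    simpa [Pr_empty] using this
  have : Nonempty ι := ⟨i0⟩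
  let h := Function.invFunOn g a
  have hh : ∀ i ∈ a, h (g i) = i := fun i hi => hg.leftInvOn_invFunOn hi
  have hinj : ∀ i j, i ∈ g '' a → j ∈ g '' a → h i = h j → i = j := by
    rintro _ _ ⟨i, hi, rfl⟩ ⟨j, hj, rfl⟩ e
    rw [hh i hi, hh j hj] at e; rw [e]
  obtain ⟨d, hd, -⟩ := exists_wop h (fun j => if j ∈ g '' a then (1:ℂ) else 0) 1
    (by intro j; split_ifs <;> simp) zero_le_one (by
      intro i j hi hj e
      exact hinj i j (by by_contra h'; simp [h'] at hi) (by by_contra h'; simp [h'] at hj) e)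
  obtain ⟨z, hz, -⟩ := exists_wop h (fun j => if j ∈ g '' a then wt ℓ (h j) / wt ℓ j else 0) 1
    (by
      intro j; split_ifs with hj
      · obtain ⟨i, hi, rfl⟩ := hj
        rw [hh i hi, norm_div, div_le_one (norm_wt_pos _ _), norm_wt, norm_wt]
        exact pow_le_pow_of_le_one (by norm_num) (by norm_num) (hl i hi)
      · simp) zero_le_one (by
      intro i j hi hj e
      exact hinj i j (by by_contra h'; simp [h'] at hi) (by by_contra h'; simp [h'] at hj) e)
  obtain ⟨v, hv, -⟩ := exists_wop g (fun j => if j ∈ a then (1:ℂ) else 0) 1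
    (by intro j; split_ifs <;> simp) zero_le_one (by
      intro i j hi hj e
      exact hg (by by_contra h'; simp [h'] at hi) (by by_contra h'; simp [h'] at hj) e)
  have hB : (z, d) ∈ BS ℓ := by
    rw [mem_BS]
    ext x j
    simp only [mul_apply_eq_comp, hd, hz, Sop_apply]
    split_ifs
    · field_simp [wt_ne]
    · simp
  have key : v * Pr (g '' a) * d = Pr a := by
    ext x i
    simp only [mul_apply_eq_comp, hv, hd, Pr_apply]
    by_cases hi : i ∈ a
    · have : g i ∈ g '' a := ⟨i, hi, rfl⟩
      simp only [hi, this, if_true, hh i hi]; simp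
    · simp [hi]
  have hdisj : Disjoint a (g '' a) := by
    rw [Set.disjoint_left]
    rintro _ hx ⟨i, hi, rfl⟩
    exact hga i hi hx
  have := hD.mul (hD.off2 a (g '' a) hdisj (b * v)) hB
  convert this using 1
  calc Pr a * b * Pr a = Pr a * b * (v * Pr (g '' a) * d) := by rw [key]
    _ = _ := by simp only [mul_assoc]

include hD in
lemma BGood.finset (s : Finset ι) (b : E ι) : Pr (s : Set ι) * b * Pr (s : Set ι) ∈ D := by
  classical
  induction s using Finset.induction_on generalizing b with
  | empty =>
    have := hD.smul 0 (hD.off ∅ b)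
    simpa [Pr_empty] using this
  | insert a s ha ih =>
    rw [Finset.coe_insert, Set.insert_eq]
    apply hD.union
    · simpa using ha
    · intro b
      rw [Pr_single_mul]; exact hD.smul _ (hD.sing a)
    · exact ih

include hD in
lemma BGood.fixed (s : Set ι) (hs : Set.InjOn ℓ s) (b : E ι) : Pr s * b * Pr s ∈ D := by
  classical
  by_cases hfin : s.Finite
  · simpa using hD.finset hfin.toFinset b
  obtain ⟨f, hf, rfl, hmono⟩ := exists_enum ℓ s hs hfin
  have hinv : ∀ n, Function.invFun f (f n) = n := Function.leftInverse_invFun hf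
  have gen : ∀ J : Set ℕ, 0 ∉ J → (∀ k, k ∈ J → k + 1 ∉ J) → ∀ b, Pr (f '' J) * b * Pr (f '' J) ∈ D := by
    intro J h0 hJ
    apply hD.shift (f '' J) (fun i => f (Function.invFun f i - 1))
    · rintro _ ⟨i, hi, rfl⟩ _ ⟨j, hj, rfl⟩ e
      simp only [hinv] at e
      have e := hf e
      have : i ≠ 0 := by rintro rfl; exact h0 hi
      have : j ≠ 0 := by rintro rfl; exact h0 hj
      congr 1; omega
    · rintro _ ⟨i, hi, rfl⟩ ⟨j, hj, e⟩
      simp only [hinv] at e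
      have e := hf e
      have : i ≠ 0 := by rintro rfl; exact h0 hi
      apply hJ j hj
      rwa [e, Nat.sub_add_cancel (by omega)]
    · rintro _ ⟨i, hi, rfl⟩
      simp only [hinv]
      exact hmono.monotone (Nat.sub_le i 1)
  have e : Set.range f = f '' {0} ∪ (f '' {k | Odd k} ∪ f '' {k | Even k ∧ k ≠ 0}) := by
    rw [← Set.image_univ, ← Set.image_union, ← Set.image_union]
    congr 1
    ext k
    simp only [Set.mem_univ, Set.mem_union, Set.mem_singleton_iff, Set.mem_ofPred_eq, true_iff]
    rcases Nat.even_or_odd k with h | h <;> tauto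
  have hdis : ∀ s t : Set ℕ, (∀ k, k ∈ s → k ∉ t) → Disjoint (f '' s) (f '' t) := by
    intro s t h
    rw [Set.disjoint_image_iff hf]
    exact Set.disjoint_left.2 h
  rw [e]
  apply hD.union
  · rw [← Set.image_union]
    apply hdis
    intro k hk; simp at hk; subst hk; simp
  · simp only [Set.image_singleton]
    intro b
    rw [Pr_single_mul]; exact hD.smul _ (hD.sing _)
  · intro b
    apply hD.union
    · apply hdis
      intro k hk; simp only [Set.mem_ofPred_eq] at *
      rw [← Nat.not_even_iff_odd] at hk; tauto
    · apply gen
      · simp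
      · intro k hk; simp only [Set.mem_ofPred_eq] at *
        rw [Nat.odd_add_one]; tauto
    · apply gen
      · simp
      · intro k hk; simp only [Set.mem_ofPred_eq] at *
        rw [Nat.even_add_one]; tauto

include hD in
theorem BGood.all (b : E ι) : b ∈ D := by
  classical
  obtain ⟨τ, h1, h2, h3⟩ := exists_invol ℓ
  let _ : LinearOrder ι := linearOrderOfSTO WellOrderingRel
  have e : (Set.univ : Set ι) = {i | i < τ i} ∪ ({i | τ i < i} ∪ {i | τ i = i}) := by
    ext i
    simp only [Set.mem_univ, Set.mem_union, Set.mem_ofPred_eq, true_iff]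
    rcases lt_trichotomy i (τ i) with h | h | h
    · tauto
    · exact Or.inr (Or.inr h.symm)
    · tauto
  have hτ : Function.Injective τ := fun i j h => by rw [← h1 i, ← h1 j, h]
  have := hD.union {i | i < τ i} ({i | τ i < i} ∪ {i | τ i = i}) ?_ ?_ ?_ b
  · rw [← e, Pr_univ] at this; simpa using this
  · rw [Set.disjoint_left]
    intro i hi; simp only [Set.mem_ofPred_eq, Set.mem_union] at *
    rintro (h | h)
    · exact lt_asymm hi h
    · rw [h] at hi; exact lt_irrefl _ hi
  · apply hD.shift _ τ hτ.injOn
    · intro i hi; simp only [Set.mem_ofPred_eq] at *; rw [h1]; exact not_lt.2 hi.le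
    · intro i _; rw [h2]
  · apply hD.union
    · rw [Set.disjoint_left]
      intro i hi; simp only [Set.mem_ofPred_eq] at *
      exact hi.ne
    · apply hD.shift _ τ hτ.injOn
      · intro i hi; simp only [Set.mem_ofPred_eq] at *; rw [h1]; exact not_lt.2 hi.le
      · intro i _; rw [h2]
    · apply hD.fixed
      intro i hi j hj hij
      exact h3 i j hi hj hij

end ZPD

end

section
open scoped Topology

namespace ZPD

/-- The model of a pair of subspaces. -/
structure Mdl {H : Type*} [NormedAddCommGroup H] [InnerProductSpace ℂ H] (M N : Submodule ℂ H)
    (X Y K : Type*) (ℓ : K → ℕ) where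
  iX : L2 X →L[ℂ] H
  iY : L2 Y →L[ℂ] H
  i1 : L2 K →L[ℂ] H
  i2 : L2 K →L[ℂ] H
  pX : H →L[ℂ] L2 X
  pY : H →L[ℂ] L2 Y
  p1 : H →L[ℂ] L2 K
  p2 : H →L[ℂ] L2 K
  XX : ∀ x, pX (iX x) = x
  XY : ∀ x, pX (iY x) = 0
  X1 : ∀ x, pX (i1 x) = 0
  X2 : ∀ x, pX (i2 x) = 0
  YX : ∀ x, pY (iX x) = 0
  YY : ∀ x, pY (iY x) = x
  Y1 : ∀ x, pY (i1 x) = 0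
  Y2 : ∀ x, pY (i2 x) = 0
  aX : ∀ x, p1 (iX x) = 0
  aY : ∀ x, p1 (iY x) = 0
  a1 : ∀ x, p1 (i1 x) = x
  a2 : ∀ x, p1 (i2 x) = 0
  bX : ∀ x, p2 (iX x) = 0
  bY : ∀ x, p2 (iY x) = 0
  b1 : ∀ x, p2 (i1 x) = 0
  b2 : ∀ x, p2 (i2 x) = x
  sum : ∀ x, iX (pX x) + iY (pY x) + i1 (p1 x) + i2 (p2 x) = x
  memM : ∀ x, x ∈ M ↔ pY x = 0 ∧ p2 x = 0
  memN : ∀ x, x ∈ N ↔ pX x = 0 ∧ p2 x = Sop ℓ (p1 x)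

section
variable {H : Type*} [NormedAddCommGroup H] [InnerProductSpace ℂ H] {M N : Submodule ℂ H}
    {X Y K : Type*} {ℓ : K → ℕ} (m : Mdl M N X Y K ℓ)

/-- corner map -/
noncomputable def Mdl.fX (z : E X) : H →L[ℂ] H := m.iX ∘L z ∘L m.pX
/-- corner map -/
noncomputable def Mdl.fY (z : E Y) : H →L[ℂ] H := m.iY ∘L z ∘L m.pY
/-- corner map -/
noncomputable def Mdl.fK (p : E K × E K) : H →L[ℂ] H := m.i1 ∘L p.1 ∘L m.p1 + m.i2 ∘L p.2 ∘L m.p2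
/-- corner map -/
noncomputable def Mdl.fb (b : E K) : H →L[ℂ] H := m.i1 ∘L b ∘L (m.p2 - Sop ℓ ∘L m.p1)

lemma BS_apply {p : E K × E K} (hp : p ∈ BS ℓ) (x) : p.2 (Sop ℓ x) = Sop ℓ (p.1 x) := by
  have := congrArg (fun T : E K => T x) (mem_BS.1 hp)
  simpa using this

variable {S : Subalgebra ℂ (H →L[ℂ] H)}
    (hS : ∀ T : H →L[ℂ] H, T ∈ S ↔ (∀ x ∈ M, T x ∈ M) ∧ (∀ x ∈ N, T x ∈ N))

include hS in
lemma Mdl.fX_mem (z) : m.fX z ∈ S := by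
  rw [hS]
  constructor <;> intro x hx
  · rw [m.memM]; simp [fX, m.YX, m.bX]
  · rw [m.memN] at *; simp [fX, hx.1]

include hS in
lemma Mdl.fY_mem (z) : m.fY z ∈ S := by
  rw [hS]
  constructor <;> intro x hx
  · rw [m.memM] at *; simp [fY, hx.1]
  · rw [m.memN]; simp [fY, m.XY, m.bY, m.aY]

include hS in
lemma Mdl.fK_mem (p) (hp : p ∈ BS ℓ) : m.fK p ∈ S := by
  rw [hS]
  constructor <;> intro x hx
  · rw [m.memM] at *; simp [fK, m.Y1, m.b1, hx.2]
  · rw [m.memN] at *; simp [fK, m.X1, m.X2, m.b1, m.b2, m.a1, m.a2, hx.2, BS_apply hp]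

include hS in
lemma Mdl.fb_mem (b) : m.fb b ∈ S := by
  rw [hS]
  constructor <;> intro x hx
  · rw [m.memM]; simp [fb, m.Y1, m.b1]
  · rw [m.memN] at *; simp [fb, hx.2]

lemma Mdl.fK_mul (p q) : m.fK (p * q) = m.fK p * m.fK q := by
  ext x; simp [fK, m.a1, m.a2, m.b1, m.b2]

lemma Mdl.fb_fK (b p) (hp : p ∈ BS ℓ) : m.fb b * m.fK p = m.fb (b * p.2) := by
  ext x; simp [fK, fb, m.a1, m.a2, m.b1, m.b2, BS_apply hp]

lemma Mdl.fK_fb (b p) : m.fK p * m.fb b = m.fb (p.1 * b) := by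
  ext x; simp [fK, fb, m.a1, m.b1]

lemma Mdl.fb_fb (b b') : m.fb b * m.fb b' = - m.fb (b * Sop ℓ * b') := by
  ext x; simp [fb, m.a1, m.b1]

lemma Mdl.fb_smul (c : ℂ) (b) : m.fb (c • b) = c • m.fb b := by
  ext x; simp [fb, smul_sub]
lemma Mdl.fb_add (b b') : m.fb (b + b') = m.fb b + m.fb b' := by
  ext x; simp [fb]; abel

variable {C : Set (H →L[ℂ] H)} (hC : Good S C)

include hC hS in
lemma Mdl.fX_C (z) : m.fX z ∈ C := by
  have := Good.pull (IG_BS (fun _ : X => 0)) hC (fun p => m.fX p.1)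
    (by intro x y; ext; simp [fX]) (by intro x y; ext; simp [fX])
    (by intro x y; ext; simp [fX, m.XX]) (by unfold fX; fun_prop) (fun x _ => m.fX_mem hS _) (z, z)
    (by rw [mem_BS_iff]; intro i j; simp [wt])
  exact this

include hC hS in
lemma Mdl.fY_C (z) : m.fY z ∈ C := by
  have := Good.pull (IG_BS (fun _ : Y => 0)) hC (fun p => m.fY p.1)
    (by intro x y; ext; simp [fY]) (by intro x y; ext; simp [fY])
    (by intro x y; ext; simp [fY, m.YY]) (by unfold fY; fun_prop) (fun x _ => m.fY_mem hS _) (z, z)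
    (by rw [mem_BS_iff]; intro i j; simp [wt])
  exact this

include hC hS in
lemma Mdl.fK_C (p) (hp : p ∈ BS ℓ) : m.fK p ∈ C :=
  Good.pull (IG_BS ℓ) hC m.fK
    (by intro x y; ext; simp [fK]; abel) (by intro x y; ext; simp [fK])
    m.fK_mul (by unfold fK; fun_prop) (fun x hx => m.fK_mem hS _ hx) p hp

lemma Pr_single_Sop (ℓ : K → ℕ) (i : K) : Pr {i} * Sop ℓ * Pr {i} = wt ℓ i • Pr {i} := by
  rw [Pr_single_mul, Sop_apply, ev_self, mul_one]

include hC hS in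
lemma Mdl.fb_C (b) : m.fb b ∈ C := by
  have : BGood ℓ {b | m.fb b ∈ C} := by
    refine ⟨?_, ?_, ?_, ?_, ?_⟩
    · intro x y hx hy; simp only [Set.mem_ofPred_eq, m.fb_add] at *; exact hC.add hx hy
    · intro c x hx; simp only [Set.mem_ofPred_eq, m.fb_smul] at *; exact hC.smul _ hx
    · intro s b
      apply hC.off (m.fK_mem hS _ (Pr_mem ℓ s)) (by rw [← m.fK_mul, Pr_idem]) (m.fb_mem hS _)
      · rw [m.fK_fb]; simp only [← mul_assoc, Pr_mul, Set.inter_self]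
      · rw [m.fb_fK _ _ (Pr_mem ℓ s), mul_assoc, Pr_mul]
        ext x; simp [Pr_empty, fb]
    · intro i
      have h : m.fb ((-(wt ℓ i)⁻¹) • Pr {i}) ∈ C := by
        apply hC.idem (m.fb_mem hS _)
        rw [m.fb_fb, smul_mul_assoc, smul_mul_assoc, mul_smul_comm, Pr_single_Sop]
        simp only [m.fb_smul]
        rw [← smul_neg, ← smul_neg, ← smul_neg, smul_smul, smul_smul]
        field_simp [wt_ne]
        simp
      have := hC.smul (-wt ℓ i) h
      rw [← m.fb_smul, smul_smul] at this
      simpa [wt_ne] using this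
    · intro b p hb hp
      simp only [Set.mem_ofPred_eq] at *
      rw [← m.fb_fK _ _ hp]
      exact hC.mul hb (m.fK_C hS hC p hp)
  exact this.all b

include m hS in
theorem Mdl.IG : IG S := by
  intro C hC t ht
  have hKone : m.fX 1 + m.fY 1 + m.fK 1 = 1 := by
    ext x; simpa [fX, fY, fK, add_assoc] using m.sum x
  have hXt : m.fX 1 * t * m.fX 1 ∈ C := by
    have := m.fX_C hS hC (m.pX ∘L t ∘L m.iX)
    convert this using 1
    ext x; simp [fX]
  have hYt : m.fY 1 * t * m.fY 1 ∈ C := by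
    have := m.fY_C hS hC (m.pY ∘L t ∘L m.iY)
    convert this using 1
    ext x; simp [fY]
  have hKt : m.fK 1 * t * m.fK 1 ∈ C := by
    have htM := ((hS t).1 ht).1
    have htN := ((hS t).1 ht).2
    have hc : ∀ k, m.p2 (t (m.i1 k)) = 0 := by
      intro k
      exact ((m.memM _).1 (htM (m.i1 k) ((m.memM _).2 ⟨m.Y1 k, m.b1 k⟩))).2
    have hd : ∀ k, m.p2 (t (m.i2 (Sop ℓ k))) = Sop ℓ (m.p1 (t (m.i1 k)) + m.p1 (t (m.i2 (Sop ℓ k)))) := by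
      intro k
      have := ((m.memN _).1 (htN (m.i1 k + m.i2 (Sop ℓ k)) ((m.memN _).2
        ⟨by simp [m.X1, m.X2], by simp [m.b1, m.b2, m.a1, m.a2]⟩))).2
      simpa [hc] using this
    have h1 := m.fK_C hS hC (m.p1 ∘L t ∘L m.i1 + (m.p1 ∘L t ∘L m.i2) ∘L Sop ℓ, m.p2 ∘L t ∘L m.i2)
      (by rw [mem_BS]; ext1 k; simpa using hd k)
    have h2 := m.fb_C hS hC (m.p1 ∘L t ∘L m.i2)
    convert hC.add h1 h2 using 1
    ext x
    simp [fK, fb, hc]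
    abel
  have eX : m.fX 1 * m.fX 1 = m.fX 1 := by ext x; simp [fX, m.XX]
  have eY : m.fY 1 * m.fY 1 = m.fY 1 := by ext x; simp [fY, m.YY]
  have eXY : m.fX 1 * m.fY 1 = 0 := by ext x; simp [fX, fY, m.XY]
  have eYX : m.fY 1 * m.fX 1 = 0 := by ext x; simp [fX, fY, m.YX]
  have eK : m.fK 1 = 1 - m.fX 1 - m.fY 1 := by rw [← hKone]; abel
  apply hC.peirce (m.fX_mem hS 1) eX ht hXt
  have hX1 : 1 - m.fX 1 ∈ S := S.sub_mem S.one_mem (m.fX_mem hS 1)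
  apply hC.peirce (m.fY_mem hS 1) eY (S.mul_mem (S.mul_mem hX1 ht) hX1)
  · convert hYt using 1
    calc m.fY 1 * ((1 - m.fX 1) * t * (1 - m.fX 1)) * m.fY 1
        = (m.fY 1 * (1 - m.fX 1)) * t * ((1 - m.fX 1) * m.fY 1) := by simp only [mul_assoc]
      _ = _ := by rw [mul_sub (m.fY 1), sub_mul 1 _ (m.fY 1), eYX, eXY]; simp
  · convert hKt using 1
    calc (1 - m.fY 1) * ((1 - m.fX 1) * t * (1 - m.fX 1)) * (1 - m.fY 1)
        = ((1 - m.fY 1) * (1 - m.fX 1)) * t * ((1 - m.fX 1) * (1 - m.fY 1)) := by simp only [mul_assoc]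
      _ = _ := by
        have e1 : (1 - m.fY 1) * (1 - m.fX 1) = m.fK 1 := by
          rw [mul_sub, sub_mul 1 _ (m.fX 1), eYX, eK]; simp; abel
        have e2 : (1 - m.fX 1) * (1 - m.fY 1) = m.fK 1 := by
          rw [mul_sub, sub_mul 1 _ (m.fY 1), eXY, eK]; simp
        rw [e1, e2]

end
end ZPD

end

section
open scoped Topology

namespace ZPD

theorem zpd_of_IG {R : Type*} [NormedRing R] [NormedAlgebra ℂ R] (S : Subalgebra ℂ R) (h : IG S) :
    ZeroProductDetermined ↥S := by
  intro φ hφ h0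
  have key : ∀ a ∈ S, a ∈ {a : R | ∃ h : a ∈ S, ∀ x y : S, φ (x * ⟨a, h⟩) y = φ x (⟨a, h⟩ * y)} := by
    apply h
    refine ⟨?_, ?_, ?_, ?_, ?_⟩
    · rintro a b ⟨ha, ha'⟩ ⟨hb, hb'⟩
      refine ⟨S.add_mem ha hb, fun x y => ?_⟩
      have e : (⟨a + b, S.add_mem ha hb⟩ : S) = ⟨a, ha⟩ + ⟨b, hb⟩ := rfl
      rw [e, mul_add, add_mul, map_add, map_add, LinearMap.add_apply, ha', hb']
    · rintro c a ⟨ha, ha'⟩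
      refine ⟨S.smul_mem ha c, fun x y => ?_⟩
      have e : (⟨c • a, S.smul_mem ha c⟩ : S) = c • ⟨a, ha⟩ := rfl
      rw [e, mul_smul_comm, smul_mul_assoc, map_smul, map_smul, LinearMap.smul_apply, ha']
    · rintro a b ⟨ha, ha'⟩ ⟨hb, hb'⟩
      refine ⟨S.mul_mem ha hb, fun x y => ?_⟩
      have e : (⟨a * b, S.mul_mem ha hb⟩ : S) = ⟨a, ha⟩ * ⟨b, hb⟩ := rfl
      rw [e, ← mul_assoc, hb', ha', mul_assoc]
    · intro a ha haa
      refine ⟨ha, fun x y => ?_⟩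
      set e : S := ⟨a, ha⟩
      have hee : e * e = e := Subtype.ext haa
      have h1 : φ (x * e) ((1 - e) * y) = 0 := by
        apply h0
        rw [mul_assoc, ← mul_assoc e, mul_sub, hee]; simp
      have h2 : φ (x * (1 - e)) (e * y) = 0 := by
        apply h0
        rw [mul_assoc, ← mul_assoc _ e, sub_mul, hee]; simp
      rw [sub_mul, one_mul, map_sub, sub_eq_zero] at h1
      rw [mul_sub, mul_one, map_sub, LinearMap.sub_apply, sub_eq_zero] at h2
      rw [h1, h2]
    · intro a ha haS
      refine ⟨haS, fun x y => ?_⟩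
      obtain ⟨u, hu, hlim⟩ := mem_closure_iff_seq_limit.1 ha
      choose huS hu' using hu
      have hl : Filter.Tendsto (fun n => (⟨u n, huS n⟩ : S)) Filter.atTop (𝓝 ⟨a, haS⟩) :=
        tendsto_subtype_rng.2 hlim
      have c1 : Continuous (fun b : S => φ (x * b) y) :=
        hφ.comp (((continuous_const.mul continuous_id).prodMk continuous_const))
      have c2 : Continuous (fun b : S => φ x (b * y)) :=
        hφ.comp ((continuous_const.prodMk (continuous_id.mul continuous_const)))
      have t1 := (c1.tendsto _).comp hl
      have t2 := (c2.tendsto _).comp hl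
      refine tendsto_nhds_unique t1 (t2.congr fun n => ?_)
      exact (hu' n x y).symm
  have cτ : Continuous (fun b : S => φ b 1) :=
    hφ.comp (continuous_id.prodMk continuous_const)
  refine ⟨⟨φ.flip 1, cτ⟩, fun x y => ?_⟩
  obtain ⟨hy, hy'⟩ := key y y.2
  have := hy' x 1
  rw [mul_one] at this
  exact this.symm

end ZPD

end

section
open scoped Topology InnerProductSpace

namespace ZPD
section spectral
variable {U F : Type*} [NormedAddCommGroup U] [InnerProductSpace ℂ U] [CompleteSpace U]
  [NormedAddCommGroup F] [InnerProductSpace ℂ F] [CompleteSpace F] (Q : U →L[ℂ] F)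

/-- `Q* Q` -/
noncomputable def GG : U →L[ℂ] U := ContinuousLinearMap.adjoint Q ∘L Q

lemma GG_sa : IsSelfAdjoint (GG Q) := (ContinuousLinearMap.isPositive_adjoint_comp_self Q).isSelfAdjoint

lemma GG_inner (x y : U) : ⟪GG Q x, y⟫_ℂ = ⟪Q x, Q y⟫_ℂ := by
  simp [GG, ContinuousLinearMap.adjoint_inner_left]

lemma GG_re (x : U) : (⟪GG Q x, x⟫_ℂ).re = ‖Q x‖ ^ 2 := by
  rw [GG_inner]; exact (norm_sq_eq_re_inner (𝕜 := ℂ) (Q x)).symm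

lemma re_mono {A B : U →L[ℂ] U} (h : A ≤ B) (x : U) : (⟪A x, x⟫_ℂ).re ≤ (⟪B x, x⟫_ℂ).re := by
  have := ((ContinuousLinearMap.le_def A B).1 h).re_inner_nonneg_left x
  simp only [sub_apply, inner_sub_left] at this
  simpa using this

/-- cut-off -/
noncomputable def FF (l : ℝ) : U →L[ℂ] U := cfc (fun t : ℝ => max (t - l) 0) (GG Q)

lemma FF_sa (l : ℝ) : IsSelfAdjoint (FF Q l) := cfc_predicate _ _

lemma FF_inner (l : ℝ) (x y : U) : ⟪FF Q l x, y⟫_ℂ = ⟪x, FF Q l y⟫_ℂ := by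
  have h := (FF_sa Q l).adjoint_eq
  conv_lhs => rw [← h]
  exact ContinuousLinearMap.adjoint_inner_left _ _ _

lemma FF_comm (l : ℝ) (x : U) : FF Q l (GG Q x) = GG Q (FF Q l x) := by
  have h : Commute (FF Q l) (GG Q) := by
    have := cfc_commute_cfc (fun t : ℝ => max (t - l) 0) (fun t : ℝ => t) (GG Q)
    rwa [cfc_id' ℝ (GG Q) (GG_sa Q)] at this
  exact congrArg (fun T : U →L[ℂ] U => T x) h.eq

lemma FF_sq (l : ℝ) : FF Q l * FF Q l = cfc (fun t : ℝ => max (t - l) 0 * max (t - l) 0) (GG Q) := by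
  rw [FF, ← cfc_mul ..]

lemma FF_norm (l : ℝ) (x : U) : ‖FF Q l x‖ ^ 2 = (⟪(FF Q l * FF Q l) x, x⟫_ℂ).re := by
  rw [mul_apply_eq_comp, FF_inner]
  exact norm_sq_eq_re_inner (𝕜 := ℂ) _

lemma FF_mono {l l' : ℝ} (h : l ≤ l') (x : U) (hx : FF Q l x = 0) : FF Q l' x = 0 := by
  have h1 : FF Q l' * FF Q l' ≤ FF Q l * FF Q l := by
    rw [FF_sq, FF_sq]
    refine cfc_mono (hf := by fun_prop) (hg := by fun_prop) ?_
    intro t _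
    have : max (t - l') 0 ≤ max (t - l) 0 := max_le_max (by linarith) le_rfl
    have h0 : 0 ≤ max (t - l') 0 := le_max_right _ _
    exact mul_self_le_mul_self h0 this
  have := re_mono h1 x
  rw [← FF_norm, ← FF_norm, hx] at this
  simpa using this

lemma FF_upper {l : ℝ} (x : U) (hx : FF Q l x = 0) : ‖Q x‖ ^ 2 ≤ l * ‖x‖ ^ 2 := by
  have h1 : GG Q ≤ l • (1 : U →L[ℂ] U) + FF Q l := by
    have e : l • (1 : U →L[ℂ] U) + FF Q l = cfc (fun t : ℝ => l + max (t - l) 0) (GG Q) := by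
      rw [cfc_const_add l _ (GG Q) (ha := GG_sa Q), FF, Algebra.algebraMap_eq_smul_one]
    rw [e]
    conv_lhs => rw [← cfc_id' ℝ (GG Q) (GG_sa Q)]
    refine cfc_mono (hf := by fun_prop) (hg := by fun_prop) ?_
    intro t _
    have := le_max_left (t - l) 0
    linarith
  have := re_mono h1 x
  rw [GG_re] at this
  simp only [add_apply, hx, add_zero] at this
  refine this.trans_eq ?_
  have e : (l • (1 : U →L[ℂ] U)) x = (l : ℂ) • x := by simp
  rw [e, inner_smul_left]
  have : ⟪x, x⟫_ℂ = ((‖x‖ ^ 2 : ℝ) : ℂ) := by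
    rw [inner_self_eq_norm_sq_to_K]; simp
  rw [this, Complex.conj_ofReal, ← Complex.ofReal_mul, Complex.ofReal_re]

lemma FF_lower_range {l : ℝ} (y : U) : l * ‖FF Q l y‖ ^ 2 ≤ ‖Q (FF Q l y)‖ ^ 2 := by
  have h1 : l • (FF Q l * FF Q l) ≤ FF Q l * GG Q * FF Q l := by
    have e : FF Q l * GG Q * FF Q l = cfc (fun t : ℝ => max (t - l) 0 * t * max (t - l) 0) (GG Q) := by
      conv_lhs => enter [1, 2]; rw [← cfc_id' ℝ (GG Q) (GG_sa Q)]
      rw [FF, ← cfc_mul .., ← cfc_mul ..]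
    rw [e, FF_sq, ← cfc_const_mul ..]
    refine cfc_mono (hf := by fun_prop) (hg := by fun_prop) ?_
    intro t _
    rcases le_total (t - l) 0 with h | h
    · simp [max_eq_right h]
    · rw [max_eq_left h]
      nlinarith [mul_nonneg h h, mul_nonneg (mul_nonneg h h) h]
  have := re_mono h1 y
  have e1 : ((FF Q l * GG Q * FF Q l) y) = FF Q l (GG Q (FF Q l y)) := rfl
  rw [e1, FF_inner, GG_re] at this
  refine le_trans (le_of_eq ?_) this
  have e : (l • (FF Q l * FF Q l)) y = (l : ℂ) • (FF Q l * FF Q l) y := by simp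
  rw [e, inner_smul_left, Complex.conj_ofReal, Complex.re_ofReal_mul, ← FF_norm]

lemma FF_lower {l : ℝ} (x : U) (hx : x ∈ (LinearMap.ker (FF Q l).toLinearMap)ᗮ) :
    l * ‖x‖ ^ 2 ≤ ‖Q x‖ ^ 2 := by
  have h : x ∈ closure (Set.range (FF Q l)) := by
    have h1 := ContinuousLinearMap.orthogonal_ker (FF Q l)
    rw [(FF_sa Q l).adjoint_eq] at h1
    have h2 : x ∈ ((LinearMap.range (FF Q l).toLinearMap).topologicalClosure : Set U) := by
      rw [← h1]; exact hx
    rw [Submodule.topologicalClosure_coe] at h2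
    exact h2
  have hc : IsClosed {x : U | l * ‖x‖ ^ 2 ≤ ‖Q x‖ ^ 2} :=
    isClosed_le (by fun_prop) (by fun_prop)
  refine closure_minimal ?_ hc h
  rintro _ ⟨y, rfl⟩
  exact FF_lower_range Q y

end spectral
end ZPD

end

section
open scoped Topology InnerProductSpace

namespace ZPD

lemma pyth {ι E : Type*} [NormedAddCommGroup E] [InnerProductSpace ℂ E] (s : Finset ι) (f : ι → E)
    (h : ∀ i j, i ≠ j → ⟪f i, f j⟫_ℂ = 0) : ‖∑ i ∈ s, f i‖ ^ 2 = ∑ i ∈ s, ‖f i‖ ^ 2 := by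
  classical
  induction s using Finset.induction_on with
  | empty => simp
  | insert a s ha ih =>
    rw [Finset.sum_insert ha, Finset.sum_insert ha, ← ih]
    have : ⟪f a, ∑ i ∈ s, f i⟫_ℂ = 0 := by
      rw [inner_sum]; apply Finset.sum_eq_zero
      intro i hi; apply h; rintro rfl; exact ha hi
    have := norm_add_sq_eq_norm_sq_add_norm_sq_of_inner_eq_zero _ _ this
    simpa [sq] using this

section spectral
universe v
variable {U : Type v} {F : Type*} [NormedAddCommGroup U] [InnerProductSpace ℂ U] [CompleteSpace U]
  [NormedAddCommGroup F] [InnerProductSpace ℂ F] [CompleteSpace F] (Q : U →L[ℂ] F)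

/-- spectral subspaces -/
noncomputable def VV : ℕ → Submodule ℂ U
  | 0 => ⊤
  | n+1 => LinearMap.ker (FF Q ((1/16)^(n+1))).toLinearMap

lemma mem_VV_succ (n : ℕ) (x : U) : x ∈ VV Q (n+1) ↔ FF Q ((1/16)^(n+1)) x = 0 := by
  simp only [VV, LinearMap.mem_ker]; rfl

lemma VV_complete (n : ℕ) : CompleteSpace (VV Q n) := by
  have : IsClosed (VV Q n : Set U) := by
    cases n with
    | zero => simp [VV]
    | succ n =>
      have : (VV Q (n+1) : Set U) = FF Q ((1/16)^(n+1)) ⁻¹' {0} := by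
        ext x; exact mem_VV_succ Q n x
      rw [this]
      exact isClosed_singleton.preimage (FF Q _).continuous
  exact this.completeSpace_coe

lemma VV_upper (h1 : ∀ x, ‖Q x‖ ≤ ‖x‖) (n : ℕ) (x : U) (hx : x ∈ VV Q n) :
    ‖Q x‖ ^ 2 ≤ (1/16)^n * ‖x‖ ^ 2 := by
  cases n with
  | zero => simpa using pow_le_pow_left₀ (norm_nonneg _) (h1 x) 2
  | succ n => exact FF_upper Q x ((mem_VV_succ Q n x).1 hx)

lemma VV_anti : Antitone (VV Q) := by
  apply antitone_nat_of_succ_le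
  intro n x hx
  cases n with
  | zero => simp [VV]
  | succ n =>
    rw [mem_VV_succ] at *
    refine FF_mono Q ?_ x hx
    exact pow_le_pow_of_le_one (by norm_num) (by norm_num) (by omega)

lemma VV_inv (n : ℕ) (x : U) (hx : x ∈ VV Q n) : GG Q x ∈ VV Q n := by
  cases n with
  | zero => simp [VV]
  | succ n =>
    rw [mem_VV_succ] at *
    rw [FF_comm, hx, map_zero]

/-- level subspaces -/
noncomputable def LL (n : ℕ) : Submodule ℂ U := VV Q n ⊓ (VV Q (n+1))ᗮ

lemma LL_lower (n : ℕ) (x : U) (hx : x ∈ LL Q n) : (1/16)^(n+1) * ‖x‖^2 ≤ ‖Q x‖^2 :=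
  FF_lower Q x hx.2

lemma LL_orth {m n : ℕ} (h : m ≠ n) {x y : U} (hx : x ∈ LL Q m) (hy : y ∈ LL Q n) :
    ⟪x, y⟫_ℂ = 0 := by
  rcases lt_or_gt_of_ne h with h | h
  · exact Submodule.inner_left_of_mem_orthogonal (VV_anti Q h hy.1) hx.2
  · exact Submodule.inner_right_of_mem_orthogonal (VV_anti Q h hx.1) hy.2

lemma LL_Qorth {m n : ℕ} (h : m ≠ n) {x y : U} (hx : x ∈ LL Q m) (hy : y ∈ LL Q n) :
    ⟪Q x, Q y⟫_ℂ = 0 := by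
  rcases lt_or_gt_of_ne h with h | h
  · rw [← inner_conj_symm, ← GG_inner, inner_conj_symm]
    exact Submodule.inner_left_of_mem_orthogonal (VV_inv Q _ _ (VV_anti Q h hy.1)) hx.2
  · rw [← GG_inner]
    exact Submodule.inner_right_of_mem_orthogonal (VV_inv Q _ _ (VV_anti Q h hx.1)) hy.2

lemma LL_dense (h1 : ∀ x, ‖Q x‖ ≤ ‖x‖) (hinj : ∀ x, Q x = 0 → x = 0) (x : U)
    (hx : ∀ n, ∀ y ∈ LL Q n, ⟪y, x⟫_ℂ = 0) : x = 0 := by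
  have hV : ∀ n, x ∈ VV Q n := by
    intro n
    induction n with
    | zero => simp [VV]
    | succ n ih =>
      have := VV_complete Q (n+1)
      obtain ⟨v, hv, w, hw, e⟩ := (VV Q (n+1)).exists_add_mem_mem_orthogonal x
      have hwn : w ∈ VV Q n := by
        have : w = x - v := by rw [e]; abel
        rw [this]; exact sub_mem ih (VV_anti Q (Nat.le_succ n) hv)
      have h0 := hx n w ⟨hwn, hw⟩
      rw [e, inner_add_right, Submodule.inner_left_of_mem_orthogonal hv hw, zero_add,
        inner_self_eq_zero] at h0
      rw [e, h0, add_zero]; exact hv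
  apply hinj
  have h2 : ∀ n : ℕ, ‖Q x‖ ^ 2 ≤ (1/16)^n * ‖x‖ ^ 2 := fun n => VV_upper Q h1 n x (hV n)
  have ht : Filter.Tendsto (fun n : ℕ => (1/16 : ℝ)^n * ‖x‖ ^ 2) Filter.atTop (𝓝 (0 * ‖x‖^2)) :=
    (tendsto_pow_atTop_nhds_zero_of_lt_one (by norm_num) (by norm_num)).mul_const _
  have := ge_of_tendsto' ht h2
  rw [zero_mul] at this
  have : ‖Q x‖ ^ 2 = 0 := le_antisymm this (sq_nonneg _)
  simpa using this

lemma exists_basis (h1 : ∀ x, ‖Q x‖ ≤ ‖x‖) (hinj : ∀ x, Q x = 0 → x = 0) :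
    ∃ (κ : Type v) (ℓ : κ → ℕ) (b : HilbertBasis κ ℂ U), ∀ i, b i ∈ LL Q (ℓ i) := by
  have hc : ∀ n, CompleteSpace (LL Q n) := by
    intro n
    have := VV_complete Q n
    have : IsClosed (LL Q n : Set U) := by
      rw [LL, Submodule.coe_inf]
      exact (completeSpace_coe_iff_isComplete.1 this).isClosed.inter (Submodule.isClosed_orthogonal _)
    exact this.completeSpace_coe
  have hb : ∀ n, ∃ (w : Set (LL Q n)) (b : HilbertBasis w ℂ (LL Q n)), True := fun n => by
    obtain ⟨w, b, -⟩ := exists_hilbertBasis ℂ (LL Q n)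
    exact ⟨w, b, trivial⟩
  choose w b _ using hb
  have hof : OrthogonalFamily ℂ (fun n => LL Q n) (fun n => (LL Q n).subtypeₗᵢ) := by
    intro m n hmn x y
    exact LL_orth Q hmn x.2 y.2
  have hon := hof.orthonormal_sigma_orthonormal (fun n => (b n).orthonormal)
  refine ⟨Σ n, w n, Sigma.fst, HilbertBasis.mkOfOrthogonalEqBot hon ?_, ?_⟩
  · rw [Submodule.eq_bot_iff]
    intro x hx
    apply LL_dense Q h1 hinj
    intro n y hy
    have h3 : (LL Q n).orthogonalProjectionOnto x = 0 := by
      apply (b n).repr.injective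
      ext i
      rw [map_zero, HilbertBasis.repr_apply_apply]
      have := Submodule.inner_right_of_mem_orthogonal
        (Submodule.subset_span (Set.mem_range_self (⟨n, i⟩ : Σ n, w n))) hx
      rw [Submodule.inner_orthogonalProjectionOnto_eq_of_mem_left]
      exact this
    have := Submodule.inner_orthogonalProjectionOnto_eq_of_mem_left (K := LL Q n) ⟨y, hy⟩ x
    rw [h3, inner_zero_right] at this
    exact this.symm
  · intro i
    rw [HilbertBasis.coe_mkOfOrthogonalEqBot]
    exact ((b i.1) i.2).2

theorem spectral (h1 : ∀ x, ‖Q x‖ ≤ ‖x‖) (hinj : ∀ x, Q x = 0 → x = 0) :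
    ∃ (κ : Type v) (ℓ : κ → ℕ) (u : L2 κ ≃ₗᵢ[ℂ] U), ∀ y,
      (1/16) * ‖Sop ℓ y‖ ^ 2 ≤ ‖Q (u y)‖ ^ 2 ∧ ‖Q (u y)‖ ^ 2 ≤ ‖Sop ℓ y‖ ^ 2 := by
  classical
  obtain ⟨κ, ℓ, b, hb⟩ := exists_basis Q h1 hinj
  refine ⟨κ, ℓ, b.repr.symm, ?_⟩
  have hbe : ∀ i, b.repr.symm (ev i) = b i := fun i => by
    simp [ev]
  have hcl : IsClosed {y : L2 κ | (1/16) * ‖Sop ℓ y‖ ^ 2 ≤ ‖Q (b.repr.symm y)‖ ^ 2 ∧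
      ‖Q (b.repr.symm y)‖ ^ 2 ≤ ‖Sop ℓ y‖ ^ 2} := by
    have hc : Continuous fun y => Q (b.repr.symm y) := Q.continuous.comp b.repr.symm.continuous
    have hd : Continuous fun y => ‖Sop ℓ y‖ ^ 2 := ((Sop ℓ).continuous.norm.pow 2)
    exact (isClosed_le (continuous_const.mul hd) (hc.norm.pow 2)).inter
      (isClosed_le (hc.norm.pow 2) hd)
  intro y
  have hs := lp.hasSum_single (p := 2) (by norm_num) y
  refine hcl.mem_of_tendsto hs (Filter.Eventually.of_forall fun s => ?_)
  have e0 : ∀ i, lp.single 2 i (y i) = y i • ev i := by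
    intro i; rw [ev, ← lp.single_smul]; simp
  simp only [e0, Set.mem_ofPred_eq, map_sum, map_smul, Sop_ev, hbe]
  have hS : ‖∑ i ∈ s, y i • wt ℓ i • ev i‖ ^ 2 = ∑ i ∈ s, (1/16)^(ℓ i) * ‖y i‖^2 := by
    rw [pyth]
    · apply Finset.sum_congr rfl
      intro i _
      rw [norm_smul, norm_smul, norm_wt, norm_ev, mul_one, mul_pow, ← pow_mul, mul_comm (ℓ i),
        pow_mul, mul_comm]
      norm_num
    · intro i j hij
      rw [inner_smul_left, inner_smul_right, inner_smul_left, inner_smul_right, ev,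
        lp.inner_single_left]
      simp [ev_ne hij]
  let X : ℕ → U := fun n => ∑ i ∈ s with ℓ i = n, y i • b i
  have hX : ∀ n, X n ∈ LL Q n := fun n => Submodule.sum_mem _ fun i hi => by
    rw [Finset.mem_filter] at hi
    exact Submodule.smul_mem _ _ (hi.2 ▸ hb i)
  have hXn : ∀ n, ‖X n‖^2 = ∑ i ∈ s with ℓ i = n, ‖y i‖^2 := fun n => by
    rw [pyth]
    · apply Finset.sum_congr rfl
      intro i _
      rw [norm_smul, b.orthonormal.1 i, mul_one]
    · intro i j hij
      rw [inner_smul_left, inner_smul_right, b.orthonormal.2 hij]; simp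
  have hQ : ∑ i ∈ s, y i • Q (b i) = ∑ n ∈ s.image ℓ, Q (X n) := by
    rw [← Finset.sum_fiberwise_of_maps_to (g := ℓ) (t := s.image ℓ)
      (fun i hi => Finset.mem_image_of_mem _ hi)]
    apply Finset.sum_congr rfl
    intro n _
    simp [X]
  have hS2 : ∑ i ∈ s, (1/16 : ℝ)^(ℓ i) * ‖y i‖^2 = ∑ n ∈ s.image ℓ, (1/16)^n * ‖X n‖^2 := by
    rw [← Finset.sum_fiberwise_of_maps_to (g := ℓ) (t := s.image ℓ)
      (fun i hi => Finset.mem_image_of_mem _ hi)]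
    apply Finset.sum_congr rfl
    intro n _
    rw [hXn, Finset.mul_sum]
    apply Finset.sum_congr rfl
    intro i hi
    rw [(Finset.mem_filter.1 hi).2]
  rw [hS, hQ, hS2, pyth _ _ (fun m n h => LL_Qorth Q h (hX m) (hX n)), Finset.mul_sum]
  constructor
  · apply Finset.sum_le_sum
    intro n _
    have := LL_lower Q n _ (hX n)
    rw [pow_succ] at this
    linarith
  · apply Finset.sum_le_sum
    intro n _
    exact VV_upper Q h1 n _ (hX n).1

end spectral
end ZPD

end

section
open scoped Topology InnerProductSpace

namespace ZPD

lemma le_sq_aux {a b : ℝ} (hb : 0 ≤ b) (h : a ^ 2 ≤ b ^ 2) : a ≤ b := by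
  nlinarith

lemma exists_leftinv {F H : Type*} [NormedAddCommGroup F] [NormedSpace ℂ F] [CompleteSpace F]
    [NormedAddCommGroup H] [InnerProductSpace ℂ H] [CompleteSpace H] (A : F →L[ℂ] H) (c : ℝ)
    (hc : 0 < c) (hA : ∀ x, c * ‖x‖ ≤ ‖A x‖) :
    ∃ B : H →L[ℂ] F, (∀ x, B (A x) = x) ∧ (∀ h, (∀ x, ⟪A x, h⟫_ℂ = 0) → B h = 0) ∧
      (∀ h x, ⟪A x, h - A (B h)⟫_ℂ = 0) := by
  have hal : AntilipschitzWith (Real.toNNReal c⁻¹) A := by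
    apply AddMonoidHomClass.antilipschitz_of_bound
    intro x
    rw [Real.coe_toNNReal _ (inv_nonneg.2 hc.le), inv_mul_eq_div, le_div_iff₀ hc, mul_comm]
    exact hA x
  have hcl : IsClosed (Set.range A) := hal.isClosed_range A.uniformContinuous
  let K : Submodule ℂ H := LinearMap.range A.toLinearMap
  have hK : IsClosed (K : Set H) := hcl
  have := hK.completeSpace_coe
  let e : F ≃L[ℂ] K := A.equivRange hal.injective hcl
  have he : ∀ x, (e x : H) = A x := fun x => rfl
  let B : H →L[ℂ] F := (e.symm : K →L[ℂ] F) ∘L K.orthogonalProjectionOnto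
  have hAB : ∀ h, A (B h) = K.orthogonalProjectionOnto h := by
    intro h
    rw [← he]; simp [B]
  have hmem : ∀ x, A x ∈ K := fun x => ⟨x, rfl⟩
  refine ⟨B, ?_, ?_, ?_⟩
  · intro x
    apply hal.injective
    rw [hAB]
    exact congrArg Subtype.val (Submodule.orthogonalProjectionOnto_mem_subspace_eq_self (⟨A x, hmem x⟩ : K))
  · intro h hh
    have : K.orthogonalProjectionOnto h = 0 := by
      rw [Submodule.orthogonalProjectionOnto_eq_zero_iff, Submodule.mem_orthogonal]
      rintro _ ⟨x, rfl⟩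
      exact hh x
    simp [B, this]
  · intro h x
    rw [hAB]
    exact Submodule.inner_right_of_mem_orthogonal (hmem x) (Submodule.sub_starProjection_mem_orthogonal h)

lemma Sop_dense {κ : Type*} (ℓ : κ → ℕ) : DenseRange (Sop ℓ) := by
  classical
  intro y
  have hs := lp.hasSum_single (p := 2) (by norm_num) y
  refine mem_closure_of_tendsto hs (Filter.Eventually.of_forall fun s => ?_)
  refine ⟨∑ i ∈ s, ((wt ℓ i)⁻¹ * y i) • ev i, ?_⟩
  rw [map_sum]
  apply Finset.sum_congr rfl
  intro i _
  rw [map_smul, Sop_ev, smul_smul, mul_right_comm, inv_mul_cancel₀ (wt_ne ℓ i), one_mul,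
    ev, ← lp.single_smul]
  simp

lemma exists_R {κ H : Type*} [NormedAddCommGroup H] [InnerProductSpace ℂ H] [CompleteSpace H]
    (ℓ : κ → ℕ) (D : L2 κ →L[ℂ] H) (hD : ∀ y, (1/16) * ‖Sop ℓ y‖ ^ 2 ≤ ‖D y‖ ^ 2 ∧
      ‖D y‖ ^ 2 ≤ ‖Sop ℓ y‖ ^ 2) :
    ∃ R : L2 κ →L[ℂ] H, (∀ y, R (Sop ℓ y) = D y) ∧ ∀ y, (1/4) * ‖y‖ ≤ ‖R y‖ := by
  have hn : ∀ x, ‖D.toLinearMap x‖ ≤ 1 * ‖(Sop ℓ).toLinearMap x‖ := by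
    intro x
    rw [one_mul]
    exact le_sq_aux (norm_nonneg _) (hD x).2
  have hR := LinearMap.extendOfNorm_eq (f := D.toLinearMap) (e := (Sop ℓ).toLinearMap)
    (Sop_dense ℓ) ⟨1, hn⟩
  refine ⟨_, hR, ?_⟩
  intro y
  set R := LinearMap.extendOfNorm D.toLinearMap (Sop ℓ).toLinearMap
  refine (Sop_dense ℓ).induction_on (p := fun y => (1/4) * ‖y‖ ≤ ‖R y‖) y
    (isClosed_le (continuous_const.mul continuous_norm) R.continuous.norm) ?_
  intro x
  have := hR x
  have e : R (Sop ℓ x) = D x := this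
  rw [e]
  refine le_sq_aux (norm_nonneg _) ?_
  rw [mul_pow]
  have := (hD x).1
  norm_num at *
  exact this

lemma exists_corner' {κ : Type*} (s : Set κ) :
    ∃ (J : L2 s →L[ℂ] L2 κ) (C : L2 κ →L[ℂ] L2 s), (∀ x (k : s), (C x) k = x k) ∧
      (∀ x (k : s), (J x) k = x k) ∧ (∀ x j, j ∉ s → (J x) j = 0) := by
  rcases isEmpty_or_nonempty s with h | h
  · refine ⟨0, 0, fun x k => (h.false k).elim, fun x k => (h.false k).elim, fun x j _ => rfl⟩
  · obtain ⟨I, P, h1, h2, h3⟩ := exists_corner (Subtype.val : s → κ) Subtype.val_injective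
    exact ⟨I, P, h1, h2, fun x j hj => h3 x j (by simpa using hj)⟩

universe v
variable {H : Type v} [NormedAddCommGroup H] [InnerProductSpace ℂ H] [CompleteSpace H]

lemma structure_aux (M N : Submodule ℂ H) [CompleteSpace M]
    (hspan : (M ⊔ N).topologicalClosure = ⊤) {κ : Type v} (ℓ : κ → ℕ)
    (T R : L2 κ →L[ℂ] H) (hT : ∀ y, T y ∈ M)
    (hRM : ∀ y, M.starProjection (R y) = 0)
    (hN : ∀ h, h ∈ N ↔ ∃ v, h = T v + R (Sop ℓ v))
    (hnorm : ∀ v, ‖v‖ ^ 2 ≤ ‖T v‖ ^ 2 + ‖Sop ℓ v‖ ^ 2)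
    (hR : ∀ y, (1/4) * ‖y‖ ≤ ‖R y‖) :
    ∃ (X Y K : Type v) (l : K → ℕ), Nonempty (Mdl M N X Y K l) := by
  obtain ⟨V, hV1, hV2, hV3⟩ := exists_leftinv R (1/4) (by norm_num) hR
  set P := M.starProjection with hP
  have hPm : ∀ m ∈ M, P m = m := fun m hm => Submodule.starProjection_eq_self_iff.2 hm
  have hPmem : ∀ h, P h ∈ M := fun h => Submodule.starProjection_apply_mem _ _
  have hRperp : ∀ y, R y ∈ Mᗮ := fun y => (Submodule.starProjection_apply_eq_zero_iff M).1 (hRM y)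
  have hVm : ∀ m ∈ M, V m = 0 := fun m hm => hV2 m fun x =>
    Submodule.inner_left_of_mem_orthogonal hm (hRperp x)
  have hRV : ∀ h, R (V h) = h - P h := by
    intro h
    have hz : (h - P h) - R (V h) ∈ (M ⊔ N)ᗮ := by
      have hzM : (h - P h) - R (V h) ∈ Mᗮ :=
        sub_mem (Submodule.sub_starProjection_mem_orthogonal h) (hRperp _)
      have hzR : ∀ x, ⟪R x, (h - P h) - R (V h)⟫_ℂ = 0 := by
        intro x
        have e : (h - P h) - R (V h) = (h - R (V h)) - P h := by abel
        rw [e, inner_sub_right, hV3, Submodule.inner_left_of_mem_orthogonal (hPmem h) (hRperp x),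
          sub_zero]
      rw [← Submodule.inf_orthogonal]
      refine ⟨hzM, ?_⟩
      intro n hn
      obtain ⟨v, rfl⟩ := (hN n).1 hn
      rw [inner_add_left, hzR, Submodule.inner_right_of_mem_orthogonal (hT v) hzM, add_zero]
    have : (M ⊔ N)ᗮ = ⊥ := by
      rw [← Submodule.orthogonal_closure, hspan, Submodule.top_orthogonal_eq_bot]
    rw [this, Submodule.mem_bot, sub_eq_zero] at hz
    exact hz.symm
  obtain ⟨J0, C0, hC0, hJ0, hJ0'⟩ := exists_corner' {i | ℓ i = 0}
  obtain ⟨J1, C1, hC1, hJ1, hJ1'⟩ := exists_corner' {i | ℓ i ≠ 0}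
  let l : {i | ℓ i ≠ 0} → ℕ := fun k => ℓ k
  have hCJ0 : ∀ y, C0 (J0 y) = y := fun y => by ext k; rw [hC0, hJ0]
  have hCJ1 : ∀ y, C1 (J1 y) = y := fun y => by ext k; rw [hC1, hJ1]
  have hC0J1 : ∀ y, C0 (J1 y) = 0 := fun y => by
    ext k; rw [hC0, hJ1' _ _ (fun h => h k.2)]; rfl
  have hC1J0 : ∀ y, C1 (J0 y) = 0 := fun y => by
    ext k; rw [hC1, hJ0' _ _ k.2]; rfl
  have hJC : ∀ y, J0 (C0 y) + J1 (C1 y) = y := fun y => by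
    ext k
    rw [lp.coeFn_add, Pi.add_apply]
    by_cases hk : ℓ k = 0
    · rw [hJ1' _ _ (by simpa using hk), hJ0 _ ⟨k, hk⟩, hC0, add_zero]
    · rw [hJ0' _ _ hk, hJ1 _ ⟨k, hk⟩, hC1, zero_add]
  have hSJ0 : ∀ y, Sop ℓ (J0 y) = J0 y := fun y => by
    ext k
    rw [Sop_apply]
    by_cases hk : ℓ k = 0
    · simp [wt, hk]
    · rw [hJ0' _ _ hk, mul_zero]
  have hSJ1 : ∀ y, Sop ℓ (J1 y) = J1 (Sop l y) := fun y => by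
    ext k
    rw [Sop_apply]
    by_cases hk : ℓ k = 0
    · rw [hJ1' _ _ (by simpa using hk), hJ1' _ _ (by simpa using hk), mul_zero]
    · rw [hJ1 _ ⟨k, hk⟩, hJ1 _ ⟨k, hk⟩, Sop_apply]; rfl
  have hC0S : ∀ y, C0 (Sop ℓ y) = C0 y := fun y => by
    conv_lhs => rw [← hJC y]
    rw [map_add, map_add, hSJ0, hSJ1, hCJ0, hC0J1, add_zero]
  have hC1S : ∀ y, C1 (Sop ℓ y) = Sop l (C1 y) := fun y => by
    conv_lhs => rw [← hJC y]
    rw [map_add, map_add, hSJ0, hSJ1, hCJ1, hC1J0, zero_add]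
  let A1 : L2 {i | ℓ i ≠ 0} →L[ℂ] H := T ∘L J1
  have hA1 : ∀ k, A1 k = T (J1 k) := fun k => rfl
  have hA1b : ∀ k, (1/2 * (‖C1‖ + 1)⁻¹) * ‖k‖ ≤ ‖A1 k‖ := by
    intro k
    classical
    obtain ⟨W, hW, hWn⟩ := exists_dg (fun i => if ℓ i = 0 then 0 else wt ℓ i) (1/4)
      (by
        intro i
        split_ifs with h
        · simp
        · rw [norm_wt]
          calc (1/4 : ℝ) ^ ℓ i ≤ (1/4) ^ 1 :=
                pow_le_pow_of_le_one (by norm_num) (by norm_num) (Nat.one_le_iff_ne_zero.2 h)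
            _ = 1/4 := pow_one _) (by norm_num)
    have hSW : Sop ℓ (J1 k) = W (J1 k) := by
      ext i
      rw [Sop_apply, hW]
      by_cases h : ℓ i = 0
      · rw [hJ1' _ _ (by simpa using h), mul_zero, mul_zero]
      · simp [h]
    have h1 : ‖Sop ℓ (J1 k)‖ ≤ 1/4 * ‖J1 k‖ := by
      rw [hSW]; exact W.le_of_opNorm_le hWn _
    have h2 := hnorm (J1 k)
    have h3 : 1/2 * ‖J1 k‖ ≤ ‖A1 k‖ := by
      refine le_sq_aux (norm_nonneg _) ?_
      rw [hA1]
      nlinarith [norm_nonneg (J1 k), norm_nonneg (Sop ℓ (J1 k))]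
    have h4 : ‖k‖ ≤ (‖C1‖ + 1) * ‖J1 k‖ := by
      conv_lhs => rw [← hCJ1 k]
      refine (C1.le_opNorm _).trans ?_
      nlinarith [norm_nonneg (J1 k)]
    refine le_trans ?_ h3
    have h5 : 0 < ‖C1‖ + 1 := by positivity
    rw [mul_assoc]
    refine mul_le_mul_of_nonneg_left ?_ (by norm_num)
    rwa [inv_mul_eq_div, div_le_iff₀ h5, mul_comm]
  obtain ⟨B1, hB1, hB2, hB3⟩ := exists_leftinv A1 _ (by positivity) hA1b
  let M3 : Submodule ℂ H := M ⊓ (LinearMap.range A1.toLinearMap)ᗮ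
  have hM3c : IsClosed (M3 : Set H) := by
    rw [Submodule.coe_inf]
    exact (completeSpace_coe_iff_isComplete.1 ‹CompleteSpace M›).isClosed.inter
      (Submodule.isClosed_orthogonal _)
  have := hM3c.completeSpace_coe
  obtain ⟨w, b, -⟩ := exists_hilbertBasis ℂ M3
  let iX : L2 w →L[ℂ] H := M3.subtypeL ∘L (b.repr.symm.toContinuousLinearEquiv : L2 w →L[ℂ] M3)
  let pX : H →L[ℂ] L2 w := (b.repr.toContinuousLinearEquiv : M3 →L[ℂ] L2 w) ∘L
    M3.orthogonalProjectionOnto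
  have hiX : ∀ x, iX x = (b.repr.symm x : H) := fun x => rfl
  have hpX : ∀ h, pX h = b.repr (M3.orthogonalProjectionOnto h) := fun x => rfl
  have hiXm : ∀ x, iX x ∈ M3 := fun x => (b.repr.symm x).2
  have hpi : ∀ x, pX (iX x) = x := by
    intro x
    rw [hpX, hiX, Submodule.orthogonalProjectionOnto_mem_subspace_eq_self]; simp
  have hpA : ∀ k, pX (A1 k) = 0 := by
    intro k
    have : M3.orthogonalProjectionOnto (A1 k) = 0 := by
      rw [Submodule.orthogonalProjectionOnto_eq_zero_iff, Submodule.mem_orthogonal]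
      intro x hx
      exact Submodule.inner_left_of_mem_orthogonal (LinearMap.mem_range_self A1.toLinearMap k) hx.2
    rw [hpX, this, map_zero]
  have hBX : ∀ x, B1 (iX x) = 0 := fun x => hB2 _ fun k =>
    Submodule.inner_right_of_mem_orthogonal (LinearMap.mem_range_self A1.toLinearMap k) (hiXm x).2
  have hsumM : ∀ m ∈ M, iX (pX m) + A1 (B1 m) = m := by
    intro m hm
    have h3 : m - A1 (B1 m) ∈ M3 := by
      refine ⟨sub_mem hm (hT _), ?_⟩
      rw [SetLike.mem_coe, Submodule.mem_orthogonal]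
      rintro _ ⟨k, rfl⟩
      exact hB3 m k
    have h4 : pX m = pX (m - A1 (B1 m)) := by rw [map_sub, hpA, sub_zero]
    have h5 : iX (pX (m - A1 (B1 m))) = m - A1 (B1 m) := by
      rw [hiX, hpX, LinearIsometryEquiv.symm_apply_apply]
      exact congrArg Subtype.val
        (Submodule.orthogonalProjectionOnto_mem_subspace_eq_self (⟨_, h3⟩ : M3))
    rw [h4, h5]; abel
  let mm : H →L[ℂ] H := P - T ∘L J0 ∘L C0 ∘L V
  have hmm : ∀ h, mm h = P h - T (J0 (C0 (V h))) := fun h => rfl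
  have hmM : ∀ h, mm h ∈ M := fun h => sub_mem (hPmem h) (hT _)
  have VX : ∀ x, V (iX x) = 0 := fun x => hVm _ (hiXm x).1
  have VY : ∀ y, V (T (J0 y) + R (J0 y)) = J0 y := fun y => by
    rw [map_add, hVm _ (hT _), hV1, zero_add]
  have V1 : ∀ k, V (A1 k) = 0 := fun k => hVm _ (hT _)
  have mX : ∀ x, mm (iX x) = iX x := fun x => by
    rw [hmm, VX, hPm _ (hiXm x).1]; simp
  have mY : ∀ y, mm (T (J0 y) + R (J0 y)) = 0 := fun y => by
    rw [hmm, VY, hCJ0, map_add, hRM, hPm _ (hT _)]; simp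
  have m1 : ∀ k, mm (A1 k) = A1 k := fun k => by
    rw [hmm, V1, hPm (A1 k) (hT _)]; simp
  have m2 : ∀ k, mm (R (J1 k)) = 0 := fun k => by
    rw [hmm, hV1, hC0J1, hRM]; simp
  have hsum : ∀ h, iX (pX (mm h)) + (T (J0 (C0 (V h))) + R (J0 (C0 (V h)))) + A1 (B1 (mm h)) +
      R (J1 (C1 (V h))) = h := by
    intro h
    have e1 := hsumM _ (hmM h)
    have e2 : R (J0 (C0 (V h))) + R (J1 (C1 (V h))) = h - P h := by
      rw [← map_add, hJC, hRV]
    have e3 := hmm h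
    calc _ = (iX (pX (mm h)) + A1 (B1 (mm h))) + T (J0 (C0 (V h))) +
          (R (J0 (C0 (V h))) + R (J1 (C1 (V h)))) := by abel
      _ = h := by rw [e1, e2, e3]; abel
  refine ⟨w, {i | ℓ i = 0}, {i | ℓ i ≠ 0}, l, ⟨{
    iX := iX
    iY := T ∘L J0 + R ∘L J0
    i1 := A1
    i2 := R ∘L J1
    pX := pX ∘L mm
    pY := C0 ∘L V
    p1 := B1 ∘L mm
    p2 := C1 ∘L V
    XX := fun x => by simp [mX, hpi]
    XY := fun x => by simp [-map_add, mY]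
    X1 := fun x => by simp [m1, hpA]
    X2 := fun x => by simp [m2]
    YX := fun x => by simp [VX]
    YY := fun x => by simp [-map_add, VY, hCJ0]
    Y1 := fun x => by simp [V1]
    Y2 := fun x => by simp [hV1, hC0J1]
    aX := fun x => by simp [mX, hBX]
    aY := fun x => by simp [-map_add, mY]
    a1 := fun x => by simp [m1, hB1]
    a2 := fun x => by simp [m2]
    bX := fun x => by simp [VX]
    bY := fun x => by simp [-map_add, VY, hC1J0]
    b1 := fun x => by simp [V1]
    b2 := fun x => by simp [hV1, hCJ1]
    sum := hsum
    memM := ?_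
    memN := ?_ }⟩⟩
  · intro h
    change _ ↔ C0 (V h) = 0 ∧ C1 (V h) = 0
    constructor
    · intro hh
      rw [hVm h hh, map_zero, map_zero]; exact ⟨rfl, rfl⟩
    · rintro ⟨h0, h1⟩
      have e : V h = 0 := by rw [← hJC (V h), h0, h1, map_zero, map_zero, add_zero]
      have := hRV h
      rw [e, map_zero, eq_comm, sub_eq_zero] at this
      rw [this]; exact hPmem h
  · intro h
    change _ ↔ pX (mm h) = 0 ∧ C1 (V h) = Sop l (B1 (mm h))
    constructor
    · intro hh
      obtain ⟨v, hv⟩ := (hN h).1 hh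
      have eV : V h = Sop ℓ v := by rw [hv, map_add, hVm _ (hT _), hV1, zero_add]
      have em : mm h = A1 (C1 v) := by
        rw [hmm, eV, hC0S, hv, map_add, hRM, hPm _ (hT _), add_zero, ← map_sub, hA1]
        congr 1
        conv_lhs => enter [1]; rw [← hJC v]
        abel
      rw [em, hpA, hB1, eV, hC1S]
      exact ⟨rfl, rfl⟩
    · rintro ⟨h0, h1⟩
      rw [hN]
      refine ⟨J0 (C0 (V h)) + J1 (B1 (mm h)), ?_⟩
      have := hsum h
      rw [h0, h1, map_zero, zero_add, hA1] at this
      rw [map_add T, map_add (Sop ℓ), hSJ0, hSJ1, map_add R]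
      conv_lhs => rw [← this]
      abel

theorem exists_mdl (M N : Submodule ℂ H) (hMc : IsClosed (M : Set H)) (hNc : IsClosed (N : Set H))
    (hMN : M ⊓ N = ⊥) (hspan : (M ⊔ N).topologicalClosure = ⊤) :
    ∃ (X Y K : Type v) (l : K → ℕ), Nonempty (Mdl M N X Y K l) := by
  have := hMc.completeSpace_coe
  have := hNc.completeSpace_coe
  let P := M.starProjection
  let Q : N →L[ℂ] H := (1 - P) ∘L N.subtypeL
  have hQ : ∀ x : N, Q x = x - P x := fun x => rfl
  have hpy : ∀ h : H, ‖h‖ ^ 2 = ‖P h‖ ^ 2 + ‖h - P h‖ ^ 2 := by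
    intro h
    have h0 : ⟪P h, h - P h⟫_ℂ = 0 :=
      Submodule.inner_right_of_mem_orthogonal (Submodule.starProjection_apply_mem M h)
        (Submodule.sub_starProjection_mem_orthogonal h)
    have := norm_add_sq_eq_norm_sq_add_norm_sq_of_inner_eq_zero _ _ h0
    rw [add_sub_cancel] at this
    simpa [sq] using this
  obtain ⟨κ, ℓ, u, hu⟩ := spectral Q
    (fun x => by
      refine le_sq_aux (norm_nonneg _) ?_
      have := hpy x
      rw [hQ, Submodule.coe_norm]
      nlinarith [sq_nonneg ‖P (x : H)‖])
    (fun x hx => by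
      rw [hQ, sub_eq_zero] at hx
      have h1 : (x : H) ∈ M ⊓ N := ⟨by rw [hx]; exact Submodule.starProjection_apply_mem M _, x.2⟩
      rw [hMN, Submodule.mem_bot] at h1
      exact Subtype.ext h1)
  let u' : L2 κ →L[ℂ] N := u.toContinuousLinearEquiv
  have hu' : ∀ y, u' y = u y := fun y => rfl
  obtain ⟨R, hR1, hR2⟩ := exists_R ℓ (Q ∘L u') hu
  let T : L2 κ →L[ℂ] H := P ∘L N.subtypeL ∘L u'
  have hT : ∀ y, T y = P (u y) := fun y => rfl
  have hTR : ∀ y, T y + R (Sop ℓ y) = u y := by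
    intro y
    rw [hR1]
    change P (u y) + (u y - P (u y)) = u y
    abel
  refine structure_aux M N hspan ℓ T R (fun y => Submodule.starProjection_apply_mem M _) ?_ ?_ ?_ hR2
  · intro y
    have hz : ∀ z : H, P (P z) = P z := fun z =>
      Submodule.starProjection_eq_self_iff.2 (Submodule.starProjection_apply_mem M _)
    refine (Sop_dense ℓ).induction_on (p := fun y => P (R y) = 0) y
      (isClosed_eq (P.continuous.comp R.continuous) continuous_const) ?_
    intro x
    rw [hR1]
    change P (u x - P (u x)) = 0
    rw [map_sub, hz, sub_self]
  · intro h
    constructor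
    · intro hh
      refine ⟨u.symm ⟨h, hh⟩, ?_⟩
      rw [hTR]; simp
    · rintro ⟨v, rfl⟩
      rw [hTR]; exact (u v).2
  · intro v
    have h1 := hpy (u v)
    have h2 : ‖((u v : N) : H)‖ = ‖v‖ := by rw [← Submodule.coe_norm, u.norm_map]
    rw [h2] at h1
    have h3 := (hu v).2
    rw [hQ] at h3
    rw [hT]
    linarith

end ZPD

end

set_option synthInstance.maxHeartbeats 1000000 in
/-- Let `H` be a complex separable Hilbert space and `ℒ = {0, M, N, H}` a subspace
lattice with two atoms on `H` (`M`, `N` closed subspaces with `M ∩ N = {0}` and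
closed linear span `M ∨ N = H`).  Then `Alg ℒ = {T ∈ B(H) : T(M) ⊆ M, T(N) ⊆ N}` is a
zero product determined Banach algebra. -/
theorem two_atom_lattice_algebra_zpd (H : Type*) [NormedAddCommGroup H]
    [InnerProductSpace ℂ H] [CompleteSpace H] [TopologicalSpace.SeparableSpace H]
    (M N : Submodule ℂ H) (hMc : IsClosed (M : Set H)) (hNc : IsClosed (N : Set H))
    (hMN : M ⊓ N = ⊥) (hspan : (M ⊔ N).topologicalClosure = ⊤)
    (S : Subalgebra ℂ (H →L[ℂ] H))
    (hS : ∀ T : H →L[ℂ] H, T ∈ S ↔ (∀ x ∈ M, T x ∈ M) ∧ (∀ x ∈ N, T x ∈ N)) :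
    ZeroProductDetermined ↥S := by
  obtain ⟨X, Y, K, l, ⟨m⟩⟩ := ZPD.exists_mdl M N hMc hNc hMN hspan
  exact ZPD.zpd_of_IG S (m.IG hS)
end
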